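/- arXiv:1902.02406 — 3 statements merged into one kernel-verified Lean document; each statement's English description precedes it below -/
import Mathlib

section
/- Let p > q > 1 and θ_p = 2 arcsin(2√(p−1)/p). Then for every n,d ∈ ℕ with 1 ≤ d ≤ n and every function f : {-1,1}^n → ℂ of degree at most d, ‖f‖_{L_p} ≤ (((√(p−1)+√(q−1))^{π/(2π−θ_p)} + (√(p−1)−√(q−1))^{π/(2π−θ_p)}) / ((√(p−1)+√(q−1))^{π/(2π−θ_p)} − (√(p−1)−√(q−1))^{π/(2π−θ_p)}))^d · ‖f‖_{L_q}. -/
open scoped BigOperators ENNReal NNReal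

noncomputable section

namespace HammingCube

variable {X : Type*} [NormedAddCommGroup X] [NormedSpace ℂ X]

/-- The sign ±1 associated to a boolean coordinate. -/
def sgn (b : Bool) : ℝ := if b then 1 else -1

/-- The Walsh function `w_A(ε) = ∏_{i ∈ A} ε_i`. -/
def walsh {n : ℕ} (A : Finset (Fin n)) (ε : Fin n → Bool) : ℝ := ∏ i ∈ A, sgn (ε i)

/-- The Fourier–Walsh coefficient `f̂(A) = 2⁻ⁿ ∑_δ f(δ) w_A(δ)`. -/
def coeff {n : ℕ} (f : (Fin n → Bool) → X) (A : Finset (Fin n)) : X :=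
  (2 ^ n : ℝ)⁻¹ • ∑ δ : Fin n → Bool, walsh A δ • f δ

/-- `f` has degree at most `d`: `f̂(A) = 0` whenever `|A| > d`. -/
def degLE {n : ℕ} (f : (Fin n → Bool) → X) (d : ℕ) : Prop :=
  ∀ A : Finset (Fin n), d < A.card → coeff f A = 0

/-- `f` belongs to the `d`-th tail space: `f̂(A) = 0` whenever `|A| < d`. -/
def tailSpace {n : ℕ} (f : (Fin n → Bool) → X) (d : ℕ) : Prop :=
  ∀ A : Finset (Fin n), A.card < d → coeff f A = 0

/-- The heat semigroup `e^{-tΔ} f = ∑_A e^{-t|A|} f̂(A) w_A`. -/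
def heat {n : ℕ} (t : ℝ) (f : (Fin n → Bool) → X) : (Fin n → Bool) → X :=
  fun ε => ∑ A : Finset (Fin n), Real.exp (-t * A.card) • walsh A ε • coeff f A

/-- The hypercube Laplacian `Δ f = ∑_A |A| f̂(A) w_A`. -/
def lap {n : ℕ} (f : (Fin n → Bool) → X) : (Fin n → Bool) → X :=
  fun ε => ∑ A : Finset (Fin n), (A.card : ℝ) • walsh A ε • coeff f A

/-- The fractional Laplacian `Δ^γ f = ∑_A |A|^γ f̂(A) w_A`. -/
def fracLap {n : ℕ} (γ : ℝ) (f : (Fin n → Bool) → X) : (Fin n → Bool) → X :=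
  fun ε => ∑ A : Finset (Fin n), ((A.card : ℝ) ^ γ) • walsh A ε • coeff f A

/-- The `i`-th discrete partial derivative. -/
def pderiv {n : ℕ} (i : Fin n) (f : (Fin n → Bool) → X) : (Fin n → Bool) → X :=
  fun ε => (2 : ℝ)⁻¹ • (f ε - f (Function.update ε i (!(ε i))))

/-- The vector-valued `L_p` norm `(2⁻ⁿ ∑_ε ‖f(ε)‖^p)^{1/p}` for finite `p`. -/
def lpNorm {n : ℕ} {Y : Type*} [NormedAddCommGroup Y] (p : ℝ)
    (f : (Fin n → Bool) → Y) : ℝ :=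
  ((2 ^ n : ℝ)⁻¹ * ∑ ε : Fin n → Bool, ‖f ε‖ ^ p) ^ (1 / p)

/-- The `L_∞` norm `max_ε ‖f(ε)‖`. -/
def linfNorm {n : ℕ} {Y : Type*} [NormedAddCommGroup Y]
    (f : (Fin n → Bool) → Y) : ℝ :=
  ⨆ ε : Fin n → Bool, ‖f ε‖

/-- The `L_p` norm for `p ∈ [1,∞]` encoded as `p : ℝ≥0∞`. -/
def lpNormE {n : ℕ} {Y : Type*} [NormedAddCommGroup Y] (p : ℝ≥0∞)
    (f : (Fin n → Bool) → Y) : ℝ :=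
  if p = ⊤ then linfNorm f else lpNorm p.toReal f

/-- The scalar `L_p` norm of the gradient `‖(∑_i |∂_i f|²)^{1/2}‖_{L_p}`. -/
def gradLpNorm {n : ℕ} (p : ℝ) (f : (Fin n → Bool) → ℂ) : ℝ :=
  lpNorm p (fun ε => Real.sqrt (∑ i : Fin n, ‖pderiv i f ε‖ ^ 2))

/-- The Rademacher projection `Rad f(ε) = ∑_i f̂({i}) ε_i`. -/
def Rad {n : ℕ} (f : (Fin n → Bool) → X) : (Fin n → Bool) → X :=
  fun ε => ∑ i : Fin n, sgn (ε i) • coeff f {i}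

/-- A complex Banach space is `K`-convex if the Rademacher projections are uniformly
bounded on `L_q` for some `q ∈ (1,∞)`. -/
def KConvex (X : Type*) [NormedAddCommGroup X] [NormedSpace ℂ X] : Prop :=
  ∃ q : ℝ, 1 < q ∧ ∃ M : ℝ, ∀ (n : ℕ) (f : (Fin n → Bool) → X),
    lpNorm q (Rad f) ≤ M * lpNorm q f

/-- `X` has cotype `q` with constant `C`. -/
def HasCotype (X : Type*) [NormedAddCommGroup X] [NormedSpace ℂ X] (q C : ℝ) : Prop :=
  ∀ (n : ℕ) (x : Fin n → X),
    C⁻¹ * (∑ i : Fin n, ‖x i‖ ^ q) ^ (1 / q) ≤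
      ((2 ^ n : ℝ)⁻¹ * ∑ ε : Fin n → Bool, ‖∑ i : Fin n, sgn (ε i) • x i‖ ^ q) ^ (1 / q)

/-- The entropy `Ent(h)` of a nonnegative function on the cube. -/
def entropy {n : ℕ} (h : (Fin n → Bool) → ℝ) : ℝ :=
  (2 ^ n : ℝ)⁻¹ * ∑ ε : Fin n → Bool, h ε * Real.log (h ε) -
    ((2 ^ n : ℝ)⁻¹ * ∑ ε : Fin n → Bool, h ε) *
      Real.log ((2 ^ n : ℝ)⁻¹ * ∑ ε : Fin n → Bool, h ε)

/-- The `L_∞` norm of the gradient `max_ε (∑_i |∂_i f(ε)|²)^{1/2}`. -/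
def gradLinfNorm {n : ℕ} (f : (Fin n → Bool) → ℂ) : ℝ :=
  ⨆ ε : Fin n → Bool, Real.sqrt (∑ i : Fin n, ‖pderiv i f ε‖ ^ 2)


section
lemma hasDerivAt_logcosh (y : ℝ) :
    HasDerivAt (fun y => Real.log (Real.cosh y)) (Real.sinh y / Real.cosh y) y :=
  (Real.hasDerivAt_cosh y).log (Real.cosh_pos y).ne'

lemma hasDerivAt_explc (l y : ℝ) :
    HasDerivAt (fun y => Real.exp (l * Real.log (Real.cosh y)))
      (Real.exp (l * Real.log (Real.cosh y)) * (l * (Real.sinh y / Real.cosh y))) y :=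
  ((hasDerivAt_logcosh y).const_mul l).exp

lemma hasDerivAt_cosh_mul (l y : ℝ) :
    HasDerivAt (fun y => Real.cosh (l * y)) (l * Real.sinh (l * y)) y := by
  have := (Real.hasDerivAt_cosh (l * y)).comp y ((hasDerivAt_id y).const_mul l)
  simpa [Function.comp_def, mul_comm] using this

lemma hasDerivAt_sinh_mul (l y : ℝ) :
    HasDerivAt (fun y => Real.sinh (l * y)) (l * Real.cosh (l * y)) y := by
  have := (Real.hasDerivAt_sinh (l * y)).comp y ((hasDerivAt_id y).const_mul l)
  simpa [Function.comp_def, mul_comm] using this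

/-- a function on `[0,∞)` with nonnegative derivative starting from zero is nonnegative -/
lemma nonneg_of_deriv_nonneg {F F' : ℝ → ℝ} (h0 : 0 ≤ F 0)
    (hF : ∀ y, HasDerivAt F (F' y) y) (h' : ∀ y, 0 ≤ y → 0 ≤ F' y) {y : ℝ} (hy : 0 ≤ y) :
    0 ≤ F y := by
  have hm : MonotoneOn F (Set.Ici 0) := by
    apply monotoneOn_of_deriv_nonneg (convex_Ici 0)
    · exact fun x _ => (hF x).continuousAt.continuousWithinAt
    · exact fun x _ => (hF x).differentiableAt.differentiableWithinAt
    · intro x hx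
      rw [(hF x).deriv]
      simp only [interior_Ici, Set.mem_Ioi] at hx
      exact h' x hx.le
  exact h0.trans (hm (Set.mem_Ici.2 le_rfl) hy hy)

lemma key_G {l : ℝ} (hl0 : 0 < l) (hl1 : l < 1) {y : ℝ} (hy : 0 ≤ y) :
    0 ≤ l * Real.cosh (l * y) * Real.sinh y * Real.cosh y
      - Real.sinh (l * y) * (1 + l * Real.sinh y ^ 2) := by
  refine nonneg_of_deriv_nonneg
    (F := fun y => l * Real.cosh (l * y) * Real.sinh y * Real.cosh y
      - Real.sinh (l * y) * (1 + l * Real.sinh y ^ 2))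
    (F' := fun y => l * (2 - l) * Real.sinh y * Real.sinh (y - l * y)) (by simp) ?_ ?_ hy
  · intro y
    have h1 := hasDerivAt_cosh_mul l y
    have h2 := hasDerivAt_sinh_mul l y
    have h3 := Real.hasDerivAt_cosh y
    have h4 := Real.hasDerivAt_sinh y
    have := ((((h1.const_mul l).mul h4).mul h3)).sub
      (h2.mul (((h4.pow 2).const_mul l).const_add 1))
    refine HasDerivAt.congr_deriv this ?_
    rw [Real.sinh_sub]
    have := Real.cosh_sq y
    simp only [Pi.mul_apply, Pi.pow_apply]
    push_cast
    linear_combination (l * Real.cosh (l*y)) * this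
  · intro y hy
    have h1 : 0 ≤ Real.sinh y := Real.sinh_nonneg_iff.2 hy
    have h2 : 0 ≤ Real.sinh (y - l * y) := Real.sinh_nonneg_iff.2 (by nlinarith)
    have : 0 ≤ 2 - l := by linarith
    positivity

/-- the ratio -/
noncomputable def rho (l y : ℝ) : ℝ :=
  Real.sinh (l * y) * Real.cosh y / (Real.sinh y * Real.exp (l * Real.log (Real.cosh y)))

lemma rho_mono {l : ℝ} (hl0 : 0 < l) (hl1 : l < 1) : MonotoneOn (rho l) (Set.Ioi 0) := by
  have hD : ∀ y ∈ Set.Ioi (0:ℝ), HasDerivAt (rho l)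
      ((l * Real.cosh (l * y) * Real.sinh y * Real.cosh y
      - Real.sinh (l * y) * (1 + l * Real.sinh y ^ 2)) /
        (Real.sinh y ^ 2 * Real.exp (l * Real.log (Real.cosh y)))) y := by
    intro y hy
    have hs : 0 < Real.sinh y := Real.sinh_pos_iff.2 hy
    have hc := Real.cosh_pos y
    have h1 := hasDerivAt_explc l y
    have h2 := hasDerivAt_sinh_mul l y
    have h3 := Real.hasDerivAt_cosh y
    have h4 := Real.hasDerivAt_sinh y
    have := (h2.mul h3).div (h4.mul h1) (by simp only [Pi.mul_apply]; positivity)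
    unfold rho
    refine HasDerivAt.congr_deriv this ?_
    simp only [Pi.mul_apply]
    have hsq := Real.cosh_sq y
    field_simp
    linear_combination (-Real.sinh (l * y)) * hsq
  apply monotoneOn_of_deriv_nonneg (convex_Ioi 0)
  · exact fun x hx => (hD x hx).continuousAt.continuousWithinAt
  · intro x hx
    rw [interior_Ioi] at hx
    exact (hD x hx).differentiableAt.differentiableWithinAt
  · intro x hx
    rw [interior_Ioi] at hx
    rw [(hD x hx).deriv]
    exact div_nonneg (key_G hl0 hl1 (le_of_lt hx)) (by positivity)

/-- `cosh kx ≤ cosh kL + k sinh kL`, `L = log cosh x`. -/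
lemma key_W {k : ℝ} (hk0 : 0 < k) (hk1 : k < 1) {x : ℝ} (hx : 0 ≤ x) :
    Real.cosh (k * x) ≤ Real.cosh (k * Real.log (Real.cosh x))
      + k * Real.sinh (k * Real.log (Real.cosh x)) := by
  set L : ℝ → ℝ := fun x => Real.log (Real.cosh x) with hL
  have hLd : ∀ x, HasDerivAt L (Real.sinh x / Real.cosh x) x := hasDerivAt_logcosh
  have hcL : ∀ x, HasDerivAt (fun x => Real.cosh (k * L x))
      (Real.sinh (k * L x) * (k * (Real.sinh x / Real.cosh x))) x :=
    fun x => ((hLd x).const_mul k).cosh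
  have hsL : ∀ x, HasDerivAt (fun x => Real.sinh (k * L x))
      (Real.cosh (k * L x) * (k * (Real.sinh x / Real.cosh x))) x :=
    fun x => ((hLd x).const_mul k).sinh
  have ht : ∀ x, HasDerivAt (fun x => Real.sinh x / Real.cosh x) (1 / Real.cosh x ^ 2) x := by
    intro x
    have := (Real.hasDerivAt_sinh x).div (Real.hasDerivAt_cosh x) (Real.cosh_pos x).ne'
    refine HasDerivAt.congr_deriv this ?_
    have hsq := Real.cosh_sq x
    rw [show Real.cosh x * Real.cosh x - Real.sinh x * Real.sinh x = 1 by nlinarith]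
  -- W and W'
  set W : ℝ → ℝ := fun x => Real.cosh (k * L x) + k * Real.sinh (k * L x) - Real.cosh (k * x) with hW
  set W1 : ℝ → ℝ := fun x => (Real.sinh (k * L x) + k * Real.cosh (k * L x)) * k *
    (Real.sinh x / Real.cosh x) - k * Real.sinh (k * x) with hW1
  have hWd : ∀ x, HasDerivAt W (W1 x) x := by
    intro x
    have := ((hcL x).add ((hsL x).const_mul k)).sub (hasDerivAt_cosh_mul k x)
    refine HasDerivAt.congr_deriv this ?_
    simp only [hW1]; ring
  set W2 : ℝ → ℝ := fun x => (Real.cosh (k * L x) + k * Real.sinh (k * L x)) * k ^ 2 *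
      (Real.sinh x / Real.cosh x) ^ 2 + (Real.sinh (k * L x) + k * Real.cosh (k * L x)) * k *
      (1 / Real.cosh x ^ 2) - k ^ 2 * Real.cosh (k * x) with hW2
  have hW1d : ∀ x, HasDerivAt W1 (W2 x) x := by
    intro x
    have := ((((hsL x).add ((hcL x).const_mul k)).mul_const k).mul (ht x)).sub
      ((hasDerivAt_sinh_mul k x).const_mul k)
    refine HasDerivAt.congr_deriv this ?_
    simp only [hW2, Pi.add_apply]; ring
  have hLnn : ∀ x, 0 ≤ L x := fun x => Real.log_nonneg (Real.one_le_cosh x)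
  have hkey : ∀ x, 0 ≤ W2 x - k ^ 2 * W x := by
    intro x
    have hc := Real.cosh_pos x
    have : W2 x - k ^ 2 * W x = (1 / Real.cosh x ^ 2) * (k * (1 - k ^ 2) * Real.sinh (k * L x)) := by
      have e : (Real.sinh x / Real.cosh x) ^ 2 = 1 - 1 / Real.cosh x ^ 2 := by
        have hsq := Real.cosh_sq x
        field_simp; linarith
      simp only [hW2, hW, e]; ring
    rw [this]
    have h1 : 0 ≤ Real.sinh (k * L x) := Real.sinh_nonneg_iff.2 (mul_nonneg hk0.le (hLnn x))
    have h2 : 0 ≤ 1 - k ^ 2 := by nlinarith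
    positivity
  have hcross : ∀ x, 0 ≤ x → 0 ≤ W1 x * Real.cosh (k * x) - W x * (k * Real.sinh (k * x)) := by
    intro x hx
    refine nonneg_of_deriv_nonneg
      (F := fun x => W1 x * Real.cosh (k * x) - W x * (k * Real.sinh (k * x)))
      (F' := fun x => (W2 x - k ^ 2 * W x) * Real.cosh (k * x)) (by simp [hW1, hW, hL]) ?_ ?_ hx
    · intro x
      have := ((hW1d x).mul (hasDerivAt_cosh_mul k x)).sub
        ((hWd x).mul ((hasDerivAt_sinh_mul k x).const_mul k))
      refine HasDerivAt.congr_deriv this ?_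
      ring
    · intro y _
      exact mul_nonneg (hkey y) (Real.cosh_pos _).le
  have hq : 0 ≤ W x / Real.cosh (k * x) := by
    refine nonneg_of_deriv_nonneg (F := fun x => W x / Real.cosh (k * x))
      (F' := fun x => (W1 x * Real.cosh (k * x) - W x * (k * Real.sinh (k * x))) /
        Real.cosh (k * x) ^ 2) (by simp [hW, hL]) ?_ ?_ hx
    · intro x
      exact (hWd x).div (hasDerivAt_cosh_mul k x) (Real.cosh_pos _).ne'
    · intro y hy
      exact div_nonneg (hcross y hy) (by positivity)
  have : 0 ≤ W x := by
    by_contra h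
    push Not at h
    exact absurd hq (not_le.2 (div_neg_of_neg_of_pos h (Real.cosh_pos _)))
  simp only [hW] at this
  linarith

/-- two-term Hölder -/
lemma holder2 {k : ℝ} (hk0 : 0 ≤ k) (hk1 : k ≤ 1) {a b c d : ℝ} (ha : 0 < a) (hb : 0 < b)
    (hc : 0 < c) (hd : 0 < d) :
    a ^ k * c ^ (1 - k) + b ^ k * d ^ (1 - k) ≤ (a + b) ^ k * (c + d) ^ (1 - k) := by
  have h1 := Real.geom_mean_le_arith_mean2_weighted hk0 (sub_nonneg.2 hk1)
    (div_nonneg ha.le (add_pos ha hb).le) (div_nonneg hc.le (add_pos hc hd).le) (by ring)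
  have h2 := Real.geom_mean_le_arith_mean2_weighted hk0 (sub_nonneg.2 hk1)
    (div_nonneg hb.le (add_pos ha hb).le) (div_nonneg hd.le (add_pos hc hd).le) (by ring)
  rw [Real.div_rpow ha.le (add_pos ha hb).le, Real.div_rpow hc.le (add_pos hc hd).le] at h1
  rw [Real.div_rpow hb.le (add_pos ha hb).le, Real.div_rpow hd.le (add_pos hc hd).le] at h2
  have hP : 0 < (a + b) ^ k := Real.rpow_pos_of_pos (add_pos ha hb) _
  have hQ : 0 < (c + d) ^ (1 - k) := Real.rpow_pos_of_pos (add_pos hc hd) _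
  have h3 : k * (a / (a + b)) + (1 - k) * (c / (c + d)) + (k * (b / (a + b)) + (1 - k) * (d / (c + d))) = 1 := by
    have := (add_pos ha hb).ne'
    have := (add_pos hc hd).ne'
    field_simp; ring
  have h4 := add_le_add h1 h2
  rw [h3] at h4
  have : a ^ k / (a + b) ^ k * (c ^ (1 - k) / (c + d) ^ (1 - k)) +
      b ^ k / (a + b) ^ k * (d ^ (1 - k) / (c + d) ^ (1 - k)) =
      (a ^ k * c ^ (1 - k) + b ^ k * d ^ (1 - k)) / ((a + b) ^ k * (c + d) ^ (1 - k)) := by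
    field_simp
  rw [this, div_le_one (by positivity)] at h4
  exact h4

/-- `C = cosh^k x cosh^{1-k} y`. -/
noncomputable def CC (k x y : ℝ) : ℝ :=
  Real.exp (k * Real.log (Real.cosh x)) * Real.exp ((1 - k) * Real.log (Real.cosh y))

lemma CC_eq (k x y : ℝ) : CC k x y = Real.cosh x ^ k * Real.cosh y ^ (1 - k) := by
  rw [CC, Real.rpow_def_of_pos (Real.cosh_pos x), Real.rpow_def_of_pos (Real.cosh_pos y),
    mul_comm k, mul_comm (1 - k)]

lemma CC_ge {k : ℝ} (hk0 : 0 ≤ k) (hk1 : k ≤ 1) (x y : ℝ) :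
    Real.cosh (k * x + (1 - k) * y) ≤ CC k x y := by
  have := holder2 hk0 hk1 (Real.exp_pos x) (Real.exp_pos (-x)) (Real.exp_pos y) (Real.exp_pos (-y))
  rw [CC_eq, Real.cosh_eq, Real.cosh_eq x, Real.cosh_eq y,
    Real.div_rpow (by positivity) (by norm_num), Real.div_rpow (by positivity) (by norm_num)]
  rw [← Real.exp_mul, ← Real.exp_mul, ← Real.exp_mul, ← Real.exp_mul, ← Real.exp_add,
    ← Real.exp_add] at this
  have h2 : (2:ℝ) ^ k * 2 ^ (1 - k) = 2 := by
    rw [← Real.rpow_add (by norm_num)]; simp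
  rw [div_mul_div_comm, h2]
  apply div_le_div_of_nonneg_right _ (by norm_num)
  rw [show k * x + (1 - k) * y = x * k + y * (1 - k) by ring,
    show -(x * k + y * (1 - k)) = -x * k + -y * (1 - k) by ring]
  exact this
end

section
/-- purely algebraic step -/
lemma alg_step {k h r v C : ℝ} (hk0 : 0 < k) (hk1 : k < 1) (hh : h ^ 2 = 1 - k ^ 2 + r ^ 2)
    (hr : 0 < r) (hh0 : 0 < h) :
    (1 - k ^ 2) * C ^ 2 - 2 * C * (h * v - k * r) + v ^ 2 - k ^ 2
      = (v - k - (h - r) * C) * (v + k - (h + r) * C) := by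
  linear_combination (-C ^ 2) * hh

lemma D_endpoint {k : ℝ} (hk0 : 0 < k) (hk1 : k < 1) {x : ℝ} (hx : 0 ≤ x) :
    1 - k ≤ (Real.cosh (k * x) - Real.sqrt (Real.sinh (k * x) ^ 2 + k ^ 2)) *
      Real.exp (k * Real.log (Real.cosh x)) := by
  set M := Real.exp (k * Real.log (Real.cosh x)) with hM
  set h := Real.cosh (k * x)
  set r := Real.sqrt (Real.sinh (k * x) ^ 2 + k ^ 2) with hr
  have hMpos : 0 < M := Real.exp_pos _
  have hM1 : 1 ≤ M := Real.one_le_exp (mul_nonneg hk0.le (Real.log_nonneg (Real.one_le_cosh x)))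
  have hr2 : r ^ 2 = Real.sinh (k * x) ^ 2 + k ^ 2 := Real.sq_sqrt (by positivity)
  have hrpos : 0 ≤ r := Real.sqrt_nonneg _
  have hhr : h ^ 2 = 1 - k ^ 2 + r ^ 2 := by
    have := Real.cosh_sq (k * x)
    rw [hr2]; linarith
  have hpos : 0 < h := Real.cosh_pos _
  have hW := key_W hk0 hk1 hx
  rw [Real.cosh_eq (k * Real.log _), Real.sinh_eq, Real.exp_neg, ← hM] at hW
  have hW' : 2 * M * h ≤ (1 + k) * M ^ 2 + (1 - k) := by
    have : M * (2 * h) ≤ M * ((M + M⁻¹) + k * (M - M⁻¹)) := by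
      apply mul_le_mul_of_nonneg_left _ hMpos.le
      linarith
    have e : M * ((M + M⁻¹) + k * (M - M⁻¹)) = (1 + k) * M ^ 2 + (1 - k) := by
      field_simp; ring
    linarith
  have hMh : h ≤ M := by
    have := CC_ge hk0.le hk1.le x 0
    simpa [CC] using this
  have h5 : r ≤ (1 + k) * M - h := by
    apply abs_le_of_sq_le_sq' _ (by nlinarith) |>.2
    nlinarith
  have h6 : h + r ≤ (1 + k) * M := by linarith
  have h7 : (h - r) * (h + r) = (1 - k) * (1 + k) := by linear_combination hhr
  have h8 : 0 ≤ h - r := by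
    by_contra hc
    push Not at hc
    nlinarith
  nlinarith

lemma sinh_div_pos_of {k x : ℝ} : 0 ≤ Real.sinh (k * x) ^ 2 := by positivity

lemma CC_pos (k x y : ℝ) : 0 < CC k x y := by unfold CC; positivity

lemma prod_identity {k x y C : ℝ} :
    (C - Real.cosh (k * x + (1 - k) * y)) * (C - Real.cosh (k * x - (1 - k) * y)) =
     C ^ 2 - 2 * C * (Real.cosh (k * x) * Real.cosh ((1 - k) * y)) + Real.sinh (k * x) ^ 2 +
       Real.cosh ((1 - k) * y) ^ 2 := by
  rw [Real.cosh_add, Real.cosh_sub]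
  have h1 := Real.cosh_sq (k * x)
  have h2 := Real.cosh_sq ((1 - k) * y)
  linear_combination (Real.cosh ((1-k)*y))^2 * h1 + Real.sinh (k*x) ^ 2 * h2

lemma endpoint_alg {k h r v C : ℝ} (hk0 : 0 < k) (hk1 : k < 1) (hh : h ^ 2 = 1 - k ^ 2 + r ^ 2)
    (hr : 0 < r) (hh1 : 1 ≤ h) (hv1 : 1 ≤ v) (hw : k * C = r) (hhv : h * v ≤ C)
    (hQ : 0 ≤ (v - k - (h - r) * C) * (v + k - (h + r) * C)) : 0 ≤ k + (h - r) * C - v := by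
  by_contra hn
  push Not at hn
  have h1 : 0 ≤ v + k - (h + r) * C := by
    by_contra hcon
    push Not at hcon
    have : (v - k - (h - r) * C) * (v + k - (h + r) * C) < 0 :=
      mul_neg_of_pos_of_neg (by linarith) hcon
    linarith
  have hrk : k ≤ r := by nlinarith
  have hvC : v ≤ C := by nlinarith
  have hC1 : 1 ≤ C := by linarith
  have e1 : C ≤ h * C := by nlinarith
  have e2 : r ≤ r * C := by nlinarith
  have e3 : v = h * C := by linarith
  have e4 : k = r * C := by linarith
  have e5 : C = 1 := by
    have : r * C ≤ r * 1 := by linarith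
    have := le_of_mul_le_mul_left this hr
    linarith
  have e6 : r = k := by rw [e5] at e4; linarith
  rw [e6] at hh
  have e7 : h = 1 := by nlinarith
  rw [e3, e7, e5, e6] at hn
  linarith

lemma D_nonneg {k : ℝ} (hk0 : 0 < k) (hk1 : k < 1) {x y : ℝ} (hx : 0 ≤ x) (hy : 0 ≤ y)
    (hlt : k * CC k x y < Real.sqrt (Real.sinh (k * x) ^ 2 + k ^ 2)) :
    0 ≤ k + (Real.cosh (k * x) - Real.sqrt (Real.sinh (k * x) ^ 2 + k ^ 2)) * CC k x y
      - Real.cosh ((1 - k) * y) := by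
  have hD0 := D_endpoint hk0 hk1 hx
  set h := Real.cosh (k * x) with hh
  set r := Real.sqrt (Real.sinh (k * x) ^ 2 + k ^ 2) with hr
  set K := Real.exp (k * Real.log (Real.cosh x)) with hK
  set l := 1 - k with hl
  have hl0 : 0 < l := by simp only [hl]; linarith
  have hl1 : l < 1 := by simp only [hl]; linarith
  have hr2 : r ^ 2 = Real.sinh (k * x) ^ 2 + k ^ 2 := Real.sq_sqrt (by positivity)
  have hrpos : 0 < r := Real.sqrt_pos.2 (by positivity)
  have hhr : h ^ 2 = 1 - k ^ 2 + r ^ 2 := by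
    have := Real.cosh_sq (k * x)
    rw [hr2]; linarith
  have hh1 : 1 ≤ h := Real.one_le_cosh _
  set D : ℝ → ℝ := fun y => k + (h - r) * CC k x y - Real.cosh (l * y) with hD
  have hDd : ∀ y, HasDerivAt D (l * ((h - r) * K * Real.exp (l * Real.log (Real.cosh y)) *
      (Real.sinh y / Real.cosh y) - Real.sinh (l * y))) y := by
    intro y
    have h1 := (((hasDerivAt_explc l y).const_mul K).const_mul (h - r)).const_add k
    have h2 := h1.sub (hasDerivAt_cosh_mul l y)
    exact h2.congr_deriv (by ring)
  have hDcont : Continuous D := continuous_iff_continuousAt.2 fun y => (hDd y).continuousAt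
  by_contra hneg
  push Not at hneg
  change D y < 0 at hneg
  have hD00 : 0 ≤ D 0 := by
    simp only [hD, CC, ← hK]
    simp
    linarith
  have hy0 : 0 < y := by
    rcases hy.eq_or_lt with h0 | h0
    · rw [← h0] at hneg; linarith
    · exact h0
  -- find y*
  have hCcont : Continuous fun y => k * CC k x y := by
    have : Continuous fun y => Real.exp (l * Real.log (Real.cosh y)) :=
      continuous_iff_continuousAt.2 fun y => (hasDerivAt_explc l y).continuousAt
    exact continuous_const.mul (continuous_const.mul this)
  obtain ⟨z, hyz, hz⟩ : ∃ z, y < z ∧ r ≤ k * CC k x z := by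
    have ht : Filter.Tendsto (fun z => Real.cosh (k * x + l * z)) Filter.atTop Filter.atTop := by
      refine Filter.tendsto_atTop_mono (fun z => ?_)
        (Filter.tendsto_atTop_add_const_left _ (k * x) (Filter.tendsto_id.const_mul_atTop hl0))
      rcases le_total 0 (k * x + l * z) with h0 | h0
      · exact (Real.self_le_sinh_iff.2 h0).trans (Real.sinh_lt_cosh _).le
      · exact h0.trans (Real.cosh_pos _).le
    obtain ⟨z, hz1, hz2⟩ := ((ht.eventually_ge_atTop (r / k)).and (Filter.eventually_gt_atTop y)).exists
    refine ⟨z, hz2, ?_⟩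
    have := hz1.trans (CC_ge hk0.le hk1.le x z)
    rw [div_le_iff₀ hk0] at this
    linarith
  obtain ⟨w, ⟨hyw, hwz⟩, hw⟩ := intermediate_value_Icc hyz.le hCcont.continuousOn ⟨hlt.le, hz⟩
  have hyw' : y < w := by
    rcases hyw.eq_or_lt with h0 | h0
    · rw [← h0] at hw; simp only at hw; linarith
    · exact h0
  simp only at hw
  have hDw : 0 ≤ D w := by
    set C := CC k x w with hC
    set v := Real.cosh (l * w) with hv
    have hv1 : 1 ≤ v := Real.one_le_cosh _
    have hCpos : 0 < C := CC_pos _ _ _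
    have hprod := prod_identity (k := k) (x := x) (y := w) (C := C)
    have hA : 0 ≤ C - Real.cosh (k * x + (1 - k) * w) := sub_nonneg.2 (CC_ge hk0.le hk1.le x w)
    have hB : 0 ≤ C - Real.cosh (k * x - (1 - k) * w) := by
      have := CC_ge hk0.le hk1.le x (-w)
      rw [show CC k x (-w) = C by simp [hC, CC]] at this
      rw [sub_nonneg]
      convert this using 2
      ring
    have hQ : 0 ≤ (v - k - (h - r) * C) * (v + k - (h + r) * C) := by
      rw [← alg_step hk0 hk1 hhr hrpos (by linarith)]
      have := mul_nonneg hA hB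
      rw [hprod] at this
      have e : Real.sinh (k * x) ^ 2 = r ^ 2 - k ^ 2 := by linarith
      rw [e] at this
      change 0 ≤ C ^ 2 - 2 * C * (h * v) + (r ^ 2 - k ^ 2) + v ^ 2 at this
      have e2 : k * C = r := hw
      have e3 : r ^ 2 = k * C * r := by rw [e2]; ring
      nlinarith
    have hhv : h * v ≤ C := by
      have : 0 ≤ Real.sinh (k * x) * Real.sinh (l * w) :=
        mul_nonneg (Real.sinh_nonneg_iff.2 (by positivity)) (Real.sinh_nonneg_iff.2 (mul_nonneg hl0.le (by linarith)))
      have h2 := Real.cosh_add (k * x) (l * w)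
      have h3 : Real.cosh (k * x) * Real.cosh (l * w) = h * v := rfl
      have h4 : Real.cosh (k * x + l * w) = Real.cosh (k * x + (1 - k) * w) := rfl
      linarith
    simp only [hD]
    change 0 ≤ k + (h - r) * C - v
    exact endpoint_alg hk0 hk1 hhr hrpos hh1 hv1 hw hhv hQ
  -- mean value theorem
  obtain ⟨a, ha, hda⟩ := exists_hasDerivAt_eq_slope D _ hy0 hDcont.continuousOn (fun t _ => hDd t)
  obtain ⟨b, hb, hdb⟩ := exists_hasDerivAt_eq_slope D _ hyw' hDcont.continuousOn (fun t _ => hDd t)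
  have ha' : (D y - D 0) / (y - 0) < 0 := div_neg_of_neg_of_pos (by linarith) (by linarith)
  have hb' : 0 < (D w - D y) / (w - y) := div_pos (by linarith) (by linarith)
  rw [← hda] at ha'
  rw [← hdb] at hb'
  have ha0 : 0 < a := ha.1
  have hb0 : 0 < b := hy0.trans hb.1
  have hmono := rho_mono hl0 hl1 ha0 hb0 (ha.2.trans hb.1).le
  have hra : (h - r) * K < rho l a := by
    have hs : 0 < Real.sinh a := Real.sinh_pos_iff.2 ha0
    have hc := Real.cosh_pos a
    rw [rho, lt_div_iff₀ (by positivity)]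
    have : (h - r) * K * Real.exp (l * Real.log (Real.cosh a)) * (Real.sinh a / Real.cosh a)
      < Real.sinh (l * a) := by
        exact sub_neg.1 (neg_of_mul_neg_right ha' hl0.le)
    rw [← mul_div_assoc, div_lt_iff₀ hc] at this
    linarith
  have hrb : rho l b < (h - r) * K := by
    have hs : 0 < Real.sinh b := Real.sinh_pos_iff.2 hb0
    have hc := Real.cosh_pos b
    rw [rho, div_lt_iff₀ (by positivity)]
    have : Real.sinh (l * b) < (h - r) * K * Real.exp (l * Real.log (Real.cosh b)) * (Real.sinh b / Real.cosh b) := by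
        exact sub_pos.1 (pos_of_mul_pos_right hb' hl0.le)
    rw [← mul_div_assoc, lt_div_iff₀ hc] at this
    linarith
  linarith

lemma core_pos {k : ℝ} (hk0 : 0 < k) (hk1 : k < 1) {x y : ℝ} (hx : 0 ≤ x) (hy : 0 ≤ y) :
    Real.sqrt (Real.sinh (k * x) ^ 2 + k ^ 2) - k * CC k x y ≤
      Real.sqrt ((CC k x y - Real.cosh (k * x + (1 - k) * y)) *
        (CC k x y - Real.cosh (k * x - (1 - k) * y))) := by
  by_cases hlt : k * CC k x y < Real.sqrt (Real.sinh (k * x) ^ 2 + k ^ 2)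
  swap
  · push Not at hlt
    exact (sub_nonpos.2 hlt).trans (Real.sqrt_nonneg _)
  have hD := D_nonneg hk0 hk1 hx hy hlt
  apply Real.le_sqrt_of_sq_le
  rw [prod_identity]
  set h := Real.cosh (k * x) with hh
  set r := Real.sqrt (Real.sinh (k * x) ^ 2 + k ^ 2) with hr
  set C := CC k x y
  set v := Real.cosh ((1 - k) * y)
  have hr2 : r ^ 2 = Real.sinh (k * x) ^ 2 + k ^ 2 := Real.sq_sqrt (by positivity)
  have hrpos : 0 < r := Real.sqrt_pos.2 (by positivity)
  have hhr : h ^ 2 = 1 - k ^ 2 + r ^ 2 := by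
    have := Real.cosh_sq (k * x)
    rw [hr2]; linarith
  have hh1 : 1 ≤ h := Real.one_le_cosh _
  have hC : 0 < C := CC_pos _ _ _
  have hrk : k ≤ r := by nlinarith [sq_nonneg (Real.sinh (k * x))]
  have hkh : k * h ≤ r * v := by
    have hv1 : 1 ≤ v := Real.one_le_cosh _
    have : k * h ≤ r := by
      apply abs_le_of_sq_le_sq' _ hrpos.le |>.2
      rw [mul_pow, hhr]
      have ha : 0 ≤ r ^ 2 - k ^ 2 := by nlinarith
      have hb : 0 ≤ 1 - k ^ 2 := by nlinarith
      nlinarith [mul_nonneg ha hb]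
    nlinarith
  have h2 : v + k - (h + r) * C ≤ 0 := by
    have h3 : (v - k) ≤ (h - r) * C := by linarith
    have h4 : (h - r) * (h + r) = 1 - k ^ 2 := by linear_combination hhr
    have h5 : (v - k) * (h + r) ≤ (1 - k ^ 2) * C := by
      have := mul_le_mul_of_nonneg_right h3 (show 0 ≤ h + r by linarith)
      calc _ ≤ _ := this
        _ = (h - r) * (h + r) * C := by ring
        _ = _ := by rw [h4]
    -- (1-k²)C (h+r) ≥ (v-k)(h+r)² ≥ (v+k)(1-k²) 
    have h6 : (v + k) * (1 - k ^ 2) ≤ (v - k) * (h + r) * (h + r) := by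
      have : (v + k) * (h - r) ≤ (v - k) * (h + r) := by nlinarith
      calc (v + k) * (1 - k ^ 2) = (v + k) * (h - r) * (h + r) := by rw [← h4]; ring
        _ ≤ _ := mul_le_mul_of_nonneg_right this (by linarith)
    have h7 : (v + k) * (1 - k ^ 2) ≤ ((h + r) * C) * (1 - k ^ 2) := by
      have := mul_le_mul_of_nonneg_right h5 (show 0 ≤ h + r by linarith)
      nlinarith
    have : 0 < 1 - k ^ 2 := by nlinarith
    have := le_of_mul_le_mul_right h7 this
    linarith
  have hQ := mul_nonneg_of_nonpos_of_nonpos (show v - k - (h - r) * C ≤ 0 by linarith) h2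
  rw [← alg_step hk0 hk1 hhr hrpos (by linarith)] at hQ
  nlinarith

lemma core {k : ℝ} (hk0 : 0 < k) (hk1 : k < 1) (x y : ℝ) :
    Real.sqrt (Real.sinh (k * x) ^ 2 + k ^ 2) - k * CC k x y ≤
      Real.sqrt ((CC k x y - Real.cosh (k * x + (1 - k) * y)) *
        (CC k x y - Real.cosh (k * x - (1 - k) * y))) := by
  have h := core_pos hk0 hk1 (abs_nonneg x) (abs_nonneg y)
  have e1 : CC k |x| |y| = CC k x y := by simp [CC]
  have e2 : Real.sinh (k * |x|) ^ 2 = Real.sinh (k * x) ^ 2 := by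
    rcases abs_choice x with h | h <;> rw [h] <;> simp
  rw [e1, e2, prod_identity] at h
  rw [prod_identity]
  have e3 : Real.cosh (k * |x|) = Real.cosh (k * x) := by
    rcases abs_choice x with h | h <;> rw [h] <;> simp
  have e4 : Real.cosh ((1 - k) * |y|) = Real.cosh ((1 - k) * y) := by
    rcases abs_choice y with h | h <;> rw [h] <;> simp
  rw [e2, e3, e4] at h
  exact h
end

section
lemma quad_nonneg {A B t s : ℝ} (hA : 0 ≤ A) (hB : 0 ≤ B) (ht : 0 ≤ t)
    (hs : s ≤ Real.sqrt (A * B)) : 0 ≤ t ^ 2 * A + B - 2 * t * s := by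
  have h1 : Real.sqrt (A * B) = Real.sqrt A * Real.sqrt B := Real.sqrt_mul hA B
  have h2 := Real.sq_sqrt hA
  have h3 := Real.sq_sqrt hB
  have h4 : t * s ≤ t * (Real.sqrt A * Real.sqrt B) := by
    rw [← h1]; exact mul_le_mul_of_nonneg_left hs ht
  nlinarith [sq_nonneg (t * Real.sqrt A - Real.sqrt B)]

lemma bilin_hyp {k : ℝ} (hk0 : 0 < k) (hk1 : k < 1) (x y : ℝ) {t ζ1 ζ2 z1 z2 : ℝ} (ht : 0 ≤ t)
    (h1 : ζ1 = k * t) (h2 : ζ1 ^ 2 + ζ2 ^ 2 = t ^ 2) (hz : z1 ^ 2 + z2 ^ 2 ≤ 1) :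
    Real.exp (k * x) * (t ^ 2 * Real.exp ((1 - k) * y) + Real.exp (-((1 - k) * y))
        + 2 * (ζ1 * z1 - ζ2 * z2))
      + Real.exp (-(k * x)) * (Real.exp ((1 - k) * y) + t ^ 2 * Real.exp (-((1 - k) * y))
        + 2 * (ζ1 * z1 + ζ2 * z2))
      ≤ (1 + t ^ 2 + 2 * (k * t)) * (2 * CC k x y) := by
  have hA : 0 ≤ CC k x y - Real.cosh (k * x + (1 - k) * y) := sub_nonneg.2 (CC_ge hk0.le hk1.le x y)
  have hB : 0 ≤ CC k x y - Real.cosh (k * x - (1 - k) * y) := by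
    have := CC_ge hk0.le hk1.le x (-y)
    rw [show CC k x (-y) = CC k x y by simp [CC]] at this
    rw [sub_nonneg]
    convert this using 2
    ring
  have hq := quad_nonneg hA hB ht (core hk0 hk1 x y)
  set r := Real.sqrt (Real.sinh (k * x) ^ 2 + k ^ 2) with hr
  have hr2 : r ^ 2 = Real.sinh (k * x) ^ 2 + k ^ 2 := Real.sq_sqrt (by positivity)
  have hr0 : 0 ≤ r := Real.sqrt_nonneg _
  have hcs : Real.cosh (k * x) * (ζ1 * z1) - Real.sinh (k * x) * (ζ2 * z2) ≤ t * r := by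
    apply abs_le_of_sq_le_sq' _ (by positivity) |>.2
    set c := Real.cosh (k * x)
    set s := Real.sinh (k * x)
    have hc : c ^ 2 = s ^ 2 + 1 := Real.cosh_sq _
    have e : (c * ζ1) ^ 2 + (s * ζ2) ^ 2 = (t * r) ^ 2 := by
      rw [mul_pow t r, hr2, mul_pow, mul_pow, hc]
      have : ζ2 ^ 2 = t ^ 2 - ζ1 ^ 2 := by linarith
      rw [this, h1]; ring
    calc (c * (ζ1 * z1) - s * (ζ2 * z2)) ^ 2
        ≤ ((c * ζ1) ^ 2 + (s * ζ2) ^ 2) * (z1 ^ 2 + z2 ^ 2) := by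
          nlinarith [sq_nonneg (c * ζ1 * z2 + s * ζ2 * z1)]
      _ ≤ ((c * ζ1) ^ 2 + (s * ζ2) ^ 2) * 1 := by
          apply mul_le_mul_of_nonneg_left hz (by positivity)
      _ = (t * r) ^ 2 := by rw [e, mul_one]
  have ex : Real.exp (k * x) = Real.cosh (k * x) + Real.sinh (k * x) := (Real.cosh_add_sinh _).symm
  have ex' : Real.exp (-(k * x)) = Real.cosh (k * x) - Real.sinh (k * x) := (Real.cosh_sub_sinh _).symm
  have ey : Real.exp ((1 - k) * y) = Real.cosh ((1 - k) * y) + Real.sinh ((1 - k) * y) := (Real.cosh_add_sinh _).symm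
  have ey' : Real.exp (-((1 - k) * y)) = Real.cosh ((1 - k) * y) - Real.sinh ((1 - k) * y) := (Real.cosh_sub_sinh _).symm
  rw [Real.cosh_add, Real.cosh_sub] at hq
  rw [ex, ex', ey, ey']
  linarith

lemma bilin_pos {k : ℝ} (hk0 : 0 < k) (hk1 : k < 1) {a b c d : ℝ} (ha : 0 < a) (hb : 0 < b)
    (hc : 0 < c) (hd : 0 < d) {t ζ1 ζ2 z1 z2 : ℝ} (ht : 0 ≤ t)
    (h1 : ζ1 = k * t) (h2 : ζ1 ^ 2 + ζ2 ^ 2 = t ^ 2)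
    (hz : z1 ^ 2 + z2 ^ 2 ≤ c ^ (1 - k) * d ^ (1 - k)) :
    a ^ k * (t ^ 2 * c ^ (1 - k) + d ^ (1 - k) + 2 * (ζ1 * z1 - ζ2 * z2))
      + b ^ k * (c ^ (1 - k) + t ^ 2 * d ^ (1 - k) + 2 * (ζ1 * z1 + ζ2 * z2))
      ≤ (1 + t ^ 2 + 2 * (k * t)) * ((a + b) ^ k * (c + d) ^ (1 - k)) := by
  obtain ⟨G, x, rfl, rfl⟩ : ∃ G x, a = Real.exp (G + x) ∧ b = Real.exp (G - x) := by
    refine ⟨(Real.log a + Real.log b) / 2, (Real.log a - Real.log b) / 2, ?_, ?_⟩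
    · rw [show (Real.log a + Real.log b) / 2 + (Real.log a - Real.log b) / 2 = Real.log a by ring,
        Real.exp_log ha]
    · rw [show (Real.log a + Real.log b) / 2 - (Real.log a - Real.log b) / 2 = Real.log b by ring,
        Real.exp_log hb]
  obtain ⟨H, y, rfl, rfl⟩ : ∃ H y, c = Real.exp (H + y) ∧ d = Real.exp (H - y) := by
    refine ⟨(Real.log c + Real.log d) / 2, (Real.log c - Real.log d) / 2, ?_, ?_⟩
    · rw [show (Real.log c + Real.log d) / 2 + (Real.log c - Real.log d) / 2 = Real.log c by ring,
        Real.exp_log hc]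
    · rw [show (Real.log c + Real.log d) / 2 - (Real.log c - Real.log d) / 2 = Real.log d by ring,
        Real.exp_log hd]
  have e1 : Real.exp (G + x) ^ k = Real.exp (k * G) * Real.exp (k * x) := by
    rw [← Real.exp_mul, ← Real.exp_add]; ring_nf
  have e2 : Real.exp (G - x) ^ k = Real.exp (k * G) * Real.exp (-(k * x)) := by
    rw [← Real.exp_mul, ← Real.exp_add]; ring_nf
  have e3 : Real.exp (H + y) ^ (1 - k) = Real.exp ((1 - k) * H) * Real.exp ((1 - k) * y) := by
    rw [← Real.exp_mul, ← Real.exp_add]; ring_nf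
  have e4 : Real.exp (H - y) ^ (1 - k) = Real.exp ((1 - k) * H) * Real.exp (-((1 - k) * y)) := by
    rw [← Real.exp_mul, ← Real.exp_add]; ring_nf
  have e5 : Real.exp (G + x) + Real.exp (G - x) = Real.exp G * (2 * Real.cosh x) := by
    rw [Real.cosh_eq, Real.exp_add, sub_eq_add_neg, Real.exp_add]; ring
  have e6 : Real.exp (H + y) + Real.exp (H - y) = Real.exp H * (2 * Real.cosh y) := by
    rw [Real.cosh_eq, Real.exp_add, sub_eq_add_neg, Real.exp_add]; ring
  have hcx := Real.cosh_pos x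
  have hcy := Real.cosh_pos y
  have e7 : (Real.exp (G + x) + Real.exp (G - x)) ^ k * (Real.exp (H + y) + Real.exp (H - y)) ^ (1 - k)
      = Real.exp (k * G) * Real.exp ((1 - k) * H) * (2 * CC k x y) := by
    rw [e5, e6, Real.mul_rpow (by positivity) (by positivity), Real.mul_rpow (by positivity) (by positivity),
      Real.mul_rpow (by positivity) (by positivity), Real.mul_rpow (by positivity) (by positivity),
      ← Real.exp_mul, ← Real.exp_mul, CC_eq, mul_comm G, mul_comm H]
    have h22 : (2:ℝ) ^ k * 2 ^ (1 - k) = 2 := by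
      rw [← Real.rpow_add (by norm_num)]; simp
    linear_combination (Real.exp (k * G) * Real.exp ((1 - k) * H) * Real.cosh x ^ k * Real.cosh y ^ (1-k)) * h22
  rw [e7, e1, e2, e3, e4]
  rw [e3, e4] at hz
  set g := Real.exp (k * G)
  set η := Real.exp ((1 - k) * H) with hη
  have hη0 : 0 < η := Real.exp_pos _
  have hg0 : 0 < g := Real.exp_pos _
  have hz' : (z1 / η) ^ 2 + (z2 / η) ^ 2 ≤ 1 := by
    rw [div_pow, div_pow, ← add_div, div_le_one (by positivity)]
    have : Real.exp ((1 - k) * y) * Real.exp (-((1 - k) * y)) = 1 := by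
      rw [← Real.exp_add]; simp
    calc _ ≤ _ := hz
      _ = η ^ 2 * (Real.exp ((1 - k) * y) * Real.exp (-((1 - k) * y))) := by ring
      _ = η ^ 2 := by rw [this, mul_one]
  have := mul_le_mul_of_nonneg_left (bilin_hyp hk0 hk1 x y ht h1 h2 hz') (mul_pos hg0 hη0).le
  have ez1 : z1 = η * (z1 / η) := by field_simp
  have ez2 : z2 = η * (z2 / η) := by field_simp
  rw [ez1, ez2]
  linarith

lemma bilin {k : ℝ} (hk0 : 0 < k) (hk1 : k < 1) {a b c d : ℝ} (ha : 0 ≤ a) (hb : 0 ≤ b)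
    (hc : 0 ≤ c) (hd : 0 ≤ d) {t ζ1 ζ2 z1 z2 : ℝ} (ht : 0 ≤ t)
    (h1 : ζ1 = k * t) (h2 : ζ1 ^ 2 + ζ2 ^ 2 = t ^ 2)
    (hz : z1 ^ 2 + z2 ^ 2 ≤ c ^ (1 - k) * d ^ (1 - k)) :
    a ^ k * (t ^ 2 * c ^ (1 - k) + d ^ (1 - k) + 2 * (ζ1 * z1 - ζ2 * z2))
      + b ^ k * (c ^ (1 - k) + t ^ 2 * d ^ (1 - k) + 2 * (ζ1 * z1 + ζ2 * z2))
      ≤ (1 + t ^ 2 + 2 * (k * t)) * ((a + b) ^ k * (c + d) ^ (1 - k)) := by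
  have hk1' : 0 < 1 - k := by linarith
  have cont : ∀ (e l : ℝ), 0 < l → Continuous fun δ : ℝ => (e + δ) ^ l := fun e l hl =>
    (continuous_const.add continuous_id).rpow_const fun _ => Or.inr hl.le
  have cont2 : ∀ (e e' l : ℝ), 0 < l → Continuous fun δ : ℝ => ((e + δ) + (e' + δ)) ^ l :=
    fun e e' l hl => ((continuous_const.add continuous_id).add
      (continuous_const.add continuous_id)).rpow_const fun _ => Or.inr hl.le
  have c1 := cont a k hk0
  have c2 := cont b k hk0
  have c3 := cont c _ hk1'
  have c4 := cont d _ hk1'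
  have c5 := cont2 a b k hk0
  have c6 := cont2 c d _ hk1'
  have hL : Continuous fun δ : ℝ =>
      (a + δ) ^ k * (t ^ 2 * (c + δ) ^ (1 - k) + (d + δ) ^ (1 - k) + 2 * (ζ1 * z1 - ζ2 * z2))
      + (b + δ) ^ k * ((c + δ) ^ (1 - k) + t ^ 2 * (d + δ) ^ (1 - k) + 2 * (ζ1 * z1 + ζ2 * z2)) := by
    fun_prop
  have hR : Continuous fun δ : ℝ => (1 + t ^ 2 + 2 * (k * t)) *
      (((a + δ) + (b + δ)) ^ k * ((c + δ) + (d + δ)) ^ (1 - k)) := by fun_prop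
  have hL' := (hL.tendsto 0).mono_left (nhdsWithin_le_nhds (s := Set.Ioi 0))
  have hR' := (hR.tendsto 0).mono_left (nhdsWithin_le_nhds (s := Set.Ioi 0))
  simp only [add_zero] at hL' hR'
  refine le_of_tendsto_of_tendsto hL' hR' ?_
  filter_upwards [self_mem_nhdsWithin] with δ hδ
  have hδ : 0 < δ := hδ
  refine bilin_pos hk0 hk1 (by linarith) (by linarith) (by linarith) (by linarith) ht h1 h2 ?_
  refine hz.trans (mul_le_mul ?_ ?_ (by positivity) (by positivity))
  · exact Real.rpow_le_rpow hc (by linarith) hk1'.le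
  · exact Real.rpow_le_rpow hd (by linarith) hk1'.le

lemma normsq_expand (ζ x y : ℂ) : ‖ζ * x + y‖ ^ 2 = ‖ζ‖ ^ 2 * ‖x‖ ^ 2 + ‖y‖ ^ 2 +
    2 * (ζ.re * (x.re * y.re + x.im * y.im) - ζ.im * (x.im * y.re - x.re * y.im)) := by
  simp only [Complex.sq_norm, Complex.normSq_apply, Complex.add_re, Complex.mul_re, Complex.add_im,
    Complex.mul_im]
  ring

/-- The two point inequality on the lens boundary. -/
lemma twopoint_ge2 {p : ℝ} (hp : 2 ≤ p) {ζ : ℂ} (hζ : ζ.re = (1 - 2 / p) * ‖ζ‖) (x y : ℂ) :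
    ‖ζ * x + y‖ ^ p + ‖x + ζ * y‖ ^ p ≤ ‖1 + ζ‖ ^ p * (‖x‖ ^ p + ‖y‖ ^ p) := by
  have hp0 : 0 < p := by linarith
  set t := ‖ζ‖ with ht
  have hζ2 : ζ.re ^ 2 + ζ.im ^ 2 = t ^ 2 := by
    rw [ht, Complex.sq_norm, Complex.normSq_apply]; ring
  have eu := normsq_expand ζ x y
  have ev := normsq_expand ζ y x
  rw [add_comm (ζ * y)] at ev
  have eN : ‖1 + ζ‖ ^ 2 = 1 + t ^ 2 + 2 * ((1 - 2 / p) * t) := by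
    have := normsq_expand ζ 1 1
    rw [add_comm, mul_one] at this
    rw [this, hζ]; simp; ring
  rcases hp.eq_or_lt with h2 | h2
  · subst h2
    have hr : ζ.re = 0 := by rw [hζ]; norm_num
    simp only [Real.rpow_ofNat]
    rw [eu, ev, eN, hr]
    norm_num
    linarith
  set k := 1 - 2 / p with hk
  have hk0 : 0 < k := by
    rw [hk, sub_pos, div_lt_one hp0]; exact h2
  have hk1 : k < 1 := by
    rw [hk]; have : 0 < 2 / p := by positivity
    linarith
  have h1k : 1 - k = 2 / p := by rw [hk]; ring
  have hpow : ∀ s : ℝ, 0 ≤ s → (s ^ p) ^ (1 - k) = s ^ 2 := by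
    intro s hs
    rw [h1k, ← Real.rpow_mul hs, mul_div_cancel₀ _ hp0.ne']
    simp
  set a := ‖ζ * x + y‖ ^ p with ha
  set b := ‖x + ζ * y‖ ^ p with hb
  have ha0 : 0 ≤ a := by positivity
  have hb0 : 0 ≤ b := by positivity
  have hsplit : ∀ s : ℝ, 0 ≤ s → s ^ k * s ^ (1 - k) = s := by
    intro s hs
    rw [← Real.rpow_add' hs (by simp)]; simp
  have key := bilin hk0 hk1 ha0 hb0 (c := ‖x‖ ^ p) (d := ‖y‖ ^ p) (by positivity) (by positivity)
    (norm_nonneg ζ) hζ hζ2 (z1 := x.re * y.re + x.im * y.im) (z2 := x.im * y.re - x.re * y.im) (by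
      rw [hpow _ (norm_nonneg _), hpow _ (norm_nonneg _)]
      simp only [Complex.sq_norm, Complex.normSq_apply]
      exact le_of_eq (by ring))
  rw [hpow _ (norm_nonneg _), hpow _ (norm_nonneg _), ← ht, ← eN] at key
  have e1 : t ^ 2 * ‖x‖ ^ 2 + ‖y‖ ^ 2 +
      2 * (ζ.re * (x.re * y.re + x.im * y.im) - ζ.im * (x.im * y.re - x.re * y.im)) = a ^ (1 - k) := by
    rw [ha, hpow _ (norm_nonneg _), eu]
  have e2 : ‖x‖ ^ 2 + t ^ 2 * ‖y‖ ^ 2 +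
      2 * (ζ.re * (x.re * y.re + x.im * y.im) + ζ.im * (x.im * y.re - x.re * y.im)) = b ^ (1 - k) := by
    rw [hb, hpow _ (norm_nonneg _), ev]; ring
  rw [e1, e2, hsplit a ha0, hsplit b hb0] at key
  set U := a + b with hU
  set V := ‖x‖ ^ p + ‖y‖ ^ p with hV
  have hU0 : 0 ≤ U := by positivity
  have hV0 : 0 ≤ V := by positivity
  rcases hU0.eq_or_lt with h0 | h0
  · rw [← h0]; positivity
  have hUk : 0 < U ^ k := Real.rpow_pos_of_pos h0 _
  have h3 : U ^ (1 - k) ≤ ‖1 + ζ‖ ^ 2 * V ^ (1 - k) := by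
    have : U ^ k * U ^ (1 - k) ≤ U ^ k * (‖1 + ζ‖ ^ 2 * V ^ (1 - k)) := by
      rw [hsplit U hU0]; linarith
    exact le_of_mul_le_mul_left this hUk
  have h4 : U ^ (1 - k) ≤ (‖1 + ζ‖ ^ p * V) ^ (1 - k) := by
    rw [Real.mul_rpow (by positivity) hV0, hpow _ (norm_nonneg _)]; exact h3
  exact (Real.rpow_le_rpow_iff hU0 (by positivity) (by linarith)).1 h4
end

section
lemma r_le_one {p q r : ℝ} (hq : 1 < q) (hqp : q ≤ p) (hr : r ^ 2 * (p - 1) = q - 1) : r ≤ 1 := by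
  by_contra h
  have h1 : 0 < r ^ 2 - 1 := by nlinarith
  have h2 := mul_pos h1 (show 0 < p - 1 by linarith)
  nlinarith

lemma rpow_sum_mono_exp {z s s' : ℝ} (hz0 : 0 ≤ z) (hz1 : z < 1) (hs : s ≤ 0) (hss : s' ≤ s) :
    (1 + z) ^ s + (1 - z) ^ s ≤ (1 + z) ^ s' + (1 - z) ^ s' := by
  have hP : 0 < 1 + z := by linarith
  have hM : 0 < 1 - z := by linarith
  set c := s - s' with hc
  have hc0 : 0 ≤ c := by linarith
  have e1 : (1 + z) ^ s = (1 + z) ^ s' * (1 + z) ^ c := by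
    rw [← Real.rpow_add hP]; congr 1; linarith
  have e2 : (1 - z) ^ s = (1 - z) ^ s' * (1 - z) ^ c := by
    rw [← Real.rpow_add hM]; congr 1; linarith
  have h1 : (1 + z) ^ s' ≤ 1 := Real.rpow_le_one_of_one_le_of_nonpos (by linarith) (by linarith)
  have h2 : 1 ≤ (1 - z) ^ s := Real.one_le_rpow_of_pos_of_le_one_of_nonpos hM (by linarith) hs
  have h3 : (1 + z) ^ c * (1 - z) ^ c ≤ 1 := by
    rw [← Real.mul_rpow hP.le hM.le]
    exact Real.rpow_le_one (by nlinarith) (by nlinarith) hc0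
  have h4 : (1 - z) ^ c ≤ 1 := Real.rpow_le_one hM.le (by linarith) hc0
  rw [e2] at h2
  rw [e1, e2]
  have p1 : 0 < (1 + z) ^ s' := Real.rpow_pos_of_pos hP _
  have p2 : 0 < (1 - z) ^ c := Real.rpow_pos_of_pos hM _
  have p3 : 0 < (1 - z) ^ s' := Real.rpow_pos_of_pos hM _
  set A := (1 + z) ^ s'
  set B := (1 + z) ^ c
  set D := (1 - z) ^ c
  set F := (1 - z) ^ s'
  -- A (B-1) ≤ F (1 - D)
  have h5 : D * (A * (B - 1)) ≤ D * (F * (1 - D)) := by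
    have : A * (D * (B - 1)) ≤ A * (1 - D) := mul_le_mul_of_nonneg_left (by linarith) p1.le
    have : A * (1 - D) ≤ (F * D) * (1 - D) := mul_le_mul_of_nonneg_right (by linarith) (by linarith)
    linarith
  have := le_of_mul_le_mul_left h5 p2
  linarith

lemma hasDerivAt_rpow_add (s z : ℝ) (hz : 0 < 1 + z) :
    HasDerivAt (fun z => (1 + z) ^ s) (s * (1 + z) ^ (s - 1)) z := by
  have := ((hasDerivAt_id z).const_add 1).rpow_const (p := s) (Or.inl (by simpa using hz.ne'))
  simpa using this

lemma hasDerivAt_rpow_sub (s z : ℝ) (hz : 0 < 1 - z) :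
    HasDerivAt (fun z => (1 - z) ^ s) (-(s * (1 - z) ^ (s - 1))) z := by
  have := ((hasDerivAt_id z).const_sub 1).rpow_const (p := s) (Or.inl (by simpa using hz.ne'))
  simpa using this

lemma hasDerivAt_rpow_add' (s r z : ℝ) (hz : 0 < 1 + r * z) :
    HasDerivAt (fun z => (1 + r * z) ^ s) (r * (s * (1 + r * z) ^ (s - 1))) z := by
  have := ((((hasDerivAt_id z).const_mul r).const_add 1)).rpow_const (p := s) (Or.inl (by simpa using hz.ne'))
  refine this.congr_deriv ?_
  simp; ring

lemma hasDerivAt_rpow_sub' (s r z : ℝ) (hz : 0 < 1 - r * z) :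
    HasDerivAt (fun z => (1 - r * z) ^ s) (-(r * (s * (1 - r * z) ^ (s - 1)))) z := by
  have := ((((hasDerivAt_id z).const_mul r).const_sub 1)).rpow_const (p := s) (Or.inl (by simpa using hz.ne'))
  refine this.congr_deriv ?_
  simp; ring

lemma rpow_sum_mono_base {s z y : ℝ} (hs : s ≤ 0) (hz0 : 0 ≤ z) (hzy : z ≤ y) (hy : y < 1) :
    (1 + z) ^ s + (1 - z) ^ s ≤ (1 + y) ^ s + (1 - y) ^ s := by
  have hD : ∀ x ∈ Set.Ico (0:ℝ) 1, HasDerivAt (fun x => (1 + x) ^ s + (1 - x) ^ s)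
      (s * (1 + x) ^ (s - 1) + -(s * (1 - x) ^ (s - 1))) x := by
    intro x hx
    exact (hasDerivAt_rpow_add s x (by linarith [hx.1])).add (hasDerivAt_rpow_sub s x (by linarith [hx.2]))
  have hm : MonotoneOn (fun x => (1 + x) ^ s + (1 - x) ^ s) (Set.Ico (0:ℝ) 1) := by
    apply monotoneOn_of_deriv_nonneg (convex_Ico 0 1)
    · exact fun x hx => (hD x hx).continuousAt.continuousWithinAt
    · exact fun x hx => (hD x (interior_subset hx)).differentiableAt.differentiableWithinAt
    · intro x hx
      have hx := interior_subset hx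
      rw [(hD x hx).deriv]
      have : (1 + x) ^ (s - 1) ≤ (1 - x) ^ (s - 1) :=
        Real.rpow_le_rpow_of_nonpos (by linarith [hx.2]) (by linarith [hx.1]) (by linarith)
      nlinarith
  exact hm ⟨hz0, hzy.trans_lt hy⟩ ⟨hz0.trans hzy, hy⟩ hzy

lemma bonami_aux {p q r : ℝ} (hq : 1 < q) (hqp : q ≤ p) (hp2 : p ≤ 2) (hr0 : 0 ≤ r)
    (hr : r ^ 2 * (p - 1) = q - 1) {y : ℝ} (hy0 : 0 ≤ y) (hy1 : y ≤ 1) :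
    0 ≤ (p / q) * ((1 + y) ^ q + (1 - y) ^ q - 2) - ((1 + r * y) ^ p + (1 - r * y) ^ p - 2) := by
  have hr1 : r ≤ 1 := r_le_one hq hqp hr
  have hp : 1 < p := by linarith
  have hb : ∀ x ∈ Set.Ico (0:ℝ) 1, 0 < 1 + x ∧ 0 < 1 - x ∧ 0 < 1 + r * x ∧ 0 < 1 - r * x ∧
      0 ≤ r * x ∧ r * x ≤ x ∧ r * x < 1 := by
    intro x hx
    have h1 : 0 ≤ r * x := mul_nonneg hr0 hx.1
    have h2 : r * x ≤ x := by nlinarith [hx.1]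
    refine ⟨by linarith [hx.1], by linarith [hx.2], by linarith, by linarith [hx.2], h1, h2, by linarith [hx.2]⟩
  set D1 : ℝ → ℝ := fun x => p * ((1 + x) ^ (q - 1) - (1 - x) ^ (q - 1)) -
    p * r * ((1 + r * x) ^ (p - 1) - (1 - r * x) ^ (p - 1)) with hD1
  have hD1d : ∀ x ∈ Set.Ico (0:ℝ) 1, HasDerivAt D1 (p * (q - 1) *
      (((1 + x) ^ (q - 2) + (1 - x) ^ (q - 2)) - ((1 + r * x) ^ (p - 2) + (1 - r * x) ^ (p - 2)))) x := by
    intro x hx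
    obtain ⟨h1, h2, h3, h4, -⟩ := hb x hx
    have := (((hasDerivAt_rpow_add (q-1) x h1).sub (hasDerivAt_rpow_sub (q-1) x h2)).const_mul p).sub
      (((hasDerivAt_rpow_add' (p-1) r x h3).sub (hasDerivAt_rpow_sub' (p-1) r x h4)).const_mul (p * r))
    refine this.congr_deriv ?_
    rw [show q - 1 - 1 = q - 2 by ring, show p - 1 - 1 = p - 2 by ring]
    linear_combination (-(p * ((1 + r * x) ^ (p - 2) + (1 - r * x) ^ (p - 2)))) * hr
  have hD1nn : ∀ x ∈ Set.Ico (0:ℝ) 1, 0 ≤ D1 x := by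
    intro x hx
    have hm : MonotoneOn D1 (Set.Ico (0:ℝ) 1) := by
      apply monotoneOn_of_deriv_nonneg (convex_Ico 0 1)
      · exact fun x hx => (hD1d x hx).continuousAt.continuousWithinAt
      · exact fun x hx => (hD1d x (interior_subset hx)).differentiableAt.differentiableWithinAt
      · intro x hx
        have hx := interior_subset hx
        obtain ⟨h1, h2, h3, h4, h5, h6, h7⟩ := hb x hx
        rw [(hD1d x hx).deriv]
        have a1 := rpow_sum_mono_base (s := q - 2) (by linarith) h5 h6 hx.2
        have a2 := rpow_sum_mono_exp (s := p - 2) (s' := q - 2) h5 h7 (by linarith) (by linarith)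
        have : 0 ≤ p * (q - 1) := by nlinarith
        exact mul_nonneg this (by linarith)
    have := hm ⟨le_rfl, one_pos⟩ hx hx.1
    simpa [hD1] using this
  set D0 : ℝ → ℝ := fun y => (p / q) * ((1 + y) ^ q + (1 - y) ^ q - 2) -
    ((1 + r * y) ^ p + (1 - r * y) ^ p - 2) with hD0
  have hD0d : ∀ x ∈ Set.Ico (0:ℝ) 1, HasDerivAt D0 (D1 x) x := by
    intro x hx
    obtain ⟨h1, h2, h3, h4, -⟩ := hb x hx
    have := ((((hasDerivAt_rpow_add q x h1).add (hasDerivAt_rpow_sub q x h2)).sub_const 2).const_mul (p / q)).sub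
      (((hasDerivAt_rpow_add' p r x h3).add (hasDerivAt_rpow_sub' p r x h4)).sub_const 2)
    refine this.congr_deriv ?_
    simp only [hD1]
    field_simp
    ring
  have hcont : Continuous D0 := by
    have c : ∀ (l s : ℝ), 0 < s → Continuous fun y : ℝ => (1 + l * y) ^ s := fun l s hs =>
      (continuous_const.add (continuous_const.mul continuous_id)).rpow_const fun _ => Or.inr hs.le
    have c1 := c 1 q (by linarith)
    have c2 := c (-1) q (by linarith)
    have c3 := c r p (by linarith)
    have c4 := c (-r) p (by linarith)
    simp only [one_mul, neg_mul, ← sub_eq_add_neg] at c1 c2 c3 c4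
    fun_prop
  have hm : MonotoneOn D0 (Set.Icc (0:ℝ) 1) := by
    apply monotoneOn_of_deriv_nonneg (convex_Icc 0 1) hcont.continuousOn
    · rw [interior_Icc]
      exact fun x hx => (hD0d x ⟨hx.1.le, hx.2⟩).differentiableAt.differentiableWithinAt
    · rw [interior_Icc]
      intro x hx
      rw [(hD0d x ⟨hx.1.le, hx.2⟩).deriv]
      exact hD1nn x ⟨hx.1.le, hx.2⟩
  have := hm ⟨le_rfl, zero_le_one⟩ ⟨hy0, hy1⟩ hy0
  have e : D0 0 = 0 := by simp [hD0]; norm_num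
  rw [e] at this
  exact this

/-- normalized two point inequality -/
lemma bonami_norm {p q r : ℝ} (hq : 1 < q) (hqp : q ≤ p) (hp2 : p ≤ 2) (hr0 : 0 ≤ r)
    (hr : r ^ 2 * (p - 1) = q - 1) {y : ℝ} (hy0 : 0 ≤ y) (hy1 : y ≤ 1) :
    ((1 + r * y) ^ p + (1 - r * y) ^ p) / 2 ≤ (((1 + y) ^ q + (1 - y) ^ q) / 2) ^ (p / q) := by
  have h := bonami_aux hq hqp hp2 hr0 hr hy0 hy1
  have hq0 : 0 < q := by linarith
  set E := ((1 + y) ^ q + (1 - y) ^ q) / 2 with hE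
  have hE0 : 0 ≤ E := by
    have : 0 ≤ (1 - y) ^ q := Real.rpow_nonneg (by linarith) _
    have : 0 ≤ (1 + y) ^ q := Real.rpow_nonneg (by linarith) _
    positivity
  have hB := one_add_mul_self_le_rpow_one_add (s := E - 1) (by linarith) (p := p / q)
    (by rw [le_div_iff₀ hq0]; linarith)
  rw [show 1 + (E - 1) = E by ring] at hB
  have : (1 + y) ^ q + (1 - y) ^ q = 2 * E := by rw [hE]; ring
  rw [this] at h
  linarith

/-- two point inequality for nonnegative reals -/
lemma bonami_nonneg {p q r : ℝ} (hq : 1 < q) (hqp : q ≤ p) (hp2 : p ≤ 2) (hr0 : 0 ≤ r)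
    (hr : r ^ 2 * (p - 1) = q - 1) {a b : ℝ} (hb : 0 ≤ b) (hba : b ≤ a) :
    (((1 + r) / 2 * a + (1 - r) / 2 * b) ^ p + ((1 - r) / 2 * a + (1 + r) / 2 * b) ^ p) / 2 ≤
      ((a ^ q + b ^ q) / 2) ^ (p / q) := by
  have hq0 : 0 < q := by linarith
  have hp0 : 0 < p := by linarith
  rcases (hb.trans hba).eq_or_lt with h0 | h0
  · have hb0 : b = 0 := by linarith
    subst hb0; subst h0
    simp [hp0.ne', hq0.ne']
  set m := (a + b) / 2 with hm
  have hm0 : 0 < m := by positivity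
  set y := (a - b) / (a + b) with hy
  have hab : 0 < a + b := by positivity
  have hy0 : 0 ≤ y := div_nonneg (by linarith) hab.le
  have hy1 : y ≤ 1 := by rw [hy, div_le_one hab]; linarith
  have hr1 : r ≤ 1 := r_le_one hq hqp hr
  have hry : r * y ≤ 1 := by nlinarith
  have hry0 : 0 ≤ r * y := by positivity
  have e1 : (1 + r) / 2 * a + (1 - r) / 2 * b = m * (1 + r * y) := by
    rw [hm, hy]; field_simp; ring
  have e2 : (1 - r) / 2 * a + (1 + r) / 2 * b = m * (1 - r * y) := by
    rw [hm, hy]; field_simp; ring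
  have e3 : a = m * (1 + y) := by rw [hm, hy]; field_simp; ring
  have e4 : b = m * (1 - y) := by rw [hm, hy]; field_simp; ring
  rw [e1, e2]
  have e5 : a ^ q = m ^ q * (1 + y) ^ q := by
    conv_lhs => rw [e3]
    exact Real.mul_rpow hm0.le (by linarith)
  have e6 : b ^ q = m ^ q * (1 - y) ^ q := by
    conv_lhs => rw [e4]
    exact Real.mul_rpow hm0.le (by linarith)
  rw [e5, e6, Real.mul_rpow hm0.le (by linarith), Real.mul_rpow hm0.le (by linarith), ← mul_add,
    ← mul_add, mul_div_assoc, mul_div_assoc]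
  have h1 : 0 ≤ (1 - y) ^ q := Real.rpow_nonneg (by linarith) _
  have h2 : 0 ≤ (1 + y) ^ q := Real.rpow_nonneg (by linarith) _
  rw [Real.mul_rpow (by positivity) (by positivity), ← Real.rpow_mul hm0.le, mul_div_cancel₀ _ hq0.ne']
  exact mul_le_mul_of_nonneg_left (bonami_norm hq hqp hp2 hr0 hr hy0 hy1) (by positivity)

/-- two point inequality for complex numbers -/
lemma bonami_complex {p q r : ℝ} (hq : 1 < q) (hqp : q ≤ p) (hp2 : p ≤ 2) (hr0 : 0 ≤ r)
    (hr : r ^ 2 * (p - 1) = q - 1) (x y : ℂ) :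
    (‖(1 + (r:ℂ)) / 2 * x + (1 - (r:ℂ)) / 2 * y‖ ^ p +
      ‖(1 - (r:ℂ)) / 2 * x + (1 + (r:ℂ)) / 2 * y‖ ^ p) / 2 ≤
      ((‖x‖ ^ q + ‖y‖ ^ q) / 2) ^ (p / q) := by
  have hp0 : 0 ≤ p := by linarith
  have hr1 : r ≤ 1 := r_le_one hq hqp hr
  have n1 : ‖(1 + (r:ℂ)) / 2‖ = (1 + r) / 2 := by
    rw [show (1 + (r:ℂ)) / 2 = (((1 + r) / 2 : ℝ) : ℂ) by push_cast; ring, Complex.norm_real,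
      Real.norm_of_nonneg (by linarith)]
  have n2 : ‖(1 - (r:ℂ)) / 2‖ = (1 - r) / 2 := by
    rw [show (1 - (r:ℂ)) / 2 = (((1 - r) / 2 : ℝ) : ℂ) by push_cast; ring, Complex.norm_real,
      Real.norm_of_nonneg (by linarith)]
  have h1 : ‖(1 + (r:ℂ)) / 2 * x + (1 - (r:ℂ)) / 2 * y‖ ≤ (1 + r) / 2 * ‖x‖ + (1 - r) / 2 * ‖y‖ := by
    refine (norm_add_le _ _).trans ?_
    rw [norm_mul, norm_mul, n1, n2]
  have h2 : ‖(1 - (r:ℂ)) / 2 * x + (1 + (r:ℂ)) / 2 * y‖ ≤ (1 - r) / 2 * ‖x‖ + (1 + r) / 2 * ‖y‖ := by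
    refine (norm_add_le _ _).trans ?_
    rw [norm_mul, norm_mul, n1, n2]
  have h3 := Real.rpow_le_rpow (norm_nonneg _) h1 hp0
  have h4 := Real.rpow_le_rpow (norm_nonneg _) h2 hp0
  rcases le_total ‖y‖ ‖x‖ with h | h
  · have := bonami_nonneg hq hqp hp2 hr0 hr (norm_nonneg y) h
    linarith
  · have := bonami_nonneg hq hqp hp2 hr0 hr (norm_nonneg x) h
    rw [add_comm (‖y‖ ^ q), add_comm ((1 + r) / 2 * ‖y‖), add_comm ((1 - r) / 2 * ‖y‖)] at this
    linarith
end

section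
/-- one coordinate kernel -/
def kk (w : ℂ) (a b : Bool) : ℂ := if a = b then (1 + w) / 2 else (1 - w) / 2

/-- product kernel -/
def KK {n : ℕ} (w : ℂ) (ε δ : Fin n → Bool) : ℂ := ∏ i, kk w (ε i) (δ i)

/-- noise operator -/
def TT {n : ℕ} (w : ℂ) (f : (Fin n → Bool) → ℂ) (ε : Fin n → Bool) : ℂ := ∑ δ, KK w ε δ * f δ

lemma kk_eq (w : ℂ) (a b : Bool) : kk w a b = (1 + w * sgn a * sgn b) / 2 := by
  cases a <;> cases b <;> simp [kk, sgn] <;> ring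

lemma kk_symm (w : ℂ) (a b : Bool) : kk w a b = kk w b a := by
  simp [kk, eq_comm]

lemma KK_symm {n : ℕ} (w : ℂ) (ε δ : Fin n → Bool) : KK w ε δ = KK w δ ε := by
  unfold KK; exact Finset.prod_congr rfl fun i _ => kk_symm _ _ _

lemma kk_comp (w v : ℂ) (a c : Bool) : ∑ b, kk w a b * kk v b c = kk (w * v) a c := by
  cases a <;> cases c <;> simp [kk] <;> ring

lemma KK_comp {n : ℕ} (w v : ℂ) (ε δ : Fin n → Bool) :
    ∑ γ, KK w ε γ * KK v γ δ = KK (w * v) ε δ := by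
  unfold KK
  simp_rw [← Finset.prod_mul_distrib, ← kk_comp w v]
  rw [Fintype.prod_sum]

lemma TT_comp {n : ℕ} (w v : ℂ) (f : (Fin n → Bool) → ℂ) : TT w (TT v f) = TT (w * v) f := by
  funext ε
  unfold TT
  simp_rw [← KK_comp w v ε, Finset.sum_mul, Finset.mul_sum]
  rw [Finset.sum_comm]
  simp_rw [mul_assoc]

lemma KK_one {n : ℕ} (ε δ : Fin n → Bool) : KK 1 ε δ = if ε = δ then 1 else 0 := by
  unfold KK
  split_ifs with h
  · subst h; simp [kk]
  · obtain ⟨i, hi⟩ := Function.ne_iff.mp h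
    exact Finset.prod_eq_zero (Finset.mem_univ i) (by simp [kk, hi])

lemma TT_one {n : ℕ} (f : (Fin n → Bool) → ℂ) : TT 1 f = f := by
  funext ε
  simp [TT, KK_one]

lemma KK_expand {n : ℕ} (w : ℂ) (ε δ : Fin n → Bool) :
    KK w ε δ = ((2:ℂ) ^ n)⁻¹ * ∑ A : Finset (Fin n), w ^ A.card * walsh A ε * walsh A δ := by
  unfold KK
  simp_rw [kk_eq, Finset.prod_div_distrib]
  rw [Finset.prod_one_add]
  simp only [Finset.prod_mul_distrib, Finset.prod_const, Finset.card_univ, Fintype.card_fin,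
    Finset.powerset_univ, walsh, Complex.ofReal_prod]
  rw [div_eq_inv_mul]

lemma TT_expand {n : ℕ} (w : ℂ) (f : (Fin n → Bool) → ℂ) (ε : Fin n → Bool) :
    TT w f ε = ∑ A : Finset (Fin n), w ^ A.card * (walsh A ε * coeff f A) := by
  unfold TT coeff
  simp_rw [KK_expand, Finset.mul_sum, Finset.sum_mul]
  rw [Finset.sum_comm]
  refine Finset.sum_congr rfl fun A _ => ?_
  simp only [Complex.real_smul, Finset.mul_sum]
  refine Finset.sum_congr rfl fun δ _ => ?_
  push_cast
  ring

lemma TT_succ {n : ℕ} (w : ℂ) (f : (Fin (n+1) → Bool) → ℂ) (a : Bool) (ε : Fin n → Bool) :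
    TT w f (Fin.cons a ε) = kk w a true * TT w (fun δ => f (Fin.cons true δ)) ε +
      kk w a false * TT w (fun δ => f (Fin.cons false δ)) ε := by
  unfold TT
  rw [← (Fin.consEquiv (fun _ => Bool)).sum_comp, Fintype.sum_prod_type]
  simp [KK, Fin.prod_univ_succ, Fin.consEquiv, Finset.mul_sum, mul_assoc]

lemma sum_cube_succ {n : ℕ} (g : (Fin (n+1) → Bool) → ℝ) :
    ∑ ε, g ε = ∑ ε, (g (Fin.cons true ε) + g (Fin.cons false ε)) := by
  rw [← (Fin.consEquiv (fun _ => Bool)).sum_comp, Fintype.sum_prod_type]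
  simp [Fin.consEquiv, Finset.sum_add_distrib]

/-- unnormalised-power mean -/
def EE {n : ℕ} (p : ℝ) (f : (Fin n → Bool) → ℂ) : ℝ := (2 ^ n : ℝ)⁻¹ * ∑ ε : Fin n → Bool, ‖f ε‖ ^ p

lemma EE_nonneg {n : ℕ} (p : ℝ) (f : (Fin n → Bool) → ℂ) : 0 ≤ EE p f := by
  unfold EE; positivity

lemma EE_succ {n : ℕ} (p : ℝ) (f : (Fin (n+1) → Bool) → ℂ) :
    EE p f = (EE p (fun δ => f (Fin.cons true δ)) + EE p (fun δ => f (Fin.cons false δ))) / 2 := by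
  unfold EE
  rw [sum_cube_succ, Finset.sum_add_distrib, pow_succ]
  ring

/-- two point inequality -/
def TwoPt (p q : ℝ) (w : ℂ) : Prop := ∀ x y : ℂ,
  (‖(1 + w) / 2 * x + (1 - w) / 2 * y‖ ^ p + ‖(1 - w) / 2 * x + (1 + w) / 2 * y‖ ^ p) / 2 ≤
    ((‖x‖ ^ q + ‖y‖ ^ q) / 2) ^ (p / q)

lemma mink {n : ℕ} {s : ℝ} (hs : 1 ≤ s) (u v : (Fin n → Bool) → ℝ) (hu : ∀ ε, 0 ≤ u ε)
    (hv : ∀ ε, 0 ≤ v ε) (U V : ℝ) (hU0 : 0 ≤ U) (hV0 : 0 ≤ V)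
    (hU : (2 ^ n : ℝ)⁻¹ * ∑ ε, u ε ^ s ≤ U ^ s)
    (hV : (2 ^ n : ℝ)⁻¹ * ∑ ε, v ε ^ s ≤ V ^ s) :
    (2 ^ n : ℝ)⁻¹ * ∑ ε, ((u ε + v ε) / 2) ^ s ≤ ((U + V) / 2) ^ s := by
  have hs0 : 0 < s := by linarith
  have h := Real.Lp_add_le_of_nonneg (s := Finset.univ) hs (f := u) (g := v) (fun i _ => hu i) (fun i _ => hv i)
  have c0 : 0 < (2 ^ n : ℝ)⁻¹ := by positivity
  set c := (2 ^ n : ℝ)⁻¹ with hc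
  have nu : 0 ≤ ∑ ε, u ε ^ s := Finset.sum_nonneg fun i _ => Real.rpow_nonneg (hu i) _
  have nv : 0 ≤ ∑ ε, v ε ^ s := Finset.sum_nonneg fun i _ => Real.rpow_nonneg (hv i) _
  have nuv : 0 ≤ ∑ ε, (u ε + v ε) ^ s := Finset.sum_nonneg fun i _ => Real.rpow_nonneg (add_nonneg (hu i) (hv i)) _
  have root : ∀ (S U : ℝ), 0 ≤ S → 0 ≤ U → c * S ≤ U ^ s → c ^ (1/s) * S ^ (1/s) ≤ U := by
    intro S U hS hU h
    rw [← Real.mul_rpow c0.le hS]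
    calc _ ≤ (U ^ s) ^ (1/s) := Real.rpow_le_rpow (by positivity) h (by positivity)
      _ = U := by rw [← Real.rpow_mul hU, mul_one_div_cancel hs0.ne', Real.rpow_one]
  have h1 := root _ _ nu hU0 hU
  have h2 := root _ _ nv hV0 hV
  have h3 : c ^ (1/s) * (∑ ε, (u ε + v ε) ^ s) ^ (1/s) ≤ U + V := by
    have := mul_le_mul_of_nonneg_left h (Real.rpow_nonneg c0.le (1/s))
    linarith
  rw [← Real.mul_rpow c0.le nuv] at h3
  have h4 : c * ∑ ε, (u ε + v ε) ^ s ≤ (U + V) ^ s := by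
    have := Real.rpow_le_rpow (by positivity) h3 hs0.le
    rwa [← Real.rpow_mul (by positivity), one_div_mul_cancel hs0.ne', Real.rpow_one] at this
  have e : ∀ ε, ((u ε + v ε) / 2) ^ s = (u ε + v ε) ^ s / 2 ^ s := fun ε =>
    Real.div_rpow (add_nonneg (hu ε) (hv ε)) (by norm_num) _
  simp_rw [e]
  rw [Real.div_rpow (by positivity) (by norm_num), ← Finset.sum_div, ← mul_div_assoc]
  gcongr

lemma tensor {p q : ℝ} {w : ℂ} (hq : 0 < q) (hqp : q ≤ p) (h : TwoPt p q w) (n : ℕ) :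
    ∀ f : (Fin n → Bool) → ℂ, EE p (TT w f) ≤ (EE q f) ^ (p / q) := by
  have hp0 : 0 < p := by linarith
  induction n with
  | zero =>
    intro f
    have : TT w f = f := by
      funext ε
      simp only [TT, KK, Fintype.sum_unique, Finset.univ_eq_empty, Finset.prod_empty, one_mul]
      exact congrArg f (Subsingleton.elim _ _)
    rw [this]
    simp only [EE, pow_zero, inv_one, one_mul, Fintype.sum_unique]
    rw [← Real.rpow_mul (norm_nonneg _), mul_div_cancel₀ _ hq.ne']
  | succ n ih =>
    intro f
    set f1 : (Fin n → Bool) → ℂ := fun δ => f (Fin.cons true δ) with hf1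
    set f0 : (Fin n → Bool) → ℂ := fun δ => f (Fin.cons false δ) with hf0
    have s1 : 1 ≤ p / q := by rw [le_div_iff₀ hq]; linarith
    have key := mink s1 (fun ε => ‖TT w f1 ε‖ ^ q) (fun ε => ‖TT w f0 ε‖ ^ q)
      (fun ε => by positivity) (fun ε => by positivity) (EE q f1) (EE q f0) (EE_nonneg _ _)
      (EE_nonneg _ _)
      (by simp_rw [← Real.rpow_mul (norm_nonneg _), mul_div_cancel₀ _ hq.ne']; exact ih f1)
      (by simp_rw [← Real.rpow_mul (norm_nonneg _), mul_div_cancel₀ _ hq.ne']; exact ih f0)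
    rw [EE_succ q f]
    refine le_trans ?_ key
    rw [EE_succ p]
    unfold EE
    rw [← mul_add, mul_div_assoc, ← Finset.sum_add_distrib, Finset.sum_div]
    refine mul_le_mul_of_nonneg_left (Finset.sum_le_sum fun ε _ => ?_) (by positivity)
    have := h (TT w f1 ε) (TT w f0 ε)
    beta_reduce
    rw [TT_succ, TT_succ]
    simpa [kk] using this

lemma lpNorm_eq {n : ℕ} (p : ℝ) (f : (Fin n → Bool) → ℂ) : lpNorm p f = EE p f ^ (1 / p) := rfl

/-- contraction property -/
def Contr (p q : ℝ) (w : ℂ) : Prop := ∀ (n : ℕ) (f : (Fin n → Bool) → ℂ),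
  lpNorm p (TT w f) ≤ lpNorm q f

lemma contr_of_twoPt {p q : ℝ} {w : ℂ} (hq : 0 < q) (hqp : q ≤ p) (h : TwoPt p q w) :
    Contr p q w := by
  intro n f
  have hp0 : 0 < p := by linarith
  rw [lpNorm_eq, lpNorm_eq]
  calc _ ≤ (EE q f ^ (p / q)) ^ (1 / p) :=
        Real.rpow_le_rpow (EE_nonneg _ _) (tensor hq hqp h n f) (by positivity)
    _ = _ := by
        rw [← Real.rpow_mul (EE_nonneg _ _)]; congr 1; field_simp

lemma Contr.comp {p q r : ℝ} {w v : ℂ} (h1 : Contr p r w) (h2 : Contr r q v) :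
    Contr p q (w * v) := by
  intro n f
  rw [← TT_comp]
  exact (h1 n _).trans (h2 n f)

/-- Hölder on the cube -/
lemma holder {n : ℕ} {p q : ℝ} (hpq : p.HolderConjugate q) (f g : (Fin n → Bool) → ℂ) :
    ‖(2 ^ n : ℂ)⁻¹ * ∑ ε, f ε * g ε‖ ≤ lpNorm p f * lpNorm q g := by
  have c0 : 0 < (2 ^ n : ℝ)⁻¹ := by positivity
  have h := Real.inner_le_Lp_mul_Lq_of_nonneg Finset.univ hpq (f := fun ε => ‖f ε‖)
    (g := fun ε => ‖g ε‖) (fun _ _ => norm_nonneg _) (fun _ _ => norm_nonneg _)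
  have e : lpNorm p f * lpNorm q g = (2 ^ n : ℝ)⁻¹ *
      ((∑ ε, ‖f ε‖ ^ p) ^ (1/p) * (∑ ε, ‖g ε‖ ^ q) ^ (1/q)) := by
    unfold lpNorm
    rw [Real.mul_rpow c0.le (by positivity), Real.mul_rpow c0.le (by positivity)]
    have : (2 ^ n : ℝ)⁻¹ = ((2 ^ n : ℝ)⁻¹) ^ (1/p) * ((2 ^ n : ℝ)⁻¹) ^ (1/q) := by
      rw [← Real.rpow_add c0]
      have := hpq.inv_add_inv_eq_one
      rw [one_div, one_div, this, Real.rpow_one]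
    conv_rhs => rw [this]
    ring
  rw [e, norm_mul]
  have : ‖(2 ^ n : ℂ)⁻¹‖ = (2 ^ n : ℝ)⁻¹ := by simp
  rw [this]
  refine mul_le_mul_of_nonneg_left ?_ c0.le
  refine (norm_sum_le _ _).trans ?_
  simpa [norm_mul] using h

lemma TT_adj {n : ℕ} (w : ℂ) (f g : (Fin n → Bool) → ℂ) :
    ∑ ε, TT w f ε * g ε = ∑ ε, f ε * TT w g ε := by
  unfold TT
  simp_rw [Finset.sum_mul, Finset.mul_sum]
  rw [Finset.sum_comm]
  refine Finset.sum_congr rfl fun δ _ => Finset.sum_congr rfl fun ε _ => ?_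
  rw [KK_symm]; ring

lemma Contr.dual {p q p' q' : ℝ} {w : ℂ} (hp : p.HolderConjugate p') (hq : q.HolderConjugate q')
    (h : Contr p q w) : Contr q' p' w := by
  intro n g
  have hq'1 : 1 < q' := hq.symm.lt
  have hq'0 : 0 < q' := by linarith
  -- test function
  set u := TT w g with hu
  set f : (Fin n → Bool) → ℂ := fun ε => (starRingEnd ℂ) (u ε) * ((‖u ε‖ ^ (q' - 2) : ℝ) : ℂ) with hf
  have hfu : ∀ ε, f ε * u ε = ((‖u ε‖ ^ q' : ℝ) : ℂ) := by
    intro ε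
    simp only [hf]
    rcases eq_or_ne (u ε) 0 with h0 | h0
    · simp [h0, hq'0.ne']
    · have : 0 < ‖u ε‖ := norm_pos_iff.mpr h0
      rw [mul_right_comm, Complex.conj_mul']
      norm_cast
      rw [← Real.rpow_natCast, ← Real.rpow_add this]
      congr 1; push_cast; ring
  have hfn : ∀ ε, ‖f ε‖ ^ q = ‖u ε‖ ^ q' := by
    intro ε
    rcases eq_or_ne (u ε) 0 with h0 | h0
    · simp [hf, h0, hq'0.ne', hq.pos.ne']
    · have h1 : 0 < ‖u ε‖ := norm_pos_iff.mpr h0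
      have : ‖f ε‖ = ‖u ε‖ ^ (q' - 1) := by
        simp only [hf, norm_mul, RCLike.norm_conj, Complex.norm_real]
        rw [Real.norm_of_nonneg (by positivity)]
        nth_rewrite 1 [← Real.rpow_one ‖u ε‖]
        rw [← Real.rpow_add h1]; congr 1; ring
      rw [this, ← Real.rpow_mul h1.le]
      congr 1
      have := hq.mul_eq_add
      linarith
  have hE : lpNorm q f = EE q' u ^ (1 / q) := by
    rw [lpNorm_eq]; unfold EE; simp_rw [hfn]
  have h1 := holder hp (TT w f) g
  rw [TT_adj, ← hu] at h1
  simp_rw [hfu] at h1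
  have h2 : ‖(2 ^ n : ℂ)⁻¹ * ∑ ε, ((‖u ε‖ ^ q' : ℝ) : ℂ)‖ = EE q' u := by
    have : (2 ^ n : ℂ)⁻¹ * ∑ ε, ((‖u ε‖ ^ q' : ℝ) : ℂ) = ((EE q' u : ℝ) : ℂ) := by
      unfold EE; push_cast; rfl
    rw [this, Complex.norm_real, Real.norm_of_nonneg (EE_nonneg _ _)]
  rw [h2] at h1
  have g0 : 0 ≤ lpNorm p' g := by rw [lpNorm_eq]; exact Real.rpow_nonneg (EE_nonneg _ _) _
  have h3 : EE q' u ≤ EE q' u ^ (1/q) * lpNorm p' g := by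
    rw [← hE]
    exact h1.trans (mul_le_mul_of_nonneg_right (h n f) g0)
  rw [lpNorm_eq]
  rcases (EE_nonneg q' u).eq_or_lt with h0 | h0
  · rw [← h0, Real.zero_rpow (by positivity)]; exact g0
  · have e : EE q' u = EE q' u ^ (1/q) * EE q' u ^ (1/q') := by
      rw [← Real.rpow_add h0, one_div, one_div, hq.inv_add_inv_eq_one, Real.rpow_one]
    refine le_of_mul_le_mul_left ?_ (Real.rpow_pos_of_pos h0 (1/q))
    exact e.symm.le.trans h3
end

section
lemma twoPt_lens {p : ℝ} (hp : 2 ≤ p) {ζ : ℂ} (hζ : ζ.re = (1 - 2/p) * ‖ζ‖) :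
    TwoPt p p ((ζ - 1) / (ζ + 1)) := by
  intro x y
  have hp0 : 0 < p := by linarith
  have hre : 0 ≤ ζ.re := by
    rw [hζ]
    have : 2 / p ≤ 1 := by rw [div_le_one hp0]; exact hp
    exact mul_nonneg (by linarith) (norm_nonneg _)
  have hne : 1 + ζ ≠ 0 := by
    intro h
    have := congrArg Complex.re h
    simp at this
    linarith
  have hne' : ζ + 1 ≠ 0 := by rwa [add_comm]
  have e1 : (1 + (ζ - 1) / (ζ + 1)) / 2 = ζ / (1 + ζ) := by field_simp; ring
  have e2 : (1 - (ζ - 1) / (ζ + 1)) / 2 = 1 / (1 + ζ) := by field_simp; ring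
  rw [e1, e2, div_self hp0.ne', Real.rpow_one]
  have h := twopoint_ge2 hp hζ x y
  have e3 : ζ / (1 + ζ) * x + 1 / (1 + ζ) * y = (ζ * x + y) / (1 + ζ) := by ring
  have e4 : 1 / (1 + ζ) * x + ζ / (1 + ζ) * y = (x + ζ * y) / (1 + ζ) := by ring
  have hn : 0 < ‖1 + ζ‖ := norm_pos_iff.mpr hne
  rw [e3, e4, norm_div, norm_div, Real.div_rpow (norm_nonneg _) hn.le,
    Real.div_rpow (norm_nonneg _) hn.le, ← add_div]
  have : 0 < ‖1 + ζ‖ ^ p := by positivity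
  gcongr
  rw [div_le_iff₀ this]
  linarith

lemma lens_contr {p : ℝ} (hp : 1 < p) {ζ : ℂ} (hζ : ζ.re = |1 - 2/p| * ‖ζ‖) :
    Contr p p ((ζ - 1) / (ζ + 1)) := by
  have hp0 : 0 < p := by linarith
  rcases le_total 2 p with h | h
  · have : 2 / p ≤ 1 := by rw [div_le_one hp0]; exact h
    rw [abs_of_nonneg (by linarith)] at hζ
    exact contr_of_twoPt hp0 le_rfl (twoPt_lens h hζ)
  · have : 1 ≤ 2 / p := by rw [le_div_iff₀ hp0]; linarith
    rw [abs_of_nonpos (by linarith)] at hζ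
    have hc : p.HolderConjugate (Real.conjExponent p) := Real.HolderConjugate.conjExponent hp
    set p' := Real.conjExponent p with hp'
    have h2 : 2 ≤ p' := by
      rw [hp', Real.conjExponent, le_div_iff₀ (by linarith)]; linarith
    have h3 : 1 - 2 / p' = -(1 - 2 / p) := by
      have := hc.inv_add_inv_eq_one
      rw [div_eq_mul_inv, div_eq_mul_inv]; linarith
    have : Contr p' p' ((ζ - 1) / (ζ + 1)) :=
      contr_of_twoPt (by linarith) le_rfl (twoPt_lens h2 (by rw [h3]; exact hζ))
    exact this.dual hc.symm hc.symm

lemma bonami_contr {p q r : ℝ} (hq : 1 < q) (hqp : q ≤ p) (hp2 : p ≤ 2) (hr0 : 0 ≤ r)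
    (hr : r ^ 2 * (p - 1) = q - 1) : Contr p q (r : ℂ) :=
  contr_of_twoPt (by linarith) hqp (fun x y => bonami_complex hq hqp hp2 hr0 hr x y)

lemma bonami_contr_ge {p q r : ℝ} (hq : 2 ≤ q) (hqp : q ≤ p) (hr0 : 0 ≤ r)
    (hr : r ^ 2 * (p - 1) = q - 1) : Contr p q (r : ℂ) := by
  have hcp : p.HolderConjugate (Real.conjExponent p) := Real.HolderConjugate.conjExponent (by linarith)
  have hcq : q.HolderConjugate (Real.conjExponent q) := Real.HolderConjugate.conjExponent (by linarith)
  have ep : Real.conjExponent p = 1 + 1 / (p - 1) := by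
    have : p - 1 ≠ 0 := by linarith
    rw [Real.conjExponent]; field_simp; ring
  have eq : Real.conjExponent q = 1 + 1 / (q - 1) := by
    have : q - 1 ≠ 0 := by linarith
    rw [Real.conjExponent]; field_simp; ring
  have hp1 : 0 < p - 1 := by linarith
  have hq1 : 0 < q - 1 := by linarith
  have : Contr (Real.conjExponent q) (Real.conjExponent p) (r : ℂ) := by
    apply bonami_contr hcp.symm.lt
    · rw [ep, eq]
      have := one_div_le_one_div_of_le hq1 (by linarith : q - 1 ≤ p - 1)
      linarith
    · rw [eq]
      have : 1 / (q - 1) ≤ 1 := by rw [div_le_one hq1]; linarith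
      linarith
    · exact hr0
    · rw [ep, eq, ← hr]
      have : r ≠ 0 := by rintro rfl; simp at hr; linarith
      field_simp
      ring
  exact this.dual hcq.symm hcp.symm

lemma hyper {p q r : ℝ} (hq : 1 < q) (hqp : q ≤ p) (hr0 : 0 ≤ r)
    (hr : r ^ 2 * (p - 1) = q - 1) : Contr p q (r : ℂ) := by
  rcases le_total p 2 with h | h
  · exact bonami_contr hq hqp h hr0 hr
  rcases le_total 2 q with h' | h'
  · exact bonami_contr_ge h' hqp hr0 hr
  have hp1 : 0 < p - 1 := by linarith
  have h1 : Contr 2 q ((Real.sqrt (q - 1) : ℝ) : ℂ) :=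
    bonami_contr hq h' le_rfl (Real.sqrt_nonneg _) (by rw [Real.sq_sqrt (by linarith)]; ring)
  have h2 : Contr p 2 ((Real.sqrt (1 / (p - 1)) : ℝ) : ℂ) :=
    bonami_contr_ge le_rfl h (Real.sqrt_nonneg _) (by
      rw [Real.sq_sqrt (by positivity)]; field_simp; ring)
  have h3 := h2.comp h1
  have : Real.sqrt (1 / (p - 1)) * Real.sqrt (q - 1) = r := by
    rw [← Real.sqrt_mul (by positivity), ← hr]
    rw [show 1 / (p - 1) * (r ^ 2 * (p - 1)) = r ^ 2 by field_simp, Real.sqrt_sq hr0]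
  rw [← Complex.ofReal_mul, this] at h3
  exact h3

/-- the boundary estimate -/
lemma boundary {p q r : ℝ} (hq : 1 < q) (hqp : q ≤ p) (hr0 : 0 ≤ r)
    (hr : r ^ 2 * (p - 1) = q - 1) {ζ : ℂ} (hζ : ζ.re = |1 - 2/p| * ‖ζ‖) (n : ℕ)
    (f : (Fin n → Bool) → ℂ) : lpNorm p (TT ((ζ - 1) / (ζ + 1) * r) f) ≤ lpNorm q f :=
  ((lens_contr (hq.trans_le hqp) hζ).comp (hyper hq hqp hr0 hr)) n f
end

section
open Filter Topology Asymptotics Complex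

lemma cpow_ne_one {b : ℝ} (hb1 : 1 ≤ b) (hb2 : b < 2) {s : ℂ} (hs : 0 ≤ s.re) (hs1 : s ≠ 1) :
    s ^ (b : ℂ) ≠ 1 := by
  intro h
  have hb0 : b ≠ 0 := by linarith
  have hs0 : s ≠ 0 := by
    rintro rfl
    rw [Complex.zero_cpow (by exact_mod_cast hb0)] at h
    exact zero_ne_one h
  have harg := Complex.abs_arg_le_pi_div_two_iff.mpr hs
  have h1 : Complex.log (s ^ (b : ℂ)) = Complex.log s * b := by
    rw [Complex.cpow_def_of_ne_zero hs0]
    have him : (Complex.log s * b).im = s.arg * b := by simp [Complex.log_im]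
    have hlt : |s.arg * b| < Real.pi := by
      rw [abs_mul, abs_of_nonneg (by linarith : (0:ℝ) ≤ b)]
      have := Real.pi_pos
      nlinarith [abs_nonneg s.arg]
    rw [abs_lt] at hlt
    exact Complex.log_exp (by rw [him]; exact hlt.1) (by rw [him]; exact hlt.2.le)
  rw [h, Complex.log_one] at h1
  have h2 : Complex.log s = 0 := by
    rcases mul_eq_zero.mp h1.symm with h | h
    · exact h
    · exact absurd (by exact_mod_cast h) hb0
  have := Complex.exp_log hs0
  rw [h2, Complex.exp_zero] at this
  exact hs1 this.symm

lemma PL {E ι : Type*} [NormedAddCommGroup E] [NormedSpace ℂ E] (S : Finset ι) (m : ι → ℕ)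
    (d : ℕ) (hm : ∀ i ∈ S, m i ≤ d) (v : ι → E) {b : ℝ} (hb1 : 1 ≤ b) (hb2 : b < 2) (C : ℝ)
    (hbd : ∀ ω : ℂ, ω.re = Real.cos (Real.pi / 2 * b) * ‖ω‖ →
      ‖∑ i ∈ S, ((ω + 1) / (ω - 1)) ^ m i • v i‖ ≤ C) {s : ℝ} (hs : 1 < s) :
    ‖∑ i ∈ S, (((s:ℂ) ^ (b:ℂ) + 1) / ((s:ℂ) ^ (b:ℂ) - 1)) ^ m i • v i‖ ≤
      ((s + 1) / (s - 1)) ^ d * C := by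
  have hb0 : 0 < b := by linarith
  set F : ℂ → ℂ := fun z => z ^ (b : ℂ) with hF
  set κ : ℂ → ℂ := dslope F 1 with hκ
  set H : ℂ → E := fun z => ∑ i ∈ S,
    ((F z + 1) ^ m i * (F z - 1) ^ (d - m i) * ((κ z * (z + 1))⁻¹) ^ d) • v i with hH
  have hFd : ∀ z : ℂ, 0 < z.re → DifferentiableAt ℂ F z := by
    intro z hz
    exact (differentiableAt_id).cpow_const (Or.inl hz)
  have hFc : ContinuousOn F {z | 0 ≤ z.re} := by
    intro z hz
    exact (Complex.continuousAt_cpow_const_of_re_pos (Or.inl hz) (by simpa using hb0)).continuousWithinAt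
  have hop : IsOpen {z : ℂ | 0 < z.re} := isOpen_lt continuous_const Complex.continuous_re
  have hn1 : {z : ℂ | 0 < z.re} ∈ 𝓝 (1:ℂ) := hop.mem_nhds (by simp)
  have hn2 : {z : ℂ | 0 ≤ z.re} ∈ 𝓝 (1:ℂ) := Filter.mem_of_superset hn1 fun z (hz : 0 < z.re) => hz.le
  have hκd : DifferentiableOn ℂ κ {z | 0 < z.re} :=
    (Complex.differentiableOn_dslope hn1).mpr fun z hz => (hFd z hz).differentiableWithinAt
  have hκc : ContinuousOn κ {z | 0 ≤ z.re} :=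
    (continuousOn_dslope hn2).mpr ⟨hFc, hFd 1 (by simp)⟩
  have hF1 : F 1 = 1 := by simp [hF]
  have hκne1 : ∀ z : ℂ, z ≠ 1 → κ z = (F z - 1) / (z - 1) := by
    intro z hz
    rw [hκ, dslope_of_ne _ hz, slope_def_field, hF1]
  have hκ0 : ∀ z : ℂ, 0 ≤ z.re → κ z ≠ 0 := by
    intro z hz
    by_cases h1 : z = 1
    · subst h1
      rw [hκ, dslope_same]
      have : HasDerivAt F ((b:ℂ) * 1 ^ ((b:ℂ) - 1) * 1) 1 :=
        (hasDerivAt_id (1:ℂ)).cpow_const (Or.inl (by simp))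
      rw [this.deriv]
      simp [hb0.ne']
    · rw [hκne1 z h1]
      exact div_ne_zero (sub_ne_zero.mpr (cpow_ne_one hb1 hb2 hz h1)) (sub_ne_zero.mpr h1)
  have hz1 : ∀ z : ℂ, 0 ≤ z.re → z + 1 ≠ 0 := by
    intro z hz h
    have := congrArg Complex.re h
    simp at this
    linarith
  have hcl : closure {z : ℂ | 0 < z.re} = {z | 0 ≤ z.re} := Complex.closure_setOf_lt_re 0
  have hHd : DiffContOnCl ℂ H {z | 0 < z.re} := by
    constructor
    · apply DifferentiableOn.fun_sum
      intro i _
      apply DifferentiableOn.smul_const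
      have hF' : DifferentiableOn ℂ F {z | 0 < z.re} := fun z hz => (hFd z hz).differentiableWithinAt
      refine ((hF'.add_const 1).pow _ |>.mul ((hF'.sub_const 1).pow _)).mul (DifferentiableOn.pow ?_ _)
      refine DifferentiableOn.inv (hκd.mul (differentiableOn_id.add_const 1)) ?_
      intro z hz
      have hz : 0 < z.re := hz
      exact mul_ne_zero (hκ0 z hz.le) (hz1 z hz.le)
    · rw [hcl]
      apply continuousOn_finset_sum
      intro i _
      refine ContinuousOn.smul ?_ continuousOn_const
      refine (((hFc.add continuousOn_const).pow _).mul ((hFc.sub continuousOn_const).pow _)).mul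
        (ContinuousOn.pow ?_ _)
      refine ContinuousOn.inv₀ (hκc.mul (continuousOn_id.add continuousOn_const)) ?_
      intro z hz
      exact mul_ne_zero (hκ0 z hz) (hz1 z hz)
  have hHeq : ∀ z : ℂ, 0 ≤ z.re → z ≠ 1 →
      H z = ((z - 1) / (z + 1)) ^ d • ∑ i ∈ S, ((F z + 1) / (F z - 1)) ^ m i • v i := by
    intro z hz h1
    have g1 : F z - 1 ≠ 0 := sub_ne_zero.mpr (cpow_ne_one hb1 hb2 hz h1)
    have g2 := hz1 z hz
    have g3 : z - 1 ≠ 0 := sub_ne_zero.mpr h1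
    simp only [hH]
    rw [Finset.smul_sum]
    refine Finset.sum_congr rfl fun i hi => ?_
    rw [smul_smul, hκne1 z h1]
    congr 1
    have : (F z - 1) ^ d = (F z - 1) ^ (m i) * (F z - 1) ^ (d - m i) := by
      rw [← pow_add, Nat.add_sub_cancel' (hm i hi)]
    have e : ((F z - 1) / (z - 1) * (z + 1))⁻¹ = (z - 1) / (z + 1) / (F z - 1) := by
      field_simp
    rw [e, div_pow ((z - 1) / (z + 1)), this, div_pow (F z + 1)]
    field_simp
  have hBig : ∀ z : ℂ, 0 ≤ z.re → 2 ≤ ‖z‖ → ‖H z‖ ≤ ∑ i ∈ S, 3 ^ m i * ‖v i‖ := by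
    intro z hz h2
    have h1 : z ≠ 1 := by rintro rfl; norm_num at h2
    rw [hHeq z hz h1, norm_smul, norm_pow]
    have hle : ‖(z - 1) / (z + 1)‖ ≤ 1 := by
      rw [norm_div, div_le_one (norm_pos_iff.mpr (hz1 z hz))]
      apply le_of_sq_le_sq _ (norm_nonneg _)
      rw [Complex.sq_norm, Complex.sq_norm, Complex.normSq_apply, Complex.normSq_apply]
      simp
      nlinarith
    have hFn : 2 ≤ ‖F z‖ := by
      simp only [hF]
      rw [Complex.norm_cpow_real]
      calc (2:ℝ) ≤ ‖z‖ := h2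
        _ = ‖z‖ ^ (1:ℝ) := (Real.rpow_one _).symm
        _ ≤ _ := Real.rpow_le_rpow_of_exponent_le (by linarith) hb1
    have hw : ‖(F z + 1) / (F z - 1)‖ ≤ 3 := by
      have a1 : ‖F z + 1‖ ≤ ‖F z‖ + 1 := (norm_add_le _ _).trans (by simp)
      have a2 : ‖F z‖ - 1 ≤ ‖F z - 1‖ := by simpa using norm_sub_norm_le (F z) 1
      rw [norm_div, div_le_iff₀ (by linarith)]
      linarith
    calc _ ≤ 1 * ‖∑ i ∈ S, ((F z + 1) / (F z - 1)) ^ m i • v i‖ := by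
          gcongr; exact pow_le_one₀ (norm_nonneg _) hle
      _ ≤ _ := by
          rw [one_mul]
          refine norm_sum_le_of_le _ fun i _ => ?_
          rw [norm_smul, norm_pow]
          gcongr
  have him : ∀ x : ℝ, ‖H (x * Complex.I)‖ ≤ C := by
    intro x
    have hz : 0 ≤ ((x:ℂ) * Complex.I).re := by simp
    have h1 : (x:ℂ) * Complex.I ≠ 1 := by
      intro h
      have := congrArg Complex.re h
      simp at this
    rw [hHeq _ hz h1, norm_smul, norm_pow]
    have hle : ‖((x:ℂ) * Complex.I - 1) / (x * Complex.I + 1)‖ = 1 := by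
      rw [norm_div, div_eq_one_iff_eq (norm_ne_zero_iff.mpr (hz1 _ hz))]
      rw [← sq_eq_sq₀ (norm_nonneg _) (norm_nonneg _)]
      rw [Complex.sq_norm, Complex.sq_norm, Complex.normSq_apply, Complex.normSq_apply]
      simp
    rw [hle, one_pow, one_mul]
    apply hbd
    simp only [hF]
    rw [Complex.cpow_ofReal_re, Complex.norm_cpow_real, mul_comm]
    rcases lt_trichotomy x 0 with hx | hx | hx
    · have : ((x:ℂ) * Complex.I).arg = -(Real.pi / 2) := by
        have := Complex.arg_real_mul (-Complex.I) (neg_pos.mpr hx)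
        rw [Complex.arg_neg_I] at this
        rw [← this]; congr 1; push_cast; ring
      rw [this, neg_mul, Real.cos_neg]
    · subst hx
      simp [Real.zero_rpow hb0.ne']
    · rw [Complex.arg_real_mul _ hx, Complex.arg_I]
  have key : ‖H (s:ℂ)‖ ≤ C := by
    refine PhragmenLindelof.right_half_plane_of_bounded_on_real hHd ?_ ?_ him (by simp; linarith)
    · refine ⟨1, by norm_num, 0, ?_⟩
      refine IsBigO.of_bound (∑ i ∈ S, 3 ^ m i * ‖v i‖) ?_
      rw [Filter.eventually_inf_principal]
      have := (tendsto_norm_cobounded_atTop (E := ℂ)).eventually (eventually_ge_atTop 2)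
      filter_upwards [this] with z hz hz'
      simpa using hBig z (le_of_lt hz') hz
    · refine ⟨∑ i ∈ S, 3 ^ m i * ‖v i‖, ?_⟩
      rw [Filter.eventually_map]
      filter_upwards [eventually_ge_atTop (2:ℝ)] with x hx
      exact hBig _ (by simp; linarith) (by rw [Complex.norm_real]; exact hx.trans (le_abs_self _))
  have hs1 : (s:ℂ) ≠ 1 := by exact_mod_cast hs.ne'
  rw [hHeq _ (by simp; linarith) hs1, norm_smul, norm_pow] at key
  have e : ‖((s:ℂ) - 1) / (s + 1)‖ = (s - 1) / (s + 1) := by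
    rw [show ((s:ℂ) - 1) / (s + 1) = (((s - 1) / (s + 1) : ℝ) : ℂ) by push_cast; ring,
      Complex.norm_real, Real.norm_of_nonneg (div_nonneg (by linarith) (by linarith))]
  rw [e] at key
  have hpos : 0 < (s - 1) / (s + 1) := div_pos (by linarith) (by linarith)
  rw [← inv_div (s - 1) (s + 1), inv_pow, inv_mul_eq_div, le_div_iff₀ (by positivity), mul_comm]
  exact key

lemma lpNorm_toLp {n : ℕ} {p : ℝ} (hp : 1 < p) (g : (Fin n → Bool) → ℂ) :
    lpNorm p g = ((2 ^ n : ℝ)⁻¹) ^ (1 / p) * ‖WithLp.toLp (ENNReal.ofReal p) g‖ := by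
  have hp0 : 0 < p := by linarith
  rw [PiLp.norm_eq_sum (by rw [ENNReal.toReal_ofReal hp0.le]; exact hp0), ENNReal.toReal_ofReal hp0.le]
  unfold lpNorm
  rw [Real.mul_rpow (by positivity) (by positivity)]

lemma cos_half {p : ℝ} (hp : 1 < p) :
    Real.cos (Real.arcsin (2 * Real.sqrt (p - 1) / p)) = |1 - 2 / p| := by
  have hp0 : 0 < p := by linarith
  rw [Real.cos_arcsin, ← Real.sqrt_sq_eq_abs]
  congr 1
  rw [div_pow, mul_pow, Real.sq_sqrt (by linarith)]
  field_simp
  ring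

theorem main11 (p q : ℝ) (hq : 1 < q) (hqp : q < p) (θ : ℝ)
    (hθ : θ = 2 * Real.arcsin (2 * Real.sqrt (p - 1) / p))
    (n d : ℕ) (f : (Fin n → Bool) → ℂ) (hf : degLE f d) :
    lpNorm p f ≤
      (((Real.sqrt (p - 1) + Real.sqrt (q - 1)) ^ (Real.pi / (2 * Real.pi - θ)) +
          (Real.sqrt (p - 1) - Real.sqrt (q - 1)) ^ (Real.pi / (2 * Real.pi - θ))) /
        ((Real.sqrt (p - 1) + Real.sqrt (q - 1)) ^ (Real.pi / (2 * Real.pi - θ)) -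
          (Real.sqrt (p - 1) - Real.sqrt (q - 1)) ^ (Real.pi / (2 * Real.pi - θ)))) ^ d *
        lpNorm q f := by
  have hp : 1 < p := by linarith
  have hp0 : 0 < p := by linarith
  have hpi := Real.pi_pos
  set φ := Real.arcsin (2 * Real.sqrt (p - 1) / p) with hφ
  have hsp : 0 < Real.sqrt (p - 1) := Real.sqrt_pos.mpr (by linarith)
  have hsq : 0 < Real.sqrt (q - 1) := Real.sqrt_pos.mpr (by linarith)
  have hspq : Real.sqrt (q - 1) < Real.sqrt (p - 1) := Real.sqrt_lt_sqrt (by linarith) (by linarith)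
  have hφ0 : 0 < φ := Real.arcsin_pos.mpr (by positivity)
  have hφ1 : φ ≤ Real.pi / 2 := Real.arcsin_le_pi_div_two _
  set a := Real.pi / (2 * Real.pi - θ) with ha
  set b := (2 * Real.pi - θ) / Real.pi with hb
  have hden : 0 < 2 * Real.pi - θ := by rw [hθ]; linarith
  have ha0 : 0 < a := div_pos hpi hden
  have hab : a * b = 1 := by rw [ha, hb, div_mul_div_comm, mul_comm, div_self (by positivity)]
  have hb1 : 1 ≤ b := by rw [hb, le_div_iff₀ hpi, hθ]; linarith
  have hb2 : b < 2 := by rw [hb, div_lt_iff₀ hpi, hθ]; linarith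
  have hcos : Real.cos (Real.pi / 2 * b) = -|1 - 2 / p| := by
    rw [← cos_half hp, ← hφ, ← Real.cos_pi_sub]
    congr 1
    rw [hb, hθ]; field_simp
  set α := Real.sqrt (p - 1) with hα
  set β := Real.sqrt (q - 1) with hβ
  set r := β / α with hr
  have hr0 : 0 < r := div_pos hsq hsp
  have hr2 : r ^ 2 * (p - 1) = q - 1 := by
    rw [hr, div_pow, hα, hβ, Real.sq_sqrt (by linarith), Real.sq_sqrt (by linarith)]
    have : p - 1 ≠ 0 := by linarith
    field_simp
  set X := (α + β) ^ a with hX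
  set Y := (α - β) ^ a with hY
  have hY0 : 0 < Y := Real.rpow_pos_of_pos (by linarith) _
  have hXY : Y < X := Real.rpow_lt_rpow (by linarith) (by linarith) ha0
  set s := X / Y with hs
  have hs1 : 1 < s := by rw [hs, one_lt_div hY0]; exact hXY
  have hsb : s ^ b = (α + β) / (α - β) := by
    rw [hs, hX, hY, ← Real.div_rpow (by linarith) (by linarith), ← Real.rpow_mul
      (div_nonneg (by linarith) (by linarith)), hab, Real.rpow_one]
  have hconst : (s + 1) / (s - 1) = (X + Y) / (X - Y) := by
    have : X - Y ≠ 0 := by linarith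
    have : s - 1 ≠ 0 := by linarith
    rw [div_eq_div_iff (by assumption) (by assumption), hs]
    field_simp
  -- the vector space
  have : Fact (1 ≤ ENNReal.ofReal p) := ⟨by rw [ENNReal.one_le_ofReal]; exact hp.le⟩
  let P := ENNReal.ofReal p
  let S : Finset (Finset (Fin n)) := Finset.univ.filter fun A => A.card ≤ d
  let v : Finset (Fin n) → PiLp P (fun _ : Fin n → Bool => ℂ) := fun A =>
    WithLp.toLp P (fun ε => (r:ℂ) ^ A.card * (walsh A ε * coeff f A))
  have hT : ∀ w : ℂ, WithLp.toLp P (TT (w * r) f) = ∑ A ∈ S, w ^ A.card • v A := by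
    intro w
    have : ∀ ε, TT (w * r) f ε = ∑ A ∈ S, w ^ A.card * ((r:ℂ) ^ A.card * (walsh A ε * coeff f A)) := by
      intro ε
      rw [TT_expand]
      symm
      rw [← Finset.sum_subset (Finset.filter_subset (fun A : Finset (Fin n) => A.card ≤ d) Finset.univ)]
      · refine Finset.sum_congr rfl fun A _ => ?_
        rw [mul_pow]; ring
      · intro A _ hA
        have hA' : d < A.card := by simpa using hA
        rw [hf A hA']; simp
    ext ε
    simp [v, this]
  set c := ((2 ^ n : ℝ)⁻¹) ^ (1 / p) with hc
  have hc0 : 0 < c := Real.rpow_pos_of_pos (by positivity) _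
  have main := PL S (fun A => A.card) d (fun A hA => (Finset.mem_filter.mp hA).2) v hb1 hb2
    (c⁻¹ * lpNorm q f) (by
      intro ω hω
      rw [← hT, inv_mul_eq_div, le_div_iff₀ hc0, mul_comm, hc, ← lpNorm_toLp hp]
      have := boundary hq hqp.le hr0.le hr2 (ζ := -ω)
        (by rw [norm_neg, Complex.neg_re, hω, hcos]; ring) n f
      have e : (-ω - 1) / (-ω + 1) = (ω + 1) / (ω - 1) := by
        rw [← neg_div_neg_eq]; congr 1 <;> ring
      rw [e] at this
      exact this) hs1
  have hw : ((s:ℂ) ^ (b:ℂ) + 1) / ((s:ℂ) ^ (b:ℂ) - 1) * r = 1 := by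
    rw [← Complex.ofReal_cpow (by linarith), hsb, hr]
    have h1 : α - β ≠ 0 := by linarith
    have h3 : ((α + β) / (α - β) + 1) / ((α + β) / (α - β) - 1) * (β / α) = 1 := by
      have e1 : (α + β) / (α - β) + 1 = 2 * α / (α - β) := by field_simp; ring
      have e2 : (α + β) / (α - β) - 1 = 2 * β / (α - β) := by field_simp; ring
      rw [e1, e2]; field_simp
    exact_mod_cast h3
  rw [← hT, hw, TT_one, hconst] at main
  rw [lpNorm_toLp hp f]
  calc _ ≤ c * (((X + Y) / (X - Y)) ^ d * (c⁻¹ * lpNorm q f)) := by gcongr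
    _ = _ := by field_simp
end

/-- **Improved scalar moment comparison for low-degree Walsh polynomials.** -/
theorem stmt11 (p q : ℝ) (hq : 1 < q) (hqp : q < p) (θ : ℝ)
    (hθ : θ = 2 * Real.arcsin (2 * Real.sqrt (p - 1) / p))
    (n d : ℕ) (hd : 1 ≤ d) (hdn : d ≤ n)
    (f : (Fin n → Bool) → ℂ) (hf : degLE f d) :
    lpNorm p f ≤
      (((Real.sqrt (p - 1) + Real.sqrt (q - 1)) ^ (Real.pi / (2 * Real.pi - θ)) +
          (Real.sqrt (p - 1) - Real.sqrt (q - 1)) ^ (Real.pi / (2 * Real.pi - θ))) /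
        ((Real.sqrt (p - 1) + Real.sqrt (q - 1)) ^ (Real.pi / (2 * Real.pi - θ)) -
          (Real.sqrt (p - 1) - Real.sqrt (q - 1)) ^ (Real.pi / (2 * Real.pi - θ)))) ^ d *
        lpNorm q f := by
  exact main11 p q hq hqp θ hθ n d f hf

end HammingCube
end
end

section
/- For every n,d ∈ ℕ with 1 ≤ d ≤ n and every function f : {-1,1}^n → ℂ of degree at most d, ‖f‖_{L_2} ≤ (2.69076)^d · ‖f‖_{L_1}. -/
open scoped BigOperators ENNReal NNReal

noncomputable section

namespace HammingCube

variable {X : Type*} [NormedAddCommGroup X] [NormedSpace ℂ X]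

/-- Cube root of the modulus. -/
def cr (z : ℂ) : ℝ := ‖z‖ ^ ((1 : ℝ) / 3)

lemma cr_nonneg (z : ℂ) : 0 ≤ cr z := Real.rpow_nonneg (norm_nonneg _) _

lemma cr_pow (z : ℂ) : cr z ^ 3 = ‖z‖ := by
  unfold cr
  rw [← Real.rpow_natCast, ← Real.rpow_mul (norm_nonneg _)]
  norm_num

/-- The real two-point inequality in homogeneous form. -/
lemma real_two_point (U V : ℝ) (hU : 0 ≤ U) (hV : 0 ≤ V) :
    (U ^ 3 + V ^ 3) ^ 4 + 2 / 3 * (U ^ 3 + V ^ 3) ^ 2 * (U ^ 3 - V ^ 3) ^ 2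
      + 4 / 81 * (U ^ 3 - V ^ 3) ^ 4 ≤ 2 * (U ^ 4 + V ^ 4) ^ 3 := by
  have h : 0 ≤ (U - V) ^ 4 * (23 * U ^ 8 + 92 * U ^ 7 * V + 230 * U ^ 6 * V ^ 2
      + 152 * U ^ 5 * V ^ 3 + 59 * U ^ 4 * V ^ 4 + 152 * U ^ 3 * V ^ 5 + 230 * U ^ 2 * V ^ 6
      + 92 * U * V ^ 7 + 23 * V ^ 8) := by
    have h1 : 0 ≤ (U - V) ^ 4 := by positivity
    positivity
  linear_combination h / 81

/-- The quadratic form inequality on the ellipse. -/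
lemma quad_form (p q x y : ℝ) (h : 18 * p ^ 2 + 9 * q ^ 2 ≤ 2) :
    2 * (p ^ 2 + q ^ 2) * (x ^ 2 + y ^ 2) + 4 * (p * x - q * y) ^ 2
      ≤ 2 * (x ^ 2 + y ^ 2) - 4 / 3 * x ^ 2 := by
  have h1 : 0 ≤ (2 - (18 * p ^ 2 + 9 * q ^ 2)) * ((2 / 3) * x ^ 2 + 2 * y ^ 2) := by
    apply mul_nonneg
    · linarith
    · positivity
  nlinarith [sq_nonneg (q * x + 4 * p * y), sq_nonneg (q * y)]

/-- Two-point complex hypercontractivity from `L_{4/3}` to `L_4`. -/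
lemma two_point (w a b : ℂ) (hw : 18 * w.re ^ 2 + 9 * w.im ^ 2 ≤ 2) :
    (‖a + w * b‖ ^ 4 + ‖a - w * b‖ ^ 4) / 2 ≤ ((cr (a + b) ^ 4 + cr (a - b) ^ 4) / 2) ^ 3 := by
  have h1 := real_two_point (cr (a + b)) (cr (a - b)) (cr_nonneg _) (cr_nonneg _)
  rw [cr_pow, cr_pow] at h1
  have hX : ‖a + b‖ ^ 2 = (a.re + b.re) ^ 2 + (a.im + b.im) ^ 2 := by
    rw [Complex.sq_norm, Complex.normSq_apply]; simp; ring
  have hY : ‖a - b‖ ^ 2 = (a.re - b.re) ^ 2 + (a.im - b.im) ^ 2 := by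
    rw [Complex.sq_norm, Complex.normSq_apply]; simp; ring
  have hb : ‖b‖ ^ 2 = b.re ^ 2 + b.im ^ 2 := by
    rw [Complex.sq_norm, Complex.normSq_apply]; ring
  have hP : ‖a + w * b‖ ^ 2 = (a.re + (w.re * b.re - w.im * b.im)) ^ 2
      + (a.im + (w.re * b.im + w.im * b.re)) ^ 2 := by
    rw [Complex.sq_norm, Complex.normSq_apply]; simp; ring
  have hM : ‖a - w * b‖ ^ 2 = (a.re - (w.re * b.re - w.im * b.im)) ^ 2
      + (a.im - (w.re * b.im + w.im * b.re)) ^ 2 := by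
    rw [Complex.sq_norm, Complex.normSq_apply]; simp; ring
  have ht1 : ‖a + b‖ - ‖a - b‖ ≤ 2 * ‖b‖ := by
    have : a + b = (a - b) + 2 * b := by ring
    have h2 := norm_add_le (a - b) (2 * b)
    rw [← this] at h2
    simp at h2
    linarith
  have ht2 : ‖a - b‖ - ‖a + b‖ ≤ 2 * ‖b‖ := by
    have : a - b = (a + b) + -(2 * b) := by ring
    have h2 := norm_add_le (a + b) (-(2 * b))
    rw [← this] at h2
    simp at h2
    linarith
  set X := ‖a + b‖
  set Y := ‖a - b‖
  have hE : (X - Y) ^ 2 ≤ 4 * ‖b‖ ^ 2 := by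
    have h2 := sq_le_sq' (by linarith : -(2 * ‖b‖) ≤ X - Y) ht1
    linarith [h2, mul_pow 2 ‖b‖ 2]
  have hE4 : (X - Y) ^ 4 ≤ 16 * (b.re ^ 2 + b.im ^ 2) ^ 2 := by
    rw [hb] at hE
    have h2 := pow_le_pow_left₀ (sq_nonneg (X - Y)) hE 2
    calc (X - Y) ^ 4 = ((X - Y) ^ 2) ^ 2 := by ring
      _ ≤ _ := h2
      _ = _ := by ring
  have hq := quad_form w.re w.im (a.re * b.re + a.im * b.im) (a.re * b.im - a.im * b.re) hw
  have hw4 : (w.re ^ 2 + w.im ^ 2) ^ 2 ≤ 4 / 81 := by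
    have : w.re ^ 2 + w.im ^ 2 ≤ 2 / 9 := by nlinarith [sq_nonneg w.re]
    have h0 : 0 ≤ w.re ^ 2 + w.im ^ 2 := by positivity
    nlinarith
  have hw5 : (w.re ^ 2 + w.im ^ 2) ^ 2 * (b.re ^ 2 + b.im ^ 2) ^ 2
      ≤ 4 / 81 * (b.re ^ 2 + b.im ^ 2) ^ 2 := by gcongr
  have e1 : ‖a + w * b‖ ^ 4 = (‖a + w * b‖ ^ 2) ^ 2 := by ring
  have e2 : ‖a - w * b‖ ^ 4 = (‖a - w * b‖ ^ 2) ^ 2 := by ring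
  rw [e1, e2, hP, hM]
  have hD : (X + Y) ^ 4 + 2 / 3 * (X + Y) ^ 2 * (X - Y) ^ 2 + 4 / 81 * (X - Y) ^ 4
      = (2 * (X ^ 2 + Y ^ 2)) ^ 2 - 4 / 3 * (X ^ 2 - Y ^ 2) ^ 2 - 77 / 81 * (X - Y) ^ 4 := by
    ring
  rw [hD, hX, hY] at h1
  linear_combination h1 / 16 + 77 / 81 / 16 * hE4 + hq + hw5

/-- Minkowski in `L_3`. -/
lemma minkowski3 {ι : Type*} (s : Finset ι) (f g : ι → ℝ) (hf : ∀ i, 0 ≤ f i)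
    (hg : ∀ i, 0 ≤ g i) (N A B : ℝ) (hN : 0 ≤ N) (hA : 0 ≤ A) (hB : 0 ≤ B)
    (h1 : ∑ i ∈ s, f i ^ 3 ≤ N * A ^ 3) (h2 : ∑ i ∈ s, g i ^ 3 ≤ N * B ^ 3) :
    ∑ i ∈ s, (f i + g i) ^ 3 ≤ N * (A + B) ^ 3 := by
  have h := Real.Lp_add_le_of_nonneg (s := s) (f := f) (g := g) (p := 3) (by norm_num)
    (fun i _ => hf i) (fun i _ => hg i)
  have e : ∀ x : ℝ, x ^ (3 : ℝ) = x ^ 3 := fun x => by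
    rw [← Real.rpow_natCast]; norm_num
  simp only [e] at h
  have key : ∀ A : ℝ, 0 ≤ A → (N * A ^ 3) ^ (1 / (3 : ℝ)) = N ^ (1 / (3 : ℝ)) * A := by
    intro A hA
    rw [Real.mul_rpow hN (by positivity), ← Real.rpow_natCast, ← Real.rpow_mul hA]
    norm_num
  have i1 := Real.rpow_le_rpow (Finset.sum_nonneg fun i _ => pow_nonneg (hf i) 3) h1
    (by norm_num : (0 : ℝ) ≤ 1 / 3)
  have i2 := Real.rpow_le_rpow (Finset.sum_nonneg fun i _ => pow_nonneg (hg i) 3) h2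
    (by norm_num : (0 : ℝ) ≤ 1 / 3)
  rw [key A hA] at i1
  rw [key B hB] at i2
  have h3 : (∑ i ∈ s, (f i + g i) ^ 3) ^ (1 / (3 : ℝ)) ≤ (N * (A + B) ^ 3) ^ (1 / (3 : ℝ)) := by
    rw [key (A + B) (by positivity)]
    linarith
  exact (Real.rpow_le_rpow_iff
    (Finset.sum_nonneg fun i _ => pow_nonneg (add_nonneg (hf i) (hg i)) 3)
    (by positivity) (by norm_num)).1 h3

/-- The noise operator with complex parameter. -/
def Tw {n : ℕ} (w : ℂ) (f : (Fin n → Bool) → ℂ) (ε : Fin n → Bool) : ℂ :=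
  ∑ δ : Fin n → Bool, (∏ i, ((1 + w * (sgn (ε i) * sgn (δ i) : ℝ)) / 2)) * f δ

lemma sum_cons {n : ℕ} {M : Type*} [AddCommMonoid M] (F : (Fin (n + 1) → Bool) → M) :
    ∑ ε, F ε = ∑ ε : Fin n → Bool, (F (Fin.cons true ε) + F (Fin.cons false ε)) := by
  rw [← (Fin.consEquiv (fun _ => Bool)).sum_comp F, Fintype.sum_prod_type]
  simp [Fin.consEquiv, Finset.sum_add_distrib]

lemma Tw_cons {n : ℕ} (w : ℂ) (f : (Fin (n + 1) → Bool) → ℂ) (b : Bool) (ε : Fin n → Bool) :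
    Tw w f (Fin.cons b ε) =
      (1 + w * (sgn b : ℝ)) / 2 * Tw w (fun δ => f (Fin.cons true δ)) ε
      + (1 - w * (sgn b : ℝ)) / 2 * Tw w (fun δ => f (Fin.cons false δ)) ε := by
  unfold Tw
  rw [sum_cons, Finset.mul_sum, Finset.mul_sum, ← Finset.sum_add_distrib]
  refine Finset.sum_congr rfl fun δ _ => ?_
  simp only [Fin.prod_univ_succ, Fin.cons_zero, Fin.cons_succ]
  have h1 : sgn true = 1 := by simp [sgn]
  have h2 : sgn false = -1 := by simp [sgn]
  rw [h1, h2]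
  push_cast
  ring

lemma hyper_s12 {n : ℕ} (w : ℂ) (hw : 18 * w.re ^ 2 + 9 * w.im ^ 2 ≤ 2)
    (f : (Fin n → Bool) → ℂ) :
    ∑ ε, ‖Tw w f ε‖ ^ 4 ≤ 2 ^ n * ((∑ ε, cr (f ε) ^ 4) / 2 ^ n) ^ 3 := by
  induction n with
  | zero =>
    simp only [Tw, Finset.univ_unique, Finset.sum_singleton, Finset.univ_eq_empty,
      Finset.prod_empty, pow_zero, one_mul, div_one]
    rw [← cr_pow]
    apply le_of_eq; ring
  | succ n ih =>
    rw [sum_cons, sum_cons]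
    set f1 := fun δ : Fin n → Bool => f (Fin.cons true δ)
    set f2 := fun δ : Fin n → Bool => f (Fin.cons false δ)
    have h1 := ih f1
    have h2 := ih f2
    have e3 : ∀ z : ℂ, ‖z‖ ^ 4 = (cr z ^ 4) ^ 3 := fun z => by rw [← cr_pow z]; ring
    have hm := minkowski3 Finset.univ (fun ε => cr (Tw w f1 ε) ^ 4) (fun ε => cr (Tw w f2 ε) ^ 4)
      (fun ε => pow_nonneg (cr_nonneg _) 4) (fun ε => pow_nonneg (cr_nonneg _) 4)
      (2 ^ n) ((∑ ε, cr (f1 ε) ^ 4) / 2 ^ n) ((∑ ε, cr (f2 ε) ^ 4) / 2 ^ n) (by positivity)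
      (div_nonneg (Finset.sum_nonneg fun ε _ => pow_nonneg (cr_nonneg _) 4) (by positivity))
      (div_nonneg (Finset.sum_nonneg fun ε _ => pow_nonneg (cr_nonneg _) 4) (by positivity))
      (by simpa only [← e3] using h1) (by simpa only [← e3] using h2)
    have hp : ∀ ε : Fin n → Bool, ‖Tw w f (Fin.cons true ε)‖ ^ 4 + ‖Tw w f (Fin.cons false ε)‖ ^ 4
        ≤ 1 / 4 * (cr (Tw w f1 ε) ^ 4 + cr (Tw w f2 ε) ^ 4) ^ 3 := by
      intro ε
      have h := two_point w ((Tw w f1 ε + Tw w f2 ε) / 2) ((Tw w f1 ε - Tw w f2 ε) / 2) hw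
      have a1 : (Tw w f1 ε + Tw w f2 ε) / 2 + w * ((Tw w f1 ε - Tw w f2 ε) / 2)
          = Tw w f (Fin.cons true ε) := by
        rw [Tw_cons]; simp [sgn, f1, f2]; ring
      have a2 : (Tw w f1 ε + Tw w f2 ε) / 2 - w * ((Tw w f1 ε - Tw w f2 ε) / 2)
          = Tw w f (Fin.cons false ε) := by
        rw [Tw_cons]; simp [sgn, f1, f2]; ring
      have a3 : (Tw w f1 ε + Tw w f2 ε) / 2 + (Tw w f1 ε - Tw w f2 ε) / 2 = Tw w f1 ε := by ring
      have a4 : (Tw w f1 ε + Tw w f2 ε) / 2 - (Tw w f1 ε - Tw w f2 ε) / 2 = Tw w f2 ε := by ring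
      rw [a1, a2, a3, a4] at h
      linear_combination 2 * h
    refine (Finset.sum_le_sum fun ε _ => hp ε).trans ?_
    rw [← Finset.mul_sum, Finset.sum_add_distrib]
    refine (mul_le_mul_of_nonneg_left hm (by norm_num)).trans (le_of_eq ?_)
    simp only [f1, f2, pow_succ]
    field_simp
    ring

lemma Tw_one {n : ℕ} (f : (Fin n → Bool) → ℂ) : Tw 1 f = f := by
  funext ε
  unfold Tw
  rw [Finset.sum_eq_single ε]
  · rw [Finset.prod_eq_one, one_mul]
    intro i _
    cases h : ε i <;> simp [sgn]
  · intro δ _ hne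
    obtain ⟨i, hi⟩ := Function.ne_iff.1 hne
    rw [Finset.prod_eq_zero (Finset.mem_univ i), zero_mul]
    cases h : ε i <;> cases h' : δ i <;> simp_all [sgn]
  · simp

lemma Tw_eq {n : ℕ} (w : ℂ) (f : (Fin n → Bool) → ℂ) (ε : Fin n → Bool) :
    Tw w f ε = ∑ A : Finset (Fin n), w ^ A.card * ((walsh A ε : ℝ) * coeff f A) := by
  have hk : ∀ δ : Fin n → Bool, (∏ i, ((1 + w * (sgn (ε i) * sgn (δ i) : ℝ)) / 2))
      = ∑ A : Finset (Fin n), (2 ^ n : ℂ)⁻¹ * (w ^ A.card * ((walsh A ε : ℝ) * (walsh A δ : ℝ))) := by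
    intro δ
    rw [Finset.prod_div_distrib, Finset.prod_one_add, Finset.powerset_univ, ← Finset.mul_sum,
      Finset.prod_const, Finset.card_univ, Fintype.card_fin, div_eq_inv_mul]
    congr 1
    refine Finset.sum_congr rfl fun A _ => ?_
    rw [Finset.prod_mul_distrib, Finset.prod_const]
    congr 1
    unfold walsh
    push_cast
    rw [Finset.prod_mul_distrib]
  unfold Tw coeff
  simp only [hk, Finset.sum_mul]
  rw [Finset.sum_comm]
  refine Finset.sum_congr rfl fun A _ => ?_
  simp only [Complex.real_smul, Finset.mul_sum]
  refine Finset.sum_congr rfl fun δ _ => ?_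
  push_cast
  ring

lemma cs {ι : Type*} (s : Finset ι) (f g : ι → ℝ) :
    (∑ i ∈ s, f i * g i) ^ 2 ≤ (∑ i ∈ s, f i ^ 2) * ∑ i ∈ s, g i ^ 2 :=
  Finset.sum_mul_sq_le_sq_mul_sq s f g

lemma holder4 {ι : Type*} (s : Finset ι) (u v : ι → ℝ) :
    (∑ i ∈ s, u i * v i ^ 3) ^ 4 ≤ (∑ i ∈ s, u i ^ 4) * (∑ i ∈ s, v i ^ 4) ^ 3 := by
  have h1 := cs s (fun i => u i * v i) (fun i => v i ^ 2)
  have h2 := cs s (fun i => u i ^ 2) (fun i => v i ^ 2)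
  have a1 : ∀ i, u i * v i * v i ^ 2 = u i * v i ^ 3 := fun i => by ring
  have a2 : ∀ i, u i ^ 2 * v i ^ 2 = (u i * v i) ^ 2 := fun i => by ring
  have a3 : ∀ i, (u i ^ 2) ^ 2 = u i ^ 4 := fun i => by ring
  have a4 : ∀ i, (v i ^ 2) ^ 2 = v i ^ 4 := fun i => by ring
  simp only [a1, a2, a3, a4] at h1 h2
  have hv : 0 ≤ ∑ i ∈ s, v i ^ 4 := Finset.sum_nonneg fun i _ => by positivity
  calc (∑ i ∈ s, u i * v i ^ 3) ^ 4 = ((∑ i ∈ s, u i * v i ^ 3) ^ 2) ^ 2 := by ring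
    _ ≤ ((∑ i ∈ s, (u i * v i) ^ 2) * ∑ i ∈ s, v i ^ 4) ^ 2 := by gcongr
    _ = (∑ i ∈ s, (u i * v i) ^ 2) ^ 2 * (∑ i ∈ s, v i ^ 4) ^ 2 := by ring
    _ ≤ ((∑ i ∈ s, u i ^ 4) * ∑ i ∈ s, v i ^ 4) * (∑ i ∈ s, v i ^ 4) ^ 2 := by gcongr
    _ = _ := by ring

lemma logconv {ι : Type*} (s : Finset ι) (v t : ι → ℝ) (hv : ∀ i, 0 ≤ v i) (ht : ∀ i, 0 ≤ t i) :
    (∑ i ∈ s, v i * t i) ^ 3 ≤ (∑ i ∈ s, v i) ^ 2 * ∑ i ∈ s, v i * t i ^ 3 := by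
  have h1 := cs s (fun i => √(v i)) (fun i => √(v i) * t i)
  have h2 := cs s (fun i => √(v i) * √(t i)) (fun i => √(v i) * √(t i) * t i)
  have b1 : ∀ i, √(v i) * (√(v i) * t i) = v i * t i := fun i => by
    rw [← mul_assoc, Real.mul_self_sqrt (hv i)]
  have b2 : ∀ i, √(v i) ^ 2 = v i := fun i => Real.sq_sqrt (hv i)
  have b3 : ∀ i, √(t i) ^ 2 = t i := fun i => Real.sq_sqrt (ht i)
  have b4 : ∀ i, (√(v i) * √(t i)) * (√(v i) * √(t i) * t i) = v i * t i ^ 2 := fun i => by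
    linear_combination (√(t i)) ^ 2 * t i * b2 i + v i * t i * b3 i
  have b5 : ∀ i, v i * t i * t i ^ 2 = v i * t i ^ 3 := fun i => by ring
  simp only [b1, b4, mul_pow, b2, b3, b5] at h1 h2
  have p0 : 0 ≤ ∑ i ∈ s, v i := Finset.sum_nonneg fun i _ => hv i
  have p1 : 0 ≤ ∑ i ∈ s, v i * t i := Finset.sum_nonneg fun i _ => mul_nonneg (hv i) (ht i)
  have p2 : 0 ≤ ∑ i ∈ s, v i * t i ^ 2 :=
    Finset.sum_nonneg fun i _ => mul_nonneg (hv i) (pow_nonneg (ht i) _)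
  have p3 : 0 ≤ ∑ i ∈ s, v i * t i ^ 3 :=
    Finset.sum_nonneg fun i _ => mul_nonneg (hv i) (pow_nonneg (ht i) _)
  generalize (∑ i ∈ s, v i) = a0 at *
  generalize (∑ i ∈ s, v i * t i) = a1 at *
  generalize (∑ i ∈ s, v i * t i ^ 2) = a2 at *
  generalize (∑ i ∈ s, v i * t i ^ 3) = a3 at *
  rcases p1.eq_or_lt with h | h
  · rw [← h]; simp only [ne_eq, OfNat.ofNat_ne_zero, not_false_eq_true, zero_pow]; positivity
  · refine le_of_mul_le_mul_left ?_ h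
    calc a1 * a1 ^ 3 = (a1 ^ 2) ^ 2 := by ring
      _ ≤ (a0 * a2) ^ 2 := by gcongr
      _ = a0 ^ 2 * a2 ^ 2 := by ring
      _ ≤ a0 ^ 2 * (a1 * a3) := by gcongr
      _ = _ := by ring

/-- The ellipse is parametrized by the unit circle. -/
lemma ellipse (ζ : ℂ) (h : ‖ζ‖ = 1) :
    18 * ((123 / 320 - ζ ^ 2 / 15) / ζ).re ^ 2 + 9 * ((123 / 320 - ζ ^ 2 / 15) / ζ).im ^ 2 ≤ 2 := by
  have h0 : ζ ≠ 0 := by rintro rfl; simp at h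
  have hn : ζ.re ^ 2 + ζ.im ^ 2 = 1 := by
    have := Complex.sq_norm ζ
    rw [Complex.normSq_apply, h] at this
    linarith
  have hi : ζ⁻¹ = (starRingEnd ℂ) ζ := by
    rw [Complex.inv_def, Complex.normSq_eq_norm_sq, h]; simp
  have e : (123 / 320 - ζ ^ 2 / 15) / ζ = ((123 / 320 : ℝ) : ℂ) * (starRingEnd ℂ) ζ
      - ((1 / 15 : ℝ) : ℂ) * ζ := by
    rw [← hi]; push_cast; field_simp
  rw [e]
  simp only [Complex.sub_re, Complex.sub_im, Complex.re_ofReal_mul, Complex.im_ofReal_mul,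
    Complex.conj_re, Complex.conj_im]
  nlinarith [sq_nonneg ζ.re, sq_nonneg ζ.im]

lemma main_four {n d : ℕ} (f : (Fin n → Bool) → ℂ) (hf : degLE f d) :
    ∑ ε, ‖f ε‖ ^ 4 ≤ ((8 / 3 : ℝ) ^ d) ^ 4 * (2 ^ n * ((∑ ε, cr (f ε) ^ 4) / 2 ^ n) ^ 3) := by
  set M4 := ∑ ε, ‖f ε‖ ^ 4 with hM4
  set R := 2 ^ n * ((∑ ε, cr (f ε) ^ 4) / 2 ^ n) ^ 3 with hR
  have M4n : 0 ≤ M4 := Finset.sum_nonneg fun i _ => by positivity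
  have Rn : 0 ≤ R := by
    have : 0 ≤ ∑ ε, cr (f ε) ^ 4 := Finset.sum_nonneg fun i _ => by positivity
    positivity
  let g : (Fin n → Bool) → ℂ := fun ε => (starRingEnd ℂ) (f ε) * (‖f ε‖ ^ 2 : ℝ)
  have hg : ∀ ε, ‖g ε‖ = ‖f ε‖ ^ 3 := fun ε => by
    simp [g]; ring
  have hfg : ∑ ε, f ε * g ε = (M4 : ℂ) := by
    rw [hM4]; push_cast
    refine Finset.sum_congr rfl fun ε _ => ?_
    simp only [g]
    rw [← mul_assoc, Complex.mul_conj, Complex.normSq_eq_norm_sq]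
    push_cast; ring
  have hbd : ∀ w : ℂ, 18 * w.re ^ 2 + 9 * w.im ^ 2 ≤ 2 →
      ‖∑ ε, Tw w f ε * g ε‖ ^ 4 ≤ R * M4 ^ 3 := by
    intro w hw
    have h1 : ‖∑ ε, Tw w f ε * g ε‖ ≤ ∑ ε, ‖Tw w f ε‖ * ‖f ε‖ ^ 3 := by
      refine (norm_sum_le _ _).trans (le_of_eq ?_)
      simp [hg]
    calc _ ≤ (∑ ε, ‖Tw w f ε‖ * ‖f ε‖ ^ 3) ^ 4 := by gcongr
      _ ≤ (∑ ε, ‖Tw w f ε‖ ^ 4) * M4 ^ 3 := holder4 _ _ _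
      _ ≤ R * M4 ^ 3 := by gcongr; exact hyper_s12 w hw f
  let c : Finset (Fin n) → ℂ := fun A => ∑ ε, (walsh A ε : ℝ) * coeff f A * g ε
  let Q : ℂ → ℂ := fun ζ => ∑ A : Finset (Fin n),
    ζ ^ (d - A.card) * (123 / 320 - ζ ^ 2 / 15) ^ A.card * c A
  have hQ : ∀ ζ : ℂ, ζ ≠ 0 → Q ζ = ζ ^ d * ∑ ε, Tw ((123 / 320 - ζ ^ 2 / 15) / ζ) f ε * g ε := by
    intro ζ hζ
    simp only [Q, Tw_eq, Finset.sum_mul]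
    rw [Finset.sum_comm, Finset.mul_sum]
    refine Finset.sum_congr rfl fun A _ => ?_
    by_cases hA : d < A.card
    · simp [c, hf A hA]
    · have hd : d = (d - A.card) + A.card := by omega
      have : ζ ^ d = ζ ^ (d - A.card) * ζ ^ A.card := by rw [← pow_add, ← hd]
      simp only [c, Finset.mul_sum]
      refine Finset.sum_congr rfl fun ε _ => ?_
      have h9 : ζ ^ A.card * ((123 / 320 - ζ ^ 2 / 15) / ζ) ^ A.card
          = (123 / 320 - ζ ^ 2 / 15) ^ A.card := by
        rw [← mul_pow, mul_div_cancel₀ _ hζ]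
      rw [this, ← h9]
      ring
  have hdiff : Differentiable ℂ Q := by
    apply Differentiable.fun_sum
    intro A _
    fun_prop
  have hmax : ‖Q (3 / 8)‖ ≤ (R * M4 ^ 3) ^ (1 / (4 : ℝ)) := by
    refine Complex.norm_le_of_forall_mem_frontier_norm_le (U := Metric.ball 0 1)
      Metric.isBounded_ball hdiff.diffContOnCl ?_ ?_
    · intro z hz
      rw [frontier_ball _ one_ne_zero, mem_sphere_zero_iff_norm] at hz
      have hz0 : z ≠ 0 := by rintro rfl; simp at hz
      rw [hQ z hz0, norm_mul, norm_pow, hz, one_pow, one_mul]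

      have hb := hbd _ (ellipse z hz)
      calc _ = (‖∑ ε, Tw ((123 / 320 - z ^ 2 / 15) / z) f ε * g ε‖ ^ 4) ^ (1 / (4 : ℝ)) := by
            rw [← Real.rpow_natCast, ← Real.rpow_mul (norm_nonneg _)]; norm_num
        _ ≤ _ := by gcongr
    · apply subset_closure
      rw [mem_ball_zero_iff, norm_div, Complex.norm_ofNat, Complex.norm_ofNat]; norm_num
  have hQ1 : Q (3 / 8) = (3 / 8) ^ d * M4 := by
    rw [hQ _ (by norm_num)]
    have : ((123 / 320 - (3 / 8 : ℂ) ^ 2 / 15) / (3 / 8)) = 1 := by norm_num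
    rw [this, Tw_one, hfg]
  have h4 : ((3 / 8 : ℝ) ^ d * M4) ^ 4 ≤ R * M4 ^ 3 := by
    have h5 : ‖Q (3 / 8)‖ = (3 / 8 : ℝ) ^ d * M4 := by
      rw [hQ1, norm_mul, norm_pow, Complex.norm_real, Real.norm_of_nonneg M4n]
      norm_num
    rw [h5] at hmax
    calc _ ≤ ((R * M4 ^ 3) ^ (1 / (4 : ℝ))) ^ 4 := by gcongr
      _ = R * M4 ^ 3 := by
        rw [← Real.rpow_natCast, ← Real.rpow_mul (by positivity)]; norm_num
  rcases M4n.eq_or_lt with h | h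
  · rw [← h]; positivity
  · have h6 : ((3 / 8 : ℝ) ^ d) ^ 4 * M4 ≤ R := by
      refine le_of_mul_le_mul_right ?_ (by positivity : 0 < M4 ^ 3)
      calc _ = ((3 / 8 : ℝ) ^ d * M4) ^ 4 := by ring
        _ ≤ _ := h4
    have h7 : ((8 / 3 : ℝ) ^ d) ^ 4 * ((3 / 8 : ℝ) ^ d) ^ 4 = 1 := by
      rw [← mul_pow, ← mul_pow]; norm_num
    calc M4 = ((8 / 3 : ℝ) ^ d) ^ 4 * (((3 / 8 : ℝ) ^ d) ^ 4 * M4) := by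
          rw [← mul_assoc, h7, one_mul]
      _ ≤ _ := by gcongr

/-- **Improved `L₁`–`L₂` moment comparison for functions of low degree.** -/
theorem stmt12 (n d : ℕ) (hd : 1 ≤ d) (hdn : d ≤ n)
    (f : (Fin n → Bool) → ℂ) (hf : degLE f d) :
    lpNorm 2 f ≤ (2.69076 : ℝ) ^ d * lpNorm 1 f := by
  set m1 := (2 ^ n : ℝ)⁻¹ * ∑ ε, ‖f ε‖ with hm1
  set m2 := (2 ^ n : ℝ)⁻¹ * ∑ ε, ‖f ε‖ ^ 2 with hm2
  set S1 := ∑ ε, ‖f ε‖ with hS1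
  set S2 := ∑ ε, ‖f ε‖ ^ 2 with hS2
  have S1n : 0 ≤ S1 := Finset.sum_nonneg fun i _ => norm_nonneg _
  have S2n : 0 ≤ S2 := Finset.sum_nonneg fun i _ => by positivity
  have m1n : 0 ≤ m1 := by positivity
  have m2n : 0 ≤ m2 := by positivity
  have hA := main_four f hf
  have hB : S2 ^ 3 ≤ S1 ^ 2 * ∑ ε, ‖f ε‖ ^ 4 := by
    have := logconv Finset.univ (fun ε => ‖f ε‖) (fun ε => ‖f ε‖) (fun _ => norm_nonneg _)
      (fun _ => norm_nonneg _)
    simpa only [← pow_two, ← pow_succ'] using this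
  have hC : (∑ ε, cr (f ε) ^ 4) ^ 3 ≤ S1 ^ 2 * S2 := by
    have := logconv Finset.univ (fun ε => cr (f ε) ^ 3) (fun ε => cr (f ε))
      (fun _ => pow_nonneg (cr_nonneg _) _) (fun _ => cr_nonneg _)
    have e4 : ∀ z : ℂ, cr z ^ 3 * cr z = cr z ^ 4 := fun z => by ring
    simp only [e4] at this
    simpa only [← pow_two, cr_pow] using this
  have hD : m2 ^ 3 ≤ ((8 / 3 : ℝ) ^ d) ^ 4 * m1 ^ 4 * m2 := by
    have h1 : S2 ^ 3 ≤ S1 ^ 2 * (((8 / 3 : ℝ) ^ d) ^ 4 * (2 ^ n * (S1 ^ 2 * S2 / (2 ^ n) ^ 3))) := by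
      refine hB.trans ?_
      refine mul_le_mul_of_nonneg_left (hA.trans ?_) (by positivity)
      rw [div_pow (∑ ε, cr (f ε) ^ 4)]
      gcongr
    calc m2 ^ 3 = ((2 ^ n : ℝ)⁻¹) ^ 3 * S2 ^ 3 := by rw [hm2]; ring
      _ ≤ ((2 ^ n : ℝ)⁻¹) ^ 3 * (S1 ^ 2 * (((8 / 3 : ℝ) ^ d) ^ 4 *
            (2 ^ n * (S1 ^ 2 * S2 / (2 ^ n) ^ 3)))) := by gcongr
      _ = _ := by rw [hm1, hm2]; field_simp
  have hE : m2 ≤ ((8 / 3 : ℝ) ^ d * m1) ^ 2 := by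
    rcases m2n.eq_or_lt with h | h
    · rw [← h]; positivity
    · have h2 : m2 ^ 2 ≤ (((8 / 3 : ℝ) ^ d * m1) ^ 2) ^ 2 := by
        refine le_of_mul_le_mul_right ?_ h
        calc m2 ^ 2 * m2 = m2 ^ 3 := by ring
          _ ≤ _ := hD
          _ = _ := by ring
      exact (sq_le_sq₀ m2n (by positivity)).1 h2
  have l2 : lpNorm 2 f = √m2 := by
    unfold lpNorm
    rw [Real.sqrt_eq_rpow, hm2, hS2]
    simp
  have l1 : lpNorm 1 f = m1 := by
    unfold lpNorm
    rw [hm1, hS1]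
    simp
  rw [l2, l1]
  calc √m2 ≤ (8 / 3 : ℝ) ^ d * m1 := by
        rw [Real.sqrt_le_left (by positivity)]; exact hE
    _ ≤ _ := by gcongr; norm_num

end HammingCube
end
end

section
/- Let p ∈ [1,∞] and θ_p = 2 arcsin(2√(p−1)/p) (with θ_1 = θ_∞ = 0). Then for every n,d ∈ ℕ with 1 ≤ d ≤ n and every function f : {-1,1}^n → ℂ of degree at most d, ‖Δf‖_{L_p} ≤ 10 · d^{2 − θ_p/π} · ‖f‖_{L_p}. -/
open scoped BigOperators ENNReal NNReal

noncomputable section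

namespace HammingCube

variable {X : Type*} [NormedAddCommGroup X] [NormedSpace ℂ X]

theorem sinh_mono_ratio {x y : ℝ} (hx : 0 ≤ x) (hxy : x ≤ y) :
    y * Real.sinh x ≤ x * Real.sinh y := by
  have h1 := (Real.hasSum_sinh x).mul_left y
  have h2 := (Real.hasSum_sinh y).mul_left x
  refine hasSum_le (fun k => ?_) h1 h2
  have : x ^ (2*k) ≤ y ^ (2*k) := pow_le_pow_left₀ hx hxy _
  rw [← mul_div_assoc, ← mul_div_assoc]
  refine div_le_div_of_nonneg_right ?_ (by positivity)
  have hy : 0 ≤ y := hx.trans hxy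
  calc y * x ^ (2*k+1) = (x*y) * x^(2*k) := by ring
    _ ≤ (x*y) * y^(2*k) := by gcongr
    _ = _ := by ring

theorem cosh_ratio (u w : ℝ) (h : |u| ≤ |w|) :
    w ^ 2 * (Real.cosh u - 1) ≤ u ^ 2 * (Real.cosh w - 1) := by
  have key := sinh_mono_ratio (x := |u|/2) (y := |w|/2) (by positivity) (by linarith)
  have hs : 0 ≤ Real.sinh (|u|/2) := Real.sinh_nonneg_iff.2 (by positivity)
  have h1 : Real.cosh u = 1 + 2 * Real.sinh (|u|/2)^2 := by
    rw [← Real.cosh_abs u]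
    have := Real.cosh_two_mul (|u|/2)
    have h3 := Real.cosh_sq (|u|/2)
    rw [show 2 * (|u|/2) = |u| by ring] at this
    linarith
  have h2 : Real.cosh w = 1 + 2 * Real.sinh (|w|/2)^2 := by
    rw [← Real.cosh_abs w]
    have := Real.cosh_two_mul (|w|/2)
    have h3 := Real.cosh_sq (|w|/2)
    rw [show 2 * (|w|/2) = |w| by ring] at this
    linarith
  rw [h1, h2, ← sq_abs u, ← sq_abs w]
  have h4 := pow_le_pow_left₀ (by positivity) key 2
  nlinarith [h4]

theorem sinh_key (q v : ℝ) (hq : 0 < q) :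
    4 * q * Real.sinh ((q - 1) * v / 2) ^ 2 ≤
      (q - 1) ^ 2 * (Real.sinh v * Real.sinh (q * v)) := by
  rcases eq_or_ne v 0 with rfl | hv
  · simp
  have h := cosh_ratio ((q-1)*v) ((q+1)*v) (by
    rw [abs_mul, abs_mul]
    refine mul_le_mul_of_nonneg_right ?_ (abs_nonneg v)
    rw [abs_of_pos (by linarith : 0 < q+1), abs_le]; constructor <;> linarith)
  have e1 : Real.cosh ((q+1)*v) = Real.cosh (q*v) * Real.cosh v + Real.sinh (q*v) * Real.sinh v := by
    rw [add_mul, one_mul, Real.cosh_add]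
  have e2 : Real.cosh ((q-1)*v) = Real.cosh (q*v) * Real.cosh v - Real.sinh (q*v) * Real.sinh v := by
    rw [sub_mul, one_mul, Real.cosh_sub]
  have e3 : Real.cosh ((q-1)*v) = 1 + 2 * Real.sinh ((q-1)*v/2)^2 := by
    have := Real.cosh_two_mul ((q-1)*v/2)
    have h3 := Real.cosh_sq ((q-1)*v/2)
    rw [show 2 * ((q-1)*v/2) = (q-1)*v by ring] at this
    linarith
  have hv2 : 0 < v^2 := by positivity
  have h' : (q+1)^2 * (Real.cosh ((q-1)*v) - 1) ≤ (q-1)^2 * (Real.cosh ((q+1)*v) - 1) := by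
    have : v^2 * ((q+1)^2 * (Real.cosh ((q-1)*v) - 1)) ≤ v^2 * ((q-1)^2 * (Real.cosh ((q+1)*v) - 1)) := by
      linarith [h]
    exact le_of_mul_le_mul_left this hv2
  have e4 : Real.cosh ((q+1)*v) = Real.cosh ((q-1)*v) + 2 * (Real.sinh (q*v) * Real.sinh v) := by linarith
  rw [e4, e3] at h'
  nlinarith [h']

/-- the power version -/
theorem pow_key (p r t : ℝ) (hp : 1 < p) (hr : 0 < r) (ht : 0 < t) :
    4 * (p - 1) * (r * t * (r ^ (p-2) - t ^ (p-2))) ^ 2 + (p-2)^2 * (r * t * (r ^ (p-2) + t ^ (p-2)))^2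
      ≤ (p-2)^2 * (r ^ p + t ^ p) ^ 2 := by
  obtain ⟨a, rfl⟩ : ∃ a, r = Real.exp a := ⟨Real.log r, (Real.exp_log hr).symm⟩
  obtain ⟨b, rfl⟩ : ∃ b, t = Real.exp b := ⟨Real.log t, (Real.exp_log ht).symm⟩
  have h := sinh_key (p-1) (a-b) (by linarith)
  simp only [← Real.exp_mul]
  have hE : 0 < Real.exp (p*(a+b)/2) ^ 2 := by positivity
  set E := Real.exp (p*(a+b)/2) with hEdef
  have e1 : Real.exp a * Real.exp b * (Real.exp (a*(p-2)) - Real.exp (b*(p-2))) = E * (2 * Real.sinh ((p-1-1)*(a-b)/2)) := by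
    rw [Real.sinh_eq, hEdef]; ring_nf; simp only [← Real.exp_add]; ring_nf
  have e2 : (Real.exp (a*p) + Real.exp (b*p))^2 - (Real.exp a * Real.exp b * (Real.exp (a*(p-2)) + Real.exp (b*(p-2))))^2 = E^2 * (4 * (Real.sinh (a-b) * Real.sinh ((p-1)*(a-b)))) := by
    rw [Real.sinh_eq, Real.sinh_eq, hEdef]; ring_nf; simp only [← Real.exp_add, ← Real.exp_nat_mul]; ring_nf
  have h2 := mul_le_mul_of_nonneg_left h hE.le
  rw [e1]
  have : (p-2)^2 * ((Real.exp (a*p) + Real.exp (b*p))^2 - (Real.exp a * Real.exp b * (Real.exp (a*(p-2)) + Real.exp (b*(p-2))))^2) = (p-2)^2 * (E^2 * (4 * (Real.sinh (a-b) * Real.sinh ((p-1)*(a-b))))) := by rw [e2]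
  nlinarith [h2, this]

/-- duality map -/
noncomputable def dmap (p : ℝ) (x : ℂ) : ℂ := ((‖x‖ ^ (p-2) : ℝ) : ℂ) * x

theorem accr (p : ℝ) (hp : 1 < p) (x y : ℂ) :
    2 * √(p-1) * |((x - y) * (starRingEnd ℂ) (dmap p x - dmap p y)).im| ≤
      |p - 2| * ((x - y) * (starRingEnd ℂ) (dmap p x - dmap p y)).re := by
  have nsq : ∀ z : ℂ, z.re * z.re + z.im * z.im = ‖z‖ ^ 2 := fun z => by
    rw [← Complex.normSq_apply, Complex.normSq_eq_norm_sq]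
  have hpow : ∀ z : ℂ, ‖z‖ ^ (p-2) * ‖z‖ ^ 2 = ‖z‖ ^ p := fun z => by
    rcases eq_or_ne z 0 with rfl | hz
    · simp [Real.zero_rpow (by linarith : p ≠ 0)]
    · have : 0 < ‖z‖ := norm_pos_iff.2 hz
      rw [← Real.rpow_natCast, ← Real.rpow_add this]; norm_num
  set c := x.re * y.re + x.im * y.im with hc
  set e := x.im * y.re - x.re * y.im with he
  set R := ‖x‖ ^ (p-2) with hR
  set T := ‖y‖ ^ (p-2) with hT
  have hre : ((x - y) * (starRingEnd ℂ) (dmap p x - dmap p y)).re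
      = ‖x‖ ^ p + ‖y‖ ^ p - c * (R + T) := by
    rw [← hpow x, ← hpow y, ← nsq, ← nsq]
    simp [dmap]; ring
  have him : ((x - y) * (starRingEnd ℂ) (dmap p x - dmap p y)).im
      = e * (R - T) := by
    simp [dmap]; ring
  rw [hre, him]
  have hce : c ^ 2 + e ^ 2 = (‖x‖ * ‖y‖) ^ 2 := by
    rw [mul_pow, ← nsq, ← nsq]; ring
  by_cases h0 : x = 0 ∨ y = 0
  · have h1 : ‖x‖ * ‖y‖ = 0 := by rcases h0 with h | h <;> simp [h]
    rw [h1] at hce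
    have hc0 : c = 0 := by nlinarith [sq_nonneg c, sq_nonneg e]
    have he0 : e = 0 := by nlinarith [sq_nonneg c, sq_nonneg e]
    rw [hc0, he0]; simp; positivity
  push Not at h0
  have hx : 0 < ‖x‖ := norm_pos_iff.2 h0.1
  have hy : 0 < ‖y‖ := norm_pos_iff.2 h0.2
  have key := pow_key p ‖x‖ ‖y‖ hp hx hy
  rw [← hR, ← hT] at key
  set N := ‖x‖ ^ p + ‖y‖ ^ p with hN
  have hN0 : 0 ≤ N := by positivity
  suffices h : 2 * √(p-1) * |e * (R - T)| + |p-2| * (c * (R+T)) ≤ |p-2| * N by linarith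
  apply le_of_sq_le_sq _ (by positivity)
  have hs : √(p-1)^2 = p - 1 := Real.sq_sqrt (by linarith)
  calc (2 * √(p-1) * |e * (R - T)| + |p-2| * (c * (R+T)))^2 
      = (|e| * (2 * √(p-1) * |R - T|) + c * (|p-2| * (R+T)))^2 := by rw [abs_mul]; ring
    _ ≤ (|e|^2 + c^2) * ((2 * √(p-1) * |R - T|)^2 + (|p-2| * (R+T))^2) := by
        nlinarith [sq_nonneg (|e| * (|p-2| * (R+T)) - c * (2 * √(p-1) * |R - T|))]
    _ = (‖x‖ * ‖y‖) ^ 2 * (4 * (p-1) * (R-T)^2 + (p-2)^2 * (R+T)^2) := by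
        rw [← hce, sq_abs, mul_pow, mul_pow, mul_pow, sq_abs, sq_abs, hs]; ring
    _ ≤ (p-2)^2 * N^2 := by linarith [key]
    _ = _ := by rw [mul_pow, sq_abs]


theorem accr_nonneg (p : ℝ) (hp : 1 < p) (x y : ℂ) :
    0 ≤ ((x - y) * (starRingEnd ℂ) (dmap p x - dmap p y)).re := by
  rcases eq_or_ne p 2 with rfl | h2
  · have : ∀ x : ℂ, dmap 2 x = x := fun x => by simp [dmap]
    rw [this, this, Complex.mul_conj, Complex.ofReal_re]
    exact Complex.normSq_nonneg _
  · have h := accr p hp x y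
    have h1 : 0 < |p - 2| := abs_pos.2 (sub_ne_zero.2 h2)
    exact nonneg_of_mul_nonneg_right (le_trans (by positivity) h) h1

theorem sector_re (X Y φ α : ℝ)
    (hα : 0 < α) (hα2 : α ≤ Real.pi / 2) (hφ : |φ| ≤ α) (hX : 0 ≤ X)
    (h : Real.sin α * |Y| ≤ Real.cos α * X) :
    0 ≤ Real.cos φ * X - Real.sin φ * Y := by
  have hS0 : 0 < Real.sin α := Real.sin_pos_of_pos_of_lt_pi hα (by linarith [Real.pi_pos])
  have h1 : Real.sin φ * Y ≤ Real.sin |φ| * |Y| := by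
    have hs : |Real.sin φ| = Real.sin |φ| := by
      rw [Real.abs_sin_eq_sin_abs_of_abs_le_pi]; linarith
    rw [← hs, ← abs_mul]; exact le_abs_self _
  have h2 : 0 ≤ Real.sin |φ| := Real.sin_nonneg_of_nonneg_of_le_pi (abs_nonneg _) (by linarith)
  have h3 : 0 ≤ Real.sin (α - |φ|) :=
    Real.sin_nonneg_of_nonneg_of_le_pi (by linarith) (by linarith [abs_nonneg φ])
  rw [Real.sin_sub] at h3
  rw [← Real.cos_abs φ]
  have h4 : 0 ≤ Real.sin α * (Real.cos |φ| * X - Real.sin φ * Y) := by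
    have a1 := mul_le_mul_of_nonneg_left h1 hS0.le
    have a2 := mul_le_mul_of_nonneg_left h h2
    have a3 := mul_nonneg h3 hX
    nlinarith
  exact nonneg_of_mul_nonneg_right h4 hS0

theorem alpha_facts (p : ℝ) (hp : 1 < p) :
    0 < Real.arcsin (2 * √(p-1) / p) ∧
    Real.sin (Real.arcsin (2 * √(p-1) / p)) = 2 * √(p-1) / p ∧
    Real.cos (Real.arcsin (2 * √(p-1) / p)) = |p-2| / p := by
  have hs : √(p-1)^2 = p - 1 := Real.sq_sqrt (by linarith)
  have hs0 : 0 < √(p-1) := Real.sqrt_pos.2 (by linarith)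
  have hp0 : 0 < p := by linarith
  refine ⟨Real.arcsin_pos.2 (by positivity), Real.sin_arcsin ?_ ?_, ?_⟩
  · have : 0 < 2 * √(p-1) / p := by positivity
    linarith
  · rw [div_le_one hp0]; nlinarith [sq_nonneg (√(p-1) - 1)]
  · rw [Real.cos_arcsin, div_pow, mul_pow, hs,
      show 1 - 2^2 * (p-1)/p^2 = ((p-2)/p)^2 by field_simp; ring, Real.sqrt_sq_eq_abs,
      abs_div, abs_of_pos hp0]

theorem accr_sector (p : ℝ) (hp : 1 < p) (ρ φ : ℝ) (hρ : 0 ≤ ρ)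
    (hφ : |φ| ≤ Real.arcsin (2 * √(p-1) / p)) (x y : ℂ) :
    0 ≤ (((ρ : ℂ) * Complex.exp (φ * Complex.I)) *
      ((x - y) * (starRingEnd ℂ) (dmap p x - dmap p y))).re := by
  obtain ⟨h0, h1, h2⟩ := alpha_facts p hp
  have h := accr p hp x y
  have hX := accr_nonneg p hp x y
  set W := (x - y) * (starRingEnd ℂ) (dmap p x - dmap p y)
  have hp0 : 0 < p := by linarith
  have := sector_re W.re W.im φ _ h0 (Real.arcsin_le_pi_div_two _) hφ hX (by
    rw [h1, h2, div_mul_eq_mul_div, div_mul_eq_mul_div]; gcongr)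
  have e : ((ρ : ℂ) * Complex.exp (φ * Complex.I) * W).re
      = ρ * (Real.cos φ * W.re - Real.sin φ * W.im) := by
    rw [Complex.exp_mul_I, ← Complex.ofReal_cos, ← Complex.ofReal_sin]
    simp [-Complex.ofReal_cos, -Complex.ofReal_sin]; ring
  rw [e]; positivity

theorem norm_dmap (p : ℝ) (hp : 1 < p) (x : ℂ) : ‖dmap p x‖ = ‖x‖ ^ (p-1) := by
  rcases eq_or_ne x 0 with rfl | hz
  · simp [dmap, Real.zero_rpow (by linarith : p - 1 ≠ 0)]
  · have : 0 < ‖x‖ := norm_pos_iff.2 hz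
    rw [dmap, norm_mul, Complex.norm_real, Real.norm_of_nonneg (by positivity)]
    conv_lhs => rw [← Real.rpow_one ‖x‖, ← Real.rpow_mul (norm_nonneg _), one_mul, ← Real.rpow_add this]
    ring_nf

theorem mul_conj_dmap (p : ℝ) (hp : 1 < p) (x : ℂ) :
    (x * (starRingEnd ℂ) (dmap p x)).re = ‖x‖ ^ p := by
  rcases eq_or_ne x 0 with rfl | hz
  · simp [dmap, Real.zero_rpow (by linarith : p ≠ 0)]
  · have : 0 < ‖x‖ := norm_pos_iff.2 hz
    have e : x * (starRingEnd ℂ) (dmap p x) = ((‖x‖ ^ (p-2) * ‖x‖^2 : ℝ) : ℂ) := by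
      rw [dmap, map_mul, Complex.conj_ofReal, mul_left_comm, Complex.mul_conj,
        Complex.normSq_eq_norm_sq]; push_cast; rfl
    rw [e, Complex.ofReal_re, ← Real.rpow_natCast, ← Real.rpow_add this]; norm_num

theorem resolvent_contr {Ω : Type*} [Fintype Ω] (σ : Equiv.Perm Ω) (hσ : ∀ ε, σ (σ ε) = ε)
    (p : ℝ) (hp : 1 < p) (ρ φ : ℝ) (hρ : 0 ≤ ρ)
    (hφ : |φ| ≤ Real.arcsin (2 * √(p-1) / p)) (u g : Ω → ℂ)
    (hg : ∀ ε, g ε = u ε + (ρ : ℂ) * Complex.exp (φ * Complex.I) * ((u ε - u (σ ε)) / 2)) :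
    ∑ ε, ‖u ε‖ ^ p ≤ ∑ ε, ‖g ε‖ ^ p := by
  set lam := (ρ : ℂ) * Complex.exp (φ * Complex.I) with hlam
  set h : Ω → ℝ := fun ε => (lam * ((u ε - u (σ ε)) * (starRingEnd ℂ) (dmap p (u ε)))).re with hh
  have hsum : 0 ≤ ∑ ε, h ε := by
    have e1 : ∑ ε, h (σ ε) = ∑ ε, h ε := Equiv.sum_comp σ h
    have e2 : 0 ≤ ∑ ε, (h ε + h (σ ε)) := by
      refine Finset.sum_nonneg fun ε _ => ?_
      have := accr_sector p hp ρ φ hρ hφ (u ε) (u (σ ε))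
      rw [← hlam] at this
      have e3 : h ε + h (σ ε) = (lam * ((u ε - u (σ ε)) * (starRingEnd ℂ) (dmap p (u ε) - dmap p (u (σ ε))))).re := by
        simp only [hh, hσ, ← Complex.add_re]
        congr 1
        rw [map_sub]; ring
      rw [e3]; exact this
    rw [Finset.sum_add_distrib, e1] at e2
    linarith
  have hpq : p.HolderConjugate (Real.conjExponent p) := Real.HolderConjugate.conjExponent hp
  have hp0 : 0 < p := by linarith
  have pt : ∀ ε, ‖u ε‖ ^ p + h ε / 2 ≤ ‖g ε‖ ^ p / p + (1 - 1/p) * ‖u ε‖ ^ p := by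
    intro ε
    have e1 : ‖u ε‖ ^ p + h ε / 2 = (g ε * (starRingEnd ℂ) (dmap p (u ε))).re := by
      rw [← mul_conj_dmap p hp (u ε), hg]
      have : (u ε + lam * ((u ε - u (σ ε)) / 2)) * (starRingEnd ℂ) (dmap p (u ε))
        = u ε * (starRingEnd ℂ) (dmap p (u ε)) + (lam * ((u ε - u (σ ε)) * (starRingEnd ℂ) (dmap p (u ε)))) * ((1/2 : ℝ) : ℂ) := by
          push_cast; ring
      rw [this, Complex.add_re, Complex.re_mul_ofReal]
      ring
    rw [e1]
    have y := Real.young_inequality_of_nonneg (norm_nonneg (g ε)) (norm_nonneg (dmap p (u ε))) hpq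
    have e2 : ‖dmap p (u ε)‖ ^ (Real.conjExponent p) / Real.conjExponent p = (1 - 1/p) * ‖u ε‖ ^ p := by
      rw [norm_dmap p hp, ← Real.rpow_mul (norm_nonneg _), Real.conjExponent]
      have : p - 1 ≠ 0 := by linarith
      rw [mul_div_cancel₀ _ this]
      field_simp
    rw [e2] at y
    refine le_trans ?_ y
    refine (Complex.re_le_norm _).trans ?_
    rw [norm_mul, RCLike.norm_conj]
  have S := Finset.sum_le_sum (fun ε (_ : ε ∈ Finset.univ) => pt ε)
  rw [Finset.sum_add_distrib, Finset.sum_add_distrib, ← Finset.sum_div, ← Finset.sum_div, ← Finset.mul_sum] at S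
  set U := ∑ ε, ‖u ε‖ ^ p
  set V := ∑ ε, ‖g ε‖ ^ p
  have : U / p ≤ V / p := by
    have : U / p = 1/p * U := by ring
    nlinarith
  exact (div_le_div_iff_of_pos_right hp0).1 this

section PolyBound

open Complex Filter Asymptotics Bornology

/-- `K ζ = (ζ^s - 1)/(ζ - 1)`, with the singularity removed. -/
noncomputable def Kfun (s : ℝ) : ℂ → ℂ := dslope (fun ζ : ℂ => ζ ^ (s : ℂ)) 1

theorem slit_of_re {ζ : ℂ} (h : 0 ≤ ζ.re) (h0 : ζ ≠ 0) : ζ ∈ slitPlane := by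
  rw [mem_slitPlane_iff]
  by_contra hc
  push Not at hc
  exact h0 (Complex.ext (by simp; linarith [hc.1]) (by simp [hc.2]))

theorem halfplane_nhds : {z : ℂ | 0 < z.re} ∈ nhds (1 : ℂ) :=
  (isOpen_lt continuous_const continuous_re).mem_nhds (by simp)

theorem halfplane_nhds' : {z : ℂ | 0 ≤ z.re} ∈ nhds (1 : ℂ) :=
  mem_of_superset halfplane_nhds (fun z (h : 0 < z.re) => (le_of_lt h : 0 ≤ z.re))

theorem cpow_diff (s : ℝ) : DifferentiableOn ℂ (fun ζ : ℂ => ζ ^ (s : ℂ)) {z : ℂ | 0 < z.re} := by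
  intro ζ hζ
  have hζ' : 0 < ζ.re := hζ
  have : ζ ∈ slitPlane := slit_of_re hζ'.le (fun h => by simp [h] at hζ')
  exact (DifferentiableAt.cpow_const differentiableAt_id this).differentiableWithinAt

theorem cpow_cont (s : ℝ) (hs : 0 < s) :
    ContinuousOn (fun ζ : ℂ => ζ ^ (s : ℂ)) {z : ℂ | 0 ≤ z.re} := by
  intro ζ hζ
  exact (continuousAt_cpow_const_of_re_pos (Or.inl hζ) (by simpa using hs)).continuousWithinAt

theorem Kfun_diff (s : ℝ) : DifferentiableOn ℂ (Kfun s) {z : ℂ | 0 < z.re} :=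
  (Complex.differentiableOn_dslope halfplane_nhds).2 (cpow_diff s)

theorem Kfun_cont (s : ℝ) (hs : 0 < s) : ContinuousOn (Kfun s) {z : ℂ | 0 ≤ z.re} :=
  (continuousOn_dslope halfplane_nhds').2 ⟨cpow_cont s hs,
    (cpow_diff s).differentiableAt halfplane_nhds⟩

theorem Kfun_mul (s : ℝ) (ζ : ℂ) : (1 - ζ) * Kfun s ζ = 1 - ζ ^ (s : ℂ) := by
  have := sub_smul_dslope (fun ζ : ℂ => ζ ^ (s : ℂ)) 1 ζ
  simp only [smul_eq_mul, one_cpow] at this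
  rw [Kfun]
  linear_combination -this

theorem cpow_ne_one_s13 (s : ℝ) (hs1 : 1 ≤ s) (hs2 : s ≤ 2) (ζ : ℂ) (h : 0 ≤ ζ.re) (h1 : ζ ≠ 1) :
    ζ ^ (s : ℂ) ≠ 1 := by
  intro hc
  have h0 : ζ ≠ 0 := by
    rintro rfl
    rw [zero_cpow (by simp; linarith)] at hc
    exact zero_ne_one hc
  have harg : |ζ.arg| ≤ Real.pi / 2 := abs_arg_le_pi_div_two_iff.2 h
  rw [cpow_def_of_ne_zero h0] at hc
  obtain ⟨m, hm⟩ := Complex.exp_eq_one_iff.1 hc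
  have hre := congrArg Complex.re hm
  have him := congrArg Complex.im hm
  simp [log_re, log_im] at hre him
  have hm0 : m = 0 := by
    have hpi := Real.pi_pos
    have h3 : |ζ.arg * s| ≤ Real.pi := by
      rw [abs_mul, abs_of_pos (by linarith : 0 < s)]
      nlinarith [abs_nonneg ζ.arg]
    rw [him] at h3
    by_contra hm0
    have h4 : (1:ℝ) ≤ |(m:ℝ)| := by exact_mod_cast Int.one_le_abs hm0
    rw [abs_mul, abs_of_pos (by positivity : 0 < 2 * Real.pi)] at h3
    nlinarith
  have hs0 : s ≠ 0 := by linarith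
  rw [hm0] at him
  simp [hs0] at him
  apply h1
  have hlog : Complex.log ζ = 0 := by
    apply Complex.ext
    · rw [log_re]; simp; tauto
    · rw [log_im]; simpa using him
  rw [← exp_log h0, hlog, exp_zero]

theorem Kfun_ne (s : ℝ) (hs1 : 1 ≤ s) (hs2 : s ≤ 2) (ζ : ℂ) (h : 0 ≤ ζ.re) : Kfun s ζ ≠ 0 := by
  by_cases h1 : ζ = 1
  · rw [h1, Kfun, dslope_same]
    have : HasDerivAt (fun ζ : ℂ => ζ ^ (s : ℂ)) ((s:ℂ) * 1 ^ ((s:ℂ) - 1) * 1) 1 :=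
      (hasDerivAt_id (1:ℂ)).cpow_const (by simp)
    rw [this.deriv]; simp; linarith
  · intro hc
    have := Kfun_mul s ζ
    rw [hc, mul_zero] at this
    exact cpow_ne_one_s13 s hs1 hs2 ζ h h1 (by linear_combination this)

variable {E : Type*} [NormedAddCommGroup E] [NormedSpace ℂ E]

/-- vector-valued polynomial -/
noncomputable def vpoly (a : ℕ → E) (d : ℕ) (z : ℂ) : E := ∑ k ∈ Finset.range (d+1), z ^ k • a k

noncomputable def Gfun (s : ℝ) (a : ℕ → E) (d : ℕ) (ζ : ℂ) : E :=
  ∑ k ∈ Finset.range (d+1), ((1 - ζ) ^ (d - k) * ((1 + ζ) ^ d)⁻¹ * (Kfun s ζ ^ k)⁻¹) • a k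

theorem one_add_ne {ζ : ℂ} (h : 0 ≤ ζ.re) : 1 + ζ ≠ 0 := fun hc => by
  have := congrArg Complex.re hc
  simp at this; linarith

theorem Gfun_eq (s : ℝ) (hs1 : 1 ≤ s) (hs2 : s ≤ 2) (a : ℕ → E) (d : ℕ) (ζ : ℂ) (h : 0 ≤ ζ.re)
    (h1 : ζ ≠ 1) :
    Gfun s a d ζ = ((1 - ζ) / (1 + ζ)) ^ d • vpoly a d (1 - ζ ^ (s : ℂ))⁻¹ := by
  rw [Gfun, vpoly, Finset.smul_sum]
  refine Finset.sum_congr rfl fun k hk => ?_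
  rw [smul_smul]
  congr 1
  have hk' : k ≤ d := by simp at hk; omega
  have h2 : 1 - ζ ≠ 0 := sub_ne_zero.2 (Ne.symm h1)
  have h3 := one_add_ne h
  have h4 := Kfun_ne s hs1 hs2 ζ h
  rw [← Kfun_mul s ζ]
  rw [show (1 - ζ) ^ (d - k) = (1-ζ)^d * ((1-ζ)^k)⁻¹ by
    rw [pow_sub₀ _ h2 hk']]
  rw [div_pow, inv_pow, mul_pow, mul_inv]
  ring

theorem ratio_le {ζ : ℂ} (h : 0 ≤ ζ.re) : ‖(1 - ζ) / (1 + ζ)‖ ≤ 1 := by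
  rw [norm_div, div_le_one (norm_pos_iff.2 (one_add_ne h))]
  apply le_of_sq_le_sq _ (norm_nonneg _)
  rw [← normSq_eq_norm_sq, ← normSq_eq_norm_sq, normSq_apply, normSq_apply]
  simp; nlinarith

theorem Gfun_bdd (s : ℝ) (hs1 : 1 ≤ s) (hs2 : s ≤ 2) (a : ℕ → E) (d : ℕ) (ζ : ℂ) (h : 0 ≤ ζ.re)
    (h2 : 2 ≤ ‖ζ‖) : ‖Gfun s a d ζ‖ ≤ ∑ k ∈ Finset.range (d+1), ‖a k‖ := by
  have h1 : ζ ≠ 1 := by rintro rfl; norm_num at h2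
  have h0 : ζ ≠ 0 := by rintro rfl; norm_num at h2
  have hn : 1 ≤ ‖1 - ζ ^ (s:ℂ)‖ := by
    have e1 : ‖ζ ^ (s:ℂ)‖ = ‖ζ‖ ^ s := norm_cpow_real _ _
    have e2 : ‖ζ‖ ≤ ‖ζ‖ ^ s := Real.self_le_rpow_of_one_le (by linarith) hs1
    have e3 := norm_sub_norm_le (ζ ^ (s:ℂ)) 1
    rw [norm_sub_rev, e1, norm_one] at e3
    linarith
  rw [Gfun_eq s hs1 hs2 a d ζ h h1, norm_smul, norm_pow]
  calc _ ≤ 1 * ‖vpoly a d (1 - ζ ^ (s : ℂ))⁻¹‖ := by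
        gcongr; exact pow_le_one₀ (norm_nonneg _) (ratio_le h)
    _ ≤ ∑ k ∈ Finset.range (d+1), ‖a k‖ := by
        rw [one_mul, vpoly]
        refine (norm_sum_le _ _).trans (Finset.sum_le_sum fun k _ => ?_)
        rw [norm_smul, norm_pow, norm_inv]
        exact mul_le_of_le_one_left (norm_nonneg _)
          (pow_le_one₀ (by positivity) (inv_le_one_of_one_le₀ hn))

theorem Gfun_dcc (s : ℝ) (hs1 : 1 ≤ s) (hs2 : s ≤ 2) (a : ℕ → E) (d : ℕ) :
    DiffContOnCl ℂ (Gfun s a d) {z : ℂ | 0 < z.re} := by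
  have hK := Kfun_diff s
  have hKc := Kfun_cont s (by linarith)
  constructor
  · unfold Gfun
    refine DifferentiableOn.fun_sum fun k _ => ?_
    refine DifferentiableOn.smul_const ?_ _
    refine DifferentiableOn.mul (DifferentiableOn.mul (by fun_prop) ?_) ?_
    · exact DifferentiableOn.inv (by fun_prop) fun z hz => pow_ne_zero _ (one_add_ne (le_of_lt hz))
    · exact DifferentiableOn.inv (hK.pow k) fun z hz => pow_ne_zero _ (Kfun_ne s hs1 hs2 z (le_of_lt hz))
  · have : closure {z : ℂ | 0 < z.re} = {z : ℂ | 0 ≤ z.re} := closure_setOfPred_lt_re 0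
    rw [this]
    unfold Gfun
    refine continuousOn_finsetSum _ fun k _ => ?_
    refine ContinuousOn.smul ?_ continuousOn_const
    refine ContinuousOn.mul (ContinuousOn.mul (by fun_prop) ?_) ?_
    · exact ContinuousOn.inv₀ (by fun_prop) fun z hz => pow_ne_zero _ (one_add_ne hz)
    · exact ContinuousOn.inv₀ (hKc.pow k) fun z hz => pow_ne_zero _ (Kfun_ne s hs1 hs2 z hz)


theorem polar_cpow (s ρ ψ : ℝ) (hρ : 0 < ρ) (h1 : -Real.pi < ψ) (h2 : ψ ≤ Real.pi) :
    ((ρ : ℂ) * exp (ψ * I)) ^ (s : ℂ) = ((ρ ^ s : ℝ) : ℂ) * exp ((s * ψ : ℝ) * I) := by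
  have e : (ρ : ℂ) * exp (ψ * I) = exp ((Real.log ρ : ℂ) + ψ * I) := by
    rw [exp_add, ← ofReal_exp, Real.exp_log hρ]
  rw [e, cpow_def_of_ne_zero (exp_ne_zero _), log_exp (by simpa using h1) (by simpa using h2),
    Real.rpow_def_of_pos hρ, ofReal_exp, ← exp_add]
  congr 1; push_cast; ring

theorem neg_exp_sub (x : ℝ) : -exp (x * I) = exp ((x - Real.pi : ℝ) * I) := by
  push_cast
  rw [sub_mul, exp_sub, exp_pi_mul_I, div_neg, div_one]

theorem neg_exp_add (x : ℝ) : -exp (x * I) = exp ((x + Real.pi : ℝ) * I) := by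
  push_cast
  rw [add_mul, exp_add, exp_pi_mul_I, mul_neg, mul_one]

theorem I_cpow (s : ℝ) (hs1 : 1 ≤ s) (hs2 : s ≤ 2) (y : ℝ) :
    ∃ ρ φ : ℝ, 0 ≤ ρ ∧ |φ| ≤ Real.pi * (1 - s/2) ∧
      - ((y * I : ℂ) ^ (s : ℂ)) = (ρ : ℂ) * exp (φ * I) := by
  have hpi := Real.pi_pos
  rcases lt_trichotomy y 0 with hy | rfl | hy
  · refine ⟨(-y) ^ s, s * (-(Real.pi/2)) + Real.pi, Real.rpow_nonneg (by linarith) _, ?_, ?_⟩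
    · rw [abs_le]; constructor <;> nlinarith
    · have e : (y * I : ℂ) = ((-y : ℝ) : ℂ) * exp ((-(Real.pi/2) : ℝ) * I) := by
        push_cast
        rw [neg_mul (↑Real.pi / 2 : ℂ), exp_neg, exp_pi_div_two_mul_I]; simp
      rw [e, polar_cpow s (-y) _ (by linarith) (by linarith) (by linarith), ← neg_exp_add]
      ring
  · refine ⟨0, 0, le_rfl, ?_, ?_⟩
    · rw [abs_zero]; nlinarith
    · have : (s:ℂ) ≠ 0 := by simp; linarith
      simp [this]
  · refine ⟨y ^ s, s * (Real.pi/2) - Real.pi, Real.rpow_nonneg hy.le _, ?_, ?_⟩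
    · rw [abs_le]; constructor <;> nlinarith
    · have e : (y * I : ℂ) = (y : ℂ) * exp ((Real.pi/2 : ℝ) * I) := by
        push_cast
        rw [exp_pi_div_two_mul_I]
      rw [e, polar_cpow s y _ hy (by linarith) (by linarith), ← neg_exp_sub]
      ring

/-- bound assumption on the half-lens -/
def LensBound (s : ℝ) (a : ℕ → E) (d : ℕ) (M : ℝ) : Prop :=
  ∀ ρ φ : ℝ, 0 ≤ ρ → |φ| ≤ Real.pi * (1 - s/2) →
    ‖vpoly a d (1 + (ρ : ℂ) * exp (φ * I))⁻¹‖ ≤ M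

theorem Gfun_le (s : ℝ) (hs1 : 1 ≤ s) (hs2 : s ≤ 2) (a : ℕ → E) (d : ℕ) (M : ℝ)
    (h : LensBound s a d M) (ζ : ℂ) (hζ : 0 ≤ ζ.re) : ‖Gfun s a d ζ‖ ≤ M := by
  set C := ∑ k ∈ Finset.range (d+1), ‖a k‖
  refine PhragmenLindelof.right_half_plane_of_bounded_on_real (Gfun_dcc s hs1 hs2 a d) ?_ ?_ ?_ hζ
  · refine ⟨0, by norm_num, 0, ?_⟩
    refine IsBigO.of_bound C ?_
    rw [eventually_inf_principal]
    have : ∀ᶠ z : ℂ in cobounded ℂ, 2 ≤ ‖z‖ := tendsto_norm_cobounded_atTop.eventually_ge_atTop 2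
    filter_upwards [this] with z hz hz'
    simpa using Gfun_bdd s hs1 hs2 a d z (le_of_lt hz') hz
  · refine ⟨C, ?_⟩
    rw [eventually_map]
    filter_upwards [eventually_ge_atTop (2:ℝ)] with x hx
    refine Gfun_bdd s hs1 hs2 a d x (by simp; linarith) ?_
    rw [norm_real, Real.norm_of_nonneg (by linarith)]; exact hx
  · intro y
    have hre : 0 ≤ (y * I : ℂ).re := by simp
    rw [Gfun_eq s hs1 hs2 a d _ hre (fun hc => by simpa using congrArg Complex.re hc), norm_smul, norm_pow]
    obtain ⟨ρ, φ, h1, h2, h3⟩ := I_cpow s hs1 hs2 y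
    have h4 := h ρ φ h1 h2
    rw [← h3, ← sub_eq_add_neg] at h4
    calc _ ≤ 1 * ‖vpoly a d (1 - (y * I : ℂ) ^ (s : ℂ))⁻¹‖ := by
          gcongr; exact pow_le_one₀ (norm_nonneg _) (ratio_le hre)
      _ ≤ M := by rwa [one_mul]

theorem circle_bound (s : ℝ) (hs1 : 1 ≤ s) (hs2 : s ≤ 2) (a : ℕ → E) (d : ℕ) (M : ℝ)
    (h : LensBound s a d M) (ρ : ℝ) (hρ : 0 < ρ) (hρ1 : ρ < 1) (lam : ℂ) (hl : ‖lam‖ = ρ ^ s) :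
    ‖vpoly a d (1 + lam)⁻¹‖ ≤ ((1 + ρ) / (1 - ρ)) ^ d * M := by
  have hpi := Real.pi_pos
  have hM : 0 ≤ M := le_trans (norm_nonneg _) (h 0 0 le_rfl (by rw [abs_zero]; nlinarith))
  have h1ρ : 0 < 1 - ρ := by linarith
  have hr1 : 1 ≤ (1 + ρ) / (1 - ρ) := by rw [le_div_iff₀ h1ρ]; linarith
  have hlam : lam = ((ρ ^ s : ℝ) : ℂ) * exp (lam.arg * I) := by
    rw [← hl]; exact (norm_mul_exp_arg_mul_I lam).symm
  by_cases hφ : |lam.arg| ≤ Real.pi * (1 - s/2)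
  · have := h (ρ^s) lam.arg (by positivity) hφ
    rw [← hlam] at this
    exact this.trans (le_mul_of_one_le_left hM (one_le_pow₀ hr1))
  · push Not at hφ
    have hs0 : 0 < s := by linarith
    obtain ⟨ψ, hψ, hψ2⟩ : ∃ ψ : ℝ, |ψ| ≤ Real.pi/2 ∧
        -lam = ((ρ ^ s : ℝ) : ℂ) * exp ((s * ψ : ℝ) * I) := by
      have hA1 := neg_pi_lt_arg lam
      have hA2 := arg_le_pi lam
      rcases lt_abs.1 hφ with h5 | h5
      · refine ⟨(lam.arg - Real.pi)/s, ?_, ?_⟩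
        · rw [abs_le, div_le_iff₀ hs0, le_div_iff₀ hs0]; constructor <;> nlinarith
        · rw [mul_div_cancel₀ _ hs0.ne', ← neg_exp_sub]
          conv_lhs => rw [hlam]
          ring
      · refine ⟨(lam.arg + Real.pi)/s, ?_, ?_⟩
        · rw [abs_le, div_le_iff₀ hs0, le_div_iff₀ hs0]; constructor <;> nlinarith
        · rw [mul_div_cancel₀ _ hs0.ne', ← neg_exp_add]
          conv_lhs => rw [hlam]
          ring
    obtain ⟨hψa, hψb⟩ := abs_le.1 hψ
    set ζ : ℂ := (ρ : ℂ) * exp (ψ * I) with hζ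
    have hnorm : ‖ζ‖ = ρ := by
      rw [hζ, norm_mul, norm_exp_ofReal_mul_I, norm_real, Real.norm_of_nonneg hρ.le, mul_one]
    have hre : 0 ≤ ζ.re := by
      rw [hζ, re_ofReal_mul, exp_ofReal_mul_I_re]
      exact mul_nonneg hρ.le (Real.cos_nonneg_of_mem_Icc ⟨hψa, hψb⟩)
    have hpow : ζ ^ (s:ℂ) = -lam := by
      rw [hψ2, hζ, polar_cpow s ρ ψ hρ (by linarith) (by linarith)]
    have hne : ζ ≠ 1 := by
      intro hc; rw [hc] at hnorm; simp at hnorm; linarith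
    have hG := Gfun_le s hs1 hs2 a d M h ζ hre
    rw [Gfun_eq s hs1 hs2 a d ζ hre hne, hpow, sub_neg_eq_add, norm_smul, norm_pow] at hG
    have hlow : (1 - ρ) / (1 + ρ) ≤ ‖(1 - ζ) / (1 + ζ)‖ := by
      rw [norm_div]
      have a1 := norm_sub_norm_le 1 ζ
      have a2 := norm_add_le 1 ζ
      rw [norm_one, hnorm] at a1 a2
      have := norm_pos_iff.2 (one_add_ne hre)
      gcongr
    have hlow2 : 0 < (1 - ρ) / (1 + ρ) := by positivity
    have h6 : ((1 - ρ) / (1 + ρ)) ^ d * ‖vpoly a d (1 + lam)⁻¹‖ ≤ M :=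
      le_trans (by gcongr) hG
    have h7 : ((1 + ρ) / (1 - ρ)) = ((1 - ρ) / (1 + ρ))⁻¹ := by rw [inv_div]
    rw [h7, inv_pow, inv_mul_eq_div, le_div_iff₀ (by positivity)]
    linarith

theorem deriv_bound (s : ℝ) (hs1 : 1 ≤ s) (hs2 : s ≤ 2) (a : ℕ → E) (d : ℕ) (M : ℝ)
    (h : LensBound s a d M) (ρ : ℝ) (hρ : 0 < ρ) (hρ1 : ρ < 1) :
    ‖∑ k ∈ Finset.range (d+1), (k : ℂ) • a k‖ ≤ ((1 + ρ) / (1 - ρ)) ^ d * M / ρ ^ s := by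
  have hr : 0 < ρ ^ s := by positivity
  have hr1 : ρ ^ s < 1 := Real.rpow_lt_one hρ.le hρ1 (by linarith)
  have hne : ∀ z ∈ Metric.closedBall (0:ℂ) (ρ^s), 1 + z ≠ 0 := by
    intro z hz hc
    have : z = -1 := by linear_combination hc
    rw [this] at hz
    simp at hz; linarith
  have hderiv : HasDerivAt (fun lam : ℂ => vpoly a d (1 + lam)⁻¹)
      (-∑ k ∈ Finset.range (d+1), (k : ℂ) • a k) 0 := by
    rw [← Finset.sum_neg_distrib]
    unfold vpoly
    refine HasDerivAt.fun_sum fun k _ => ?_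
    have h1 : HasDerivAt (fun lam : ℂ => 1 + lam) 1 0 := (hasDerivAt_id (0:ℂ)).const_add 1
    have h2 := ((h1.fun_inv (by simp)).fun_pow k).smul_const (a k)
    convert h2 using 1
    simp
  have hd : DiffContOnCl ℂ (fun lam : ℂ => vpoly a d (1 + lam)⁻¹) (Metric.ball 0 (ρ^s)) := by
    apply DifferentiableOn.diffContOnCl_ball (U := Metric.closedBall 0 (ρ^s)) _ subset_rfl
    unfold vpoly
    refine DifferentiableOn.fun_sum fun k _ => ?_
    refine DifferentiableOn.smul_const ?_ _
    exact (DifferentiableOn.inv (by fun_prop) hne).pow k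
  have := Complex.norm_deriv_le_of_forall_mem_sphere_norm_le hr hd (fun z hz =>
    circle_bound s hs1 hs2 a d M h ρ hρ hρ1 z (by simpa using hz))
  rwa [hderiv.deriv, norm_neg] at this

theorem num_bound (d : ℕ) (hd : 2 ≤ d) (x : ℝ) (hx : x = 3 / (4 * d)) :
    ((1 + x) / (1 - x)) ^ d ≤ 45/8 := by
  rcases hd.eq_or_lt with rfl | hd
  · rw [hx]; norm_num
  have hd3 : (3:ℝ) ≤ d := by exact_mod_cast hd
  have hx0 : 0 < x := by rw [hx]; positivity
  have hx1 : x ≤ 1/4 := by rw [hx, div_le_div_iff₀ (by positivity) (by norm_num)]; linarith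
  have h1 : (1 + x) / (1 - x) ≤ Real.exp (2*x + x^2) := by
    rw [div_le_iff₀ (by linarith)]
    have a1 : 1 + x ≤ Real.exp x := by linarith [Real.add_one_le_exp x]
    have a2 : 1 ≤ Real.exp (x+x^2) * (1-x) := by
      have := Real.quadratic_le_exp_of_nonneg (x := x+x^2) (by positivity)
      have a3 : 1 ≤ (1 + (x+x^2) + (x+x^2)^2/2) * (1-x) := by
        have : 0 ≤ x^2 * ((1-x)*(1+x)^2 - 2*x) := by
          apply mul_nonneg (by positivity); nlinarith [mul_pos hx0 hx0]
        nlinarith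
      exact a3.trans (mul_le_mul_of_nonneg_right this (by linarith))
    calc 1 + x ≤ Real.exp x * 1 := by linarith
      _ ≤ Real.exp x * (Real.exp (x+x^2) * (1-x)) := by gcongr
      _ = _ := by rw [← mul_assoc, ← Real.exp_add]; ring_nf
  have hdx : (d:ℝ) * x = 3/4 := by rw [hx]; field_simp
  calc ((1 + x) / (1 - x)) ^ d ≤ (Real.exp (2*x + x^2)) ^ d := by
        gcongr; exact div_nonneg (by linarith) (by linarith)
    _ = Real.exp (d * (2*x+x^2)) := by rw [Real.exp_nat_mul]
    _ ≤ Real.exp (27/16) := by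
        gcongr
        have : (d:ℝ) * (2*x+x^2) = 2 * (d*x) + (d*x)*x := by ring
        rw [this, hdx]; linarith
    _ ≤ 45/8 := by
        apply le_of_pow_le_pow_left₀ (n := 16) (by norm_num) (by norm_num)
        rw [← Real.exp_nat_mul]
        have : ((16:ℕ):ℝ) * (27/16) = (27:ℕ) * 1 := by norm_num
        rw [this, Real.exp_nat_mul]
        calc Real.exp 1 ^ 27 ≤ 2.7182818286 ^ 27 := by
              gcongr; exact Real.exp_one_lt_d9.le
          _ ≤ _ := by norm_num

theorem poly_bound (s : ℝ) (hs1 : 1 ≤ s) (hs2 : s ≤ 2) (a : ℕ → E) (d : ℕ) (hd : 1 ≤ d) (M : ℝ)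
    (h : LensBound s a d M) :
    ‖∑ k ∈ Finset.range (d+1), (k : ℂ) • a k‖ ≤ 10 * (d:ℝ) ^ s * M := by
  have hpi := Real.pi_pos
  have h00 := h 0 0 le_rfl (by rw [abs_zero]; nlinarith)
  have hM : 0 ≤ M := le_trans (norm_nonneg _) h00
  rcases hd.eq_or_lt with rfl | hd
  · have h1 := h 1 0 zero_le_one (by rw [abs_zero]; nlinarith)
    simp [vpoly, Finset.sum_range_succ] at h1 h00 ⊢
    have e : a 1 = (2:ℂ) • ((a 0 + a 1) - (a 0 + (1+1 : ℂ)⁻¹ • a 1)) := by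
      norm_num; module
    rw [e, norm_smul]
    have := norm_sub_le (a 0 + a 1) (a 0 + (1+1 : ℂ)⁻¹ • a 1)
    simp only [Complex.norm_ofNat]
    linarith
  · have hd2 : (2:ℝ) ≤ d := by exact_mod_cast hd
    have hx1 : (3:ℝ) / (4*d) < 1 := by rw [div_lt_one (by positivity)]; linarith
    have b := deriv_bound s hs1 hs2 a d M h (3/(4*d)) (by positivity) hx1
    have b2 := num_bound d hd _ rfl
    refine b.trans ?_
    have e : ((3:ℝ)/(4*d)) ^ s = (3/4)^s / d ^ s := by
      rw [← Real.div_rpow (by norm_num) (by positivity)]; congr 1; field_simp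
    have e2 : (9/16 : ℝ) ≤ (3/4) ^ s := by
      calc (9/16 : ℝ) = (3/4) ^ (2:ℝ) := by norm_num
        _ ≤ _ := Real.rpow_le_rpow_of_exponent_ge (by norm_num) (by norm_num) hs2
    have hds : 0 < (d:ℝ)^s := by positivity
    rw [e, div_div_eq_mul_div, div_le_iff₀ (by positivity)]
    calc _ ≤ 45/8 * M * (d:ℝ)^s := by gcongr
      _ = 10 * (d:ℝ)^s * M * (9/16) := by ring
      _ ≤ _ := by gcongr

end PolyBound

section Cube

variable {n : ℕ}

/-- flipping the `i`-th coordinate -/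
def flipFun (i : Fin n) (ε : Fin n → Bool) : Fin n → Bool := Function.update ε i (!(ε i))

theorem flip_flip (i : Fin n) (ε : Fin n → Bool) : flipFun i (flipFun i ε) = ε := by
  simp [flipFun]

def flipE (i : Fin n) : Equiv.Perm (Fin n → Bool) :=
  ⟨flipFun i, flipFun i, flip_flip i, flip_flip i⟩

theorem sgn_not (b : Bool) : sgn (!b) = - sgn b := by cases b <;> simp [sgn]

theorem walsh_flip (i : Fin n) (A : Finset (Fin n)) (ε : Fin n → Bool) :
    walsh A (flipE i ε) = if i ∈ A then - walsh A ε else walsh A ε := by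
  have hne : ∀ j, j ≠ i → sgn (flipE i ε j) = sgn (ε j) := fun j hj => by
    simp [flipE, flipFun, Function.update_of_ne hj]
  split_ifs with h
  · rw [walsh, walsh, ← Finset.mul_prod_erase _ _ h, ← Finset.mul_prod_erase _ _ h,
      Finset.prod_congr rfl (fun j hj => hne j (Finset.ne_of_mem_erase hj))]
    simp [flipE, flipFun, sgn_not]
  · exact Finset.prod_congr rfl fun j hj => hne j (fun hc => h (hc ▸ hj))

theorem walsh_sum (ε δ : Fin n → Bool) :
    ∑ A : Finset (Fin n), walsh A ε * walsh A δ = if ε = δ then 2 ^ n else 0 := by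
  have h : ∑ A : Finset (Fin n), walsh A ε * walsh A δ = ∏ i : Fin n, (1 + sgn (ε i) * sgn (δ i)) := by
    rw [Finset.prod_one_add, Finset.powerset_univ]
    refine Finset.sum_congr rfl fun A _ => ?_
    rw [walsh, walsh, Finset.prod_mul_distrib]
  rw [h]
  split_ifs with he
  · subst he
    have : ∀ i : Fin n, 1 + sgn (ε i) * sgn (ε i) = 2 := fun i => by
      cases ε i <;> norm_num [sgn]
    simp [this]
  · obtain ⟨i, hi⟩ := Function.ne_iff.1 he
    refine Finset.prod_eq_zero (Finset.mem_univ i) ?_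
    revert hi
    cases ε i <;> cases δ i <;> norm_num [sgn]

theorem fourier_inv (f : (Fin n → Bool) → ℂ) (ε : Fin n → Bool) :
    ∑ A : Finset (Fin n), (walsh A ε : ℂ) * coeff f A = f ε := by
  have h : ∀ A : Finset (Fin n), (walsh A ε : ℂ) * coeff f A =
      ∑ δ, ((2:ℂ)^n)⁻¹ * (((walsh A ε * walsh A δ : ℝ) : ℂ) * f δ) := by
    intro A
    rw [coeff, Complex.real_smul, Finset.mul_sum, Finset.mul_sum]
    refine Finset.sum_congr rfl fun δ _ => ?_
    rw [Complex.real_smul]; push_cast; ring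
  simp_rw [h]
  rw [Finset.sum_comm]
  simp_rw [← Finset.mul_sum, ← Finset.sum_mul, ← Complex.ofReal_sum, walsh_sum]
  rw [Finset.sum_eq_single ε]
  · simp
  · intro δ _ hδ; simp [Ne.symm hδ]
  · simp

/-- the one-coordinate noise operator -/
def Tz (z : ℂ) (i : Fin n) (g : (Fin n → Bool) → ℂ) : (Fin n → Bool) → ℂ :=
  fun ε => (1 + z) / 2 * g ε + (1 - z) / 2 * g (flipE i ε)

def Wz (z : ℂ) (S : Finset (Fin n)) (f : (Fin n → Bool) → ℂ) : (Fin n → Bool) → ℂ :=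
  fun ε => ∑ A : Finset (Fin n), z ^ (A ∩ S).card * ((walsh A ε : ℂ) * coeff f A)

theorem Wz_insert (z : ℂ) (S : Finset (Fin n)) (i : Fin n) (hi : i ∉ S) (f : (Fin n → Bool) → ℂ) :
    Wz z (insert i S) f = Tz z i (Wz z S f) := by
  funext ε
  simp only [Wz, Tz]
  rw [Finset.mul_sum, Finset.mul_sum, ← Finset.sum_add_distrib]
  refine Finset.sum_congr rfl fun A _ => ?_
  rw [walsh_flip]
  by_cases hA : i ∈ A
  · rw [Finset.inter_insert_of_mem hA, Finset.card_insert_of_notMem (by simp [hi]), if_pos hA]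
    push_cast; ring
  · rw [Finset.inter_insert_of_notMem hA, if_neg hA]
    ring

theorem Wz_contr (p : ℝ≥0∞) [Fact (1 ≤ p)] (z : ℂ)
    (h : ∀ (i : Fin n) (g : (Fin n → Bool) → ℂ), ‖WithLp.toLp p (Tz z i g)‖ ≤ ‖WithLp.toLp p g‖)
    (f : (Fin n → Bool) → ℂ) : ‖WithLp.toLp p (Wz z Finset.univ f)‖ ≤ ‖WithLp.toLp p f‖ := by
  induction (Finset.univ : Finset (Fin n)) using Finset.induction_on with
  | empty =>
    have : Wz z ∅ f = f := by
      funext ε; simp [Wz, fourier_inv]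
    rw [this]
  | insert i S hi ih =>
    rw [Wz_insert z S i hi]
    exact (h i _).trans ih

theorem Tz_contr_real (p : ℝ≥0∞) [Fact (1 ≤ p)] (t : ℝ) (h0 : 0 ≤ t) (h1 : t ≤ 1) (i : Fin n)
    (g : (Fin n → Bool) → ℂ) : ‖WithLp.toLp p (Tz t i g)‖ ≤ ‖WithLp.toLp p g‖ := by
  have e : WithLp.toLp p (Tz t i g) = ((1 + t) / 2 : ℂ) • WithLp.toLp p g +
      ((1 - t) / 2 : ℂ) • (LinearIsometryEquiv.piLpCongrLeft p ℂ ℂ (flipE i).symm) (WithLp.toLp p g) := by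
    ext ε
    simp [Tz]
  rw [e]
  refine (norm_add_le _ _).trans ?_
  rw [norm_smul, norm_smul, LinearIsometryEquiv.norm_map]
  have e1 : ‖((1 + t) / 2 : ℂ)‖ = (1 + t)/2 := by
    rw [show ((1 + t) / 2 : ℂ) = (((1+t)/2 : ℝ) : ℂ) by push_cast; rfl, Complex.norm_real,
      Real.norm_of_nonneg (by linarith)]
  have e2 : ‖((1 - t) / 2 : ℂ)‖ = (1 - t)/2 := by
    rw [show ((1 - t) / 2 : ℂ) = (((1-t)/2 : ℝ) : ℂ) by push_cast; rfl, Complex.norm_real,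
      Real.norm_of_nonneg (by linarith)]
  rw [e1, e2]
  apply le_of_eq; ring

theorem Tz_contr_complex (p : ℝ≥0∞) [Fact (1 ≤ p)] (hp1 : 1 < p.toReal) (ρ φ : ℝ) (hρ : 0 ≤ ρ)
    (hφ : |φ| ≤ Real.arcsin (2 * √(p.toReal-1) / p.toReal)) (i : Fin n)
    (g : (Fin n → Bool) → ℂ) :
    ‖WithLp.toLp p (Tz (1 + (ρ:ℂ) * Complex.exp (φ * Complex.I))⁻¹ i g)‖ ≤ ‖WithLp.toLp p g‖ := by
  have hp0 : 0 < p.toReal := by linarith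
  set lam := (ρ:ℂ) * Complex.exp (φ * Complex.I) with hlam
  have hne : 1 + lam ≠ 0 := by
    apply one_add_ne
    rw [hlam, Complex.re_ofReal_mul, Complex.exp_ofReal_mul_I_re]
    have := abs_le.1 (hφ.trans (Real.arcsin_le_pi_div_two _))
    exact mul_nonneg hρ (Real.cos_nonneg_of_mem_Icc this)
  rw [PiLp.norm_eq_sum hp0, PiLp.norm_eq_sum hp0]
  apply Real.rpow_le_rpow (by positivity) _ (by positivity)
  refine resolvent_contr (flipE i) (flip_flip i) p.toReal hp1 ρ φ hρ hφ _ _ ?_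
  intro ε
  have hff : flipE i (flipE i ε) = ε := flip_flip i ε
  simp only [Tz, hff, ← hlam]
  field_simp
  ring

def slab (p : ℝ≥0∞) (f : (Fin n → Bool) → ℂ) (k : ℕ) : PiLp p (fun _ : Fin n → Bool => ℂ) :=
  WithLp.toLp p (fun ε => ∑ A : Finset (Fin n) with A.card = k, (walsh A ε : ℂ) * coeff f A)

theorem slab_sum (p : ℝ≥0∞) [Fact (1 ≤ p)] (d : ℕ) (f : (Fin n → Bool) → ℂ) (hf : degLE f d)
    (c : ℕ → ℂ) :
    ∑ k ∈ Finset.range (d+1), c k • slab p f k =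
      WithLp.toLp p (fun ε => ∑ A : Finset (Fin n), c A.card * ((walsh A ε : ℂ) * coeff f A)) := by
  ext ε
  simp only [WithLp.ofLp_sum, Finset.sum_apply, WithLp.ofLp_smul, Pi.smul_apply, slab, smul_eq_mul]
  have : ∀ k, c k * ∑ A : Finset (Fin n) with A.card = k, (walsh A ε : ℂ) * coeff f A =
      ∑ A : Finset (Fin n), if A.card = k then c A.card * ((walsh A ε : ℂ) * coeff f A) else 0 := by
    intro k
    rw [Finset.mul_sum, Finset.sum_filter]
    refine Finset.sum_congr rfl fun A _ => ?_
    split_ifs with h <;> simp [h]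
  simp_rw [this]
  rw [Finset.sum_comm]
  refine Finset.sum_congr rfl fun A _ => ?_
  rw [Finset.sum_ite_eq]
  split_ifs with h
  · rfl
  · rw [hf A (by simp at h; omega)]; simp

theorem lpNormE_eq (p : ℝ≥0∞) [Fact (1 ≤ p)] : ∃ c : ℝ, 0 ≤ c ∧ ∀ f : (Fin n → Bool) → ℂ,
    lpNormE p f = c * ‖WithLp.toLp p f‖ := by
  have hp : 1 ≤ p := Fact.out
  by_cases h : p = ⊤
  · subst h
    refine ⟨1, zero_le_one, fun f => ?_⟩
    rw [lpNormE, if_pos rfl, one_mul, PiLp.norm_eq_ciSup, linfNorm]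
  · have hp0 : 0 < p.toReal := ENNReal.toReal_pos (by rintro rfl; simp at hp) h
    refine ⟨((2 ^ n : ℝ)⁻¹) ^ (1 / p.toReal), by positivity, fun f => ?_⟩
    rw [lpNormE, if_neg h, PiLp.norm_eq_sum hp0, lpNorm, Real.mul_rpow (by positivity) (by positivity)]

end Cube

/-- **Scalar Bernstein–Markov inequality for the Laplacian**, with the explicit exponent
`2 - θ_p/π` where `θ_p = 2 arcsin(2√(p-1)/p)` (and `θ_1 = θ_∞ = 0`). -/
theorem stmt13 (p : ℝ≥0∞) (hp : 1 ≤ p) (θ : ℝ)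
    (hθ : θ = if p = ⊤ then 0
      else 2 * Real.arcsin (2 * Real.sqrt (p.toReal - 1) / p.toReal))
    (n d : ℕ) (hd : 1 ≤ d) (hdn : d ≤ n)
    (f : (Fin n → Bool) → ℂ) (hf : degLE f d) :
    lpNormE p (lap f) ≤ 10 * (d : ℝ) ^ (2 - θ / Real.pi) * lpNormE p f := by
  have : Fact (1 ≤ p) := ⟨hp⟩
  have hpi := Real.pi_pos
  obtain ⟨c, hc, hN⟩ := lpNormE_eq (n := n) p
  have hθ0 : 0 ≤ θ := by
    rw [hθ]
    split_ifs
    · exact le_rfl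
    · have : 0 ≤ Real.arcsin (2 * √(p.toReal - 1) / p.toReal) :=
        Real.arcsin_nonneg.2 (by positivity)
      linarith
  have hθ1 : θ ≤ Real.pi := by
    rw [hθ]
    split_ifs
    · exact hpi.le
    · linarith [Real.arcsin_le_pi_div_two (2 * √(p.toReal - 1) / p.toReal)]
  have hα : Real.pi * (1 - (2 - θ / Real.pi)/2) = θ / 2 := by field_simp; ring
  have hlap : WithLp.toLp p (lap f) = ∑ k ∈ Finset.range (d+1), (k : ℂ) • slab p f k := by
    rw [slab_sum p d f hf (fun k => (k:ℂ))]
    congr 1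
  rw [hN, hN, hlap]
  have key := poly_bound (2 - θ / Real.pi) (by
      have : θ / Real.pi ≤ 1 := (div_le_one hpi).2 hθ1
      linarith) (by
      have : 0 ≤ θ / Real.pi := by positivity
      linarith) (slab p f) d hd ‖WithLp.toLp p f‖ (by
    intro ρ φ hρ hφ
    rw [hα] at hφ
    rw [vpoly, slab_sum p d f hf]
    have e : ∀ z : ℂ, (fun ε => ∑ A : Finset (Fin n), z ^ A.card * ((walsh A ε : ℂ) * coeff f A))
        = Wz z Finset.univ f := fun z => by funext ε; simp [Wz]
    rw [e]
    apply Wz_contr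
    intro i g
    by_cases h1 : p ≠ ⊤ ∧ 1 < p.toReal
    · rw [hθ, if_neg h1.1] at hφ
      exact Tz_contr_complex p h1.2 ρ φ hρ (by linarith) i g
    · have hθz : θ = 0 := by
        rw [hθ]
        split_ifs with h2
        · rfl
        · have h3 : p.toReal - 1 ≤ 0 := by
            push Not at h1
            linarith [h1 h2]
          rw [Real.sqrt_eq_zero_of_nonpos h3]; simp
      have hφ0 : φ = 0 := by
        rw [hθz] at hφ
        exact abs_eq_zero.1 (le_antisymm (by linarith) (abs_nonneg _))
      have := Tz_contr_real p (1 + ρ)⁻¹ (by positivity) (inv_le_one_of_one_le₀ (by linarith)) i g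
      simpa [hφ0] using this)
  calc _ ≤ c * (10 * (d:ℝ) ^ (2 - θ / Real.pi) * ‖WithLp.toLp p f‖) := by gcongr
    _ = _ := by ring

end HammingCube
end
end
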